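/- Fix $r \in \mathbb{N}$ and $\varepsilon > 0$. If $k$ is sufficiently large in terms of $r$ and $\varepsilon$, then for every integer $\ell$ with $0 < \ell < \binom{k}{r}$, we have $\mathrm{ind}_r(k, \ell) \le 1/e + \varepsilon$. -/

import Mathlib

open Finset
open scoped Classical

/-- `Nmax r k ℓ n` is the maximum, over all `r`-uniform hypergraphs `G` on `n` vertices,
of the number of `k`-vertex subsets of `G` inducing exactly `ℓ` edges. -/
noncomputable def Nmax (r k ℓ n : ℕ) : ℕ :=
  sSup {c : ℕ | ∃ E : Finset (Finset (Fin n)), (∀ e ∈ E, e.card = r) ∧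
    c = (((Finset.univ : Finset (Fin n)).powersetCard k).filter
        (fun U => (E.filter (fun e => e ⊆ U)).card = ℓ)).card}

def cD {m : ℕ} (i : Fin m) (p : (Fin m → Bool) → ℤ) : (Fin m → Bool) → ℤ :=
  fun x => p (Function.update x i true) - p (Function.update x i false)

def cdg {m : ℕ} : ℕ → ((Fin m → Bool) → ℤ) → Prop
  | 0, p => ∀ x y, p x = p y
  | d+1, p => ∀ i, cdg d (cD i p)

def sg (y : ℤ) : ℤ := if 0 ≤ y then 1 else -1

lemma sg_or (y : ℤ) : sg y = 1 ∨ sg y = -1 := by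
  unfold sg; split_ifs <;> simp

lemma sg_sq (y : ℤ) : sg y * sg y = 1 := by
  rcases sg_or y with h | h <;> rw [h] <;> norm_num

def cJ {m : ℕ} (i : Fin m) (p : (Fin m → Bool) → ℤ) : ℤ :=
  ∑ x, (1 - sg (p (Function.update x i true)) * sg (p (Function.update x i false)))

lemma cube_sum {m : ℕ} (i : Fin m) (h : (Fin m → Bool) → ℤ) :
    2 * ∑ x, h x = ∑ x, (h (Function.update x i true) + h (Function.update x i false)) := by
  have hinv : Function.Involutive (fun x : Fin m → Bool => Function.update x i (!x i)) := by
    intro x; simp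
  have e : ∑ x, h x = ∑ x, h (Function.update x i (!x i)) :=
    (Equiv.sum_comp hinv.toPerm h).symm
  have : 2 * ∑ x, h x = ∑ x, (h x + h (Function.update x i (!x i))) := by
    rw [sum_add_distrib, ← e]; ring
  rw [this]
  refine sum_congr rfl fun x _ => ?_
  rcases hx : x i with _ | _
  · have : Function.update x i false = x := by rw [← hx]; simp
    rw [this]; simp; ring
  · have : Function.update x i true = x := by rw [← hx]; simp
    rw [this]; simp

def sx (b : Bool) : ℤ := if b then 1 else -1

lemma cJ_eq {m : ℕ} (i : Fin m) (p : (Fin m → Bool) → ℤ) :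
    cJ i p = 2 * ∑ x, sg (p x) * (sx (x i) * sg (cD i p x)) := by
  rw [cube_sum i, cJ]
  refine sum_congr rfl fun x _ => ?_
  simp only [cD, Function.update_idem, Function.update_self, sx]
  generalize p (Function.update x i true) = a
  generalize p (Function.update x i false) = b
  simp only [sg]
  split_ifs <;> first | omega | (norm_num; done) | simp_all

lemma cJ_nonneg {m : ℕ} (i : Fin m) (p : (Fin m → Bool) → ℤ) : 0 ≤ cJ i p := by
  refine sum_nonneg fun x _ => ?_
  rcases sg_or (p (Function.update x i true)) with h | h <;>
  rcases sg_or (p (Function.update x i false)) with h' | h' <;> rw [h, h'] <;> norm_num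

lemma cube_card (m : ℕ) : (Finset.univ : Finset (Fin m → Bool)).card = 2 ^ m := by simp

lemma cJ_cross {m : ℕ} (p : (Fin m → Bool) → ℤ) (i j : Fin m) (hij : i ≠ j) :
    2 * ∑ x, (sx (x i) * sg (cD i p x)) * (sx (x j) * sg (cD j p x)) ≤ cJ j (cD i p) := by
  rw [cube_sum j, cJ]
  refine sum_le_sum fun x _ => ?_
  have h1 : ∀ b, cD j p (Function.update x j b) = cD j p x := by
    intro b; simp [cD]
  simp only [h1, Function.update_self, Function.update_of_ne hij]
  rcases sg_or (cD i p (Function.update x j true)) with h | h <;>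
  rcases sg_or (cD i p (Function.update x j false)) with h' | h' <;>
  rcases sg_or (cD j p x) with h'' | h'' <;> rw [h, h', h''] <;>
  simp only [sx] <;> split_ifs <;> first | (norm_num; done) | simp_all

lemma cJ_step {m : ℕ} (p : (Fin m → Bool) → ℤ) :
    (∑ i, cJ i p) ^ 2 ≤ 2 * 2 ^ m * (2 * m * 2 ^ m + ∑ i, ∑ j, cJ j (cD i p)) := by
  set T : (Fin m → Bool) → ℤ := fun x => ∑ i, sx (x i) * sg (cD i p x) with hT
  have e1 : ∑ i, cJ i p = 2 * ∑ x, sg (p x) * T x := by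
    simp only [cJ_eq, ← mul_sum, hT]
    rw [sum_comm]
    simp only [mul_sum]
  have cs := Finset.sum_mul_sq_le_sq_mul_sq (univ : Finset (Fin m → Bool)) (fun x => sg (p x)) T
  have e2 : ∑ x, sg (p x) ^ 2 = 2 ^ m := by
    simp [pow_two, sg_sq]
  rw [e2] at cs
  have e3 : 2 * ∑ x, T x ^ 2 ≤ 2 * m * 2 ^ m + ∑ i, ∑ j, cJ j (cD i p) := by
    have : ∑ x, T x ^ 2 = ∑ i, ∑ j, ∑ x, (sx (x i) * sg (cD i p x)) * (sx (x j) * sg (cD j p x)) := by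
      simp only [hT, pow_two, sum_mul_sum]
      rw [sum_comm]
      refine sum_congr rfl fun i _ => ?_
      rw [sum_comm]
    rw [this]
    have key : ∀ i j : Fin m, 2 * ∑ x, (sx (x i) * sg (cD i p x)) * (sx (x j) * sg (cD j p x))
        ≤ (if i = j then 2 * 2 ^ m else 0) + cJ j (cD i p) := by
      intro i j
      by_cases hij : i = j
      · subst hij
        have : ∀ x, (sx (x i) * sg (cD i p x)) * (sx (x i) * sg (cD i p x)) = 1 := by
          intro x
          rcases sg_or (cD i p x) with h | h <;> rw [h] <;> simp only [sx] <;> split_ifs <;> norm_num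
        simp only [this]
        have := cJ_nonneg i (cD i p)
        simp [this]
      · simpa [hij] using cJ_cross p i j hij
    calc _ = ∑ i, ∑ j, 2 * ∑ x, (sx (x i) * sg (cD i p x)) * (sx (x j) * sg (cD j p x)) := by
          simp only [mul_sum]
      _ ≤ ∑ i, ∑ j, ((if i = j then 2 * 2 ^ m else 0) + cJ j (cD i p)) :=
          sum_le_sum fun i _ => sum_le_sum fun j _ => key i j
      _ = _ := by
          simp only [sum_add_distrib]
          simp
          ring
  rw [e1]
  have h2 : (0:ℤ) ≤ 2 ^ m := by positivity
  nlinarith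

lemma cJ_bound (d : ℕ) : ∀ η : ℝ, 0 < η → ∃ m0 : ℕ, ∀ m, m0 ≤ m → ∀ p : (Fin m → Bool) → ℤ,
    cdg d p → ((∑ i, cJ i p : ℤ) : ℝ) ≤ η * m * 2 ^ m := by
  induction d with
  | zero =>
    intro η hη
    refine ⟨0, fun m _ p hp => ?_⟩
    have : ∑ i, cJ i p = 0 := by
      refine sum_eq_zero fun i _ => ?_
      unfold cJ
      refine sum_eq_zero fun x _ => ?_
      rw [hp (Function.update x i true) (Function.update x i false), sg_sq]; norm_num
    rw [this]; push_cast; positivity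
  | succ d ih =>
    intro η hη
    obtain ⟨m1, hm1⟩ := ih (η ^ 2 / 4) (by positivity)
    obtain ⟨m2, hm2⟩ := exists_nat_gt (8 / η ^ 2)
    refine ⟨max m1 m2, fun m hm p hp => ?_⟩
    have hb := cJ_step p
    have hb' : ((∑ i, cJ i p : ℤ) : ℝ) ^ 2 ≤ 2 * 2 ^ m * (2 * m * 2 ^ m +
        ∑ i, ((∑ j, cJ j (cD i p) : ℤ) : ℝ)) := by exact_mod_cast hb
    have hs : ∑ i, ((∑ j, cJ j (cD i p) : ℤ) : ℝ) ≤ ∑ i : Fin m, (η ^ 2 / 4 * m * 2 ^ m) :=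
      sum_le_sum fun i _ => hm1 m (le_trans (le_max_left _ _) hm) _ (hp i)
    simp only [sum_const, card_univ, Fintype.card_fin, nsmul_eq_mul] at hs
    have hmm : (8 / η ^ 2 : ℝ) < m := lt_of_lt_of_le hm2 (by exact_mod_cast le_trans (le_max_right _ _) hm)
    rw [div_lt_iff₀ (by positivity)] at hmm
    have h2 : (0:ℝ) < 2 ^ m := by positivity
    have hm0 : (0:ℝ) ≤ m := by positivity
    refine abs_le_of_sq_le_sq' ?_ (by positivity) |>.2
    calc _ ≤ _ := hb'
      _ ≤ 2 * 2 ^ m * (2 * m * 2 ^ m + (m * (η ^ 2 / 4 * m * 2 ^ m))) := by gcongr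
      _ = (2^m)^2 * m * (4 + m * η^2 / 2) := by ring
      _ ≤ (2^m)^2 * m * (m * η^2) := by gcongr; linarith
      _ = _ := by ring

/-- functions depending on few coordinates have low degree -/
lemma cdg_of_dep {m : ℕ} (d : ℕ) : ∀ (S : Finset (Fin m)) (p : (Fin m → Bool) → ℤ), S.card ≤ d →
    (∀ x y, (∀ i ∈ S, x i = y i) → p x = p y) → cdg d p := by
  induction d with
  | zero =>
    intro S p hS hp x y
    have : S = ∅ := by simpa using hS
    subst this
    exact hp x y (by simp)
  | succ d ih =>
    intro S p hS hp i
    by_cases hi : i ∈ S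
    · refine ih (S.erase i) _ (by rw [card_erase_of_mem hi]; omega) ?_
      intro x y hxy
      unfold cD
      rw [hp (Function.update x i true) (Function.update y i true),
        hp (Function.update x i false) (Function.update y i false)]
      all_goals
        intro j hj
        by_cases hji : j = i
        · subst hji; simp
        · simp [hji, hxy j (mem_erase.2 ⟨hji, hj⟩)]
    · have h0 : cD i p = fun _ => 0 := by
        funext x
        unfold cD
        rw [hp (Function.update x i true) (Function.update x i false), sub_self]
        intro j hj
        have : j ≠ i := fun h => hi (h ▸ hj)
        simp [this]
      rw [h0]
      exact ih ∅ _ (by simp) (by simp)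

lemma cdg_add {m : ℕ} (d : ℕ) : ∀ (p q : (Fin m → Bool) → ℤ), cdg d p → cdg d q →
    cdg d (fun x => p x + q x) := by
  induction d with
  | zero => intro p q hp hq x y; simp only [hp x y, hq x y]
  | succ d ih =>
    intro p q hp hq i
    have : cD i (fun x => p x + q x) = fun x => cD i p x + cD i q x := by
      funext x; simp only [cD]; ring
    rw [this]; exact ih _ _ (hp i) (hq i)

lemma cdg_sum {m : ℕ} (d : ℕ) {ι : Type*} (s : Finset ι) (p : ι → (Fin m → Bool) → ℤ)
    (h : ∀ a ∈ s, cdg d (p a)) : cdg d (fun x => ∑ a ∈ s, p a x) := by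
  induction s using Finset.induction_on with
  | empty => exact cdg_of_dep d ∅ _ (by simp) (by simp)
  | insert a s ha ih =>
    simp only [sum_insert ha]
    exact cdg_add d _ _ (h a (by simp)) (ih fun b hb => h b (by simp [hb]))

lemma swap_const {α β : Type*} [DecidableEq α] (g : Finset α → β) (P : Finset α) (s : ℕ)
    (h : ∀ p ∈ P, ∀ q ∈ P, p ≠ q → ∀ Z ⊆ P \ {p, q}, Z.card = s → g (insert p Z) = g (insert q Z)) :
    ∀ A ⊆ P, ∀ B ⊆ P, A.card = s + 1 → B.card = s + 1 → g A = g B := by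
  have : ∀ n : ℕ, ∀ A ⊆ P, ∀ B ⊆ P, A.card = s + 1 → B.card = s + 1 → (A \ B).card = n → g A = g B := by
    intro n
    induction n with
    | zero =>
      intro A hA B hB hAc hBc h0
      have : A ⊆ B := by simpa [sdiff_eq_empty_iff_subset] using h0
      rw [eq_of_subset_of_card_le this (by omega)]
    | succ n ih =>
      intro A hA B hB hAc hBc h0
      have h1 : (A \ B).Nonempty := card_pos.1 (by omega)
      have h2 : (B \ A).Nonempty := by
        apply card_pos.1
        have := card_sdiff_add_card_inter A B
        have := card_sdiff_add_card_inter B A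
        rw [inter_comm] at this
        omega
      obtain ⟨p, hp⟩ := h1
      obtain ⟨q, hq⟩ := h2
      rw [mem_sdiff] at hp hq
      have hpq : p ≠ q := fun e => hp.2 (e ▸ hq.1)
      have hqe : q ∉ A.erase p := fun h => hq.2 (mem_of_mem_erase h)
      have hZ : (A.erase p).card = s := by rw [card_erase_of_mem hp.1]; omega
      have e1 := h p (hA hp.1) q (hB hq.1) hpq (A.erase p) (by
        intro x hx
        simp only [mem_erase] at hx
        simp only [mem_sdiff, mem_insert, mem_singleton, not_or]
        exact ⟨hA hx.2, hx.1, fun e => hq.2 (e ▸ hx.2)⟩) hZ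
      rw [insert_erase hp.1] at e1
      rw [e1]
      apply ih _ _ B hB _ hBc
      · have : insert q (A.erase p) \ B = (A \ B).erase p := by
          ext x
          simp only [mem_sdiff, mem_insert, mem_erase]
          constructor
          · rintro ⟨rfl | hx, hb⟩
            · exact absurd hq.1 hb
            · exact ⟨hx.1, hx.2, hb⟩
          · rintro ⟨hx, ha, hb⟩
            exact ⟨Or.inr ⟨hx, ha⟩, hb⟩
        rw [this, card_erase_of_mem (mem_sdiff.2 hp)]; omega
      · intro x hx
        rcases mem_insert.1 hx with rfl | hx
        · exact hB hq.1
        · exact hA (mem_of_mem_erase hx)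
      · rw [card_insert_of_notMem hqe, hZ]
  intro A hA B hB hAc hBc
  exact this _ A hA B hB hAc hBc rfl

def Dpq {α : Type*} [DecidableEq α] (p q : α) (g : Finset α → ℤ) : Finset α → ℤ :=
  fun Z => g (insert p Z) - g (insert q Z)

def sdg {α : Type*} [DecidableEq α] : ℕ → ℕ → Finset α → (Finset α → ℤ) → Prop
  | 0, s, P, g => ∀ A ⊆ P, ∀ B ⊆ P, A.card = s → B.card = s → g A = g B
  | d+1, s, P, g => ∀ p ∈ P, ∀ q ∈ P, p ≠ q → ∀ s', s = s' + 1 → sdg d s' (P \ {p, q}) (Dpq p q g)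

lemma sdg_add {α : Type*} [DecidableEq α] (d : ℕ) : ∀ (s : ℕ) (P : Finset α) (g h : Finset α → ℤ),
    sdg d s P g → sdg d s P h → sdg d s P (fun A => g A + h A) := by
  induction d with
  | zero => intro s P g h hg hh A hA B hB hAc hBc; simp only [hg A hA B hB hAc hBc, hh A hA B hB hAc hBc]
  | succ d ih =>
    intro s P g h hg hh p hp q hq hpq s' hs
    have : Dpq p q (fun A => g A + h A) = fun A => Dpq p q g A + Dpq p q h A := by
      funext x; simp only [Dpq]; ring
    rw [this]
    exact ih _ _ _ _ (hg p hp q hq hpq s' hs) (hh p hp q hq hpq s' hs)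

lemma sdg_of_dep {α : Type*} [DecidableEq α] (d : ℕ) : ∀ (s : ℕ) (P S : Finset α) (g : Finset α → ℤ),
    S.card ≤ d → (∀ A ⊆ P, ∀ B ⊆ P, A ∩ S = B ∩ S → g A = g B) → sdg d s P g := by
  induction d with
  | zero =>
    intro s P S g hS h A hA B hB _ _
    have : S = ∅ := by simpa using hS
    subst this
    exact h A hA B hB (by simp)
  | succ d ih =>
    intro s P S g hS h p hp q hq hpq s' hs
    have sub : ∀ A ⊆ P \ {p, q}, ∀ x ∈ P, insert x A ⊆ P := by
      intro A hA x hx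
      exact insert_subset hx (hA.trans sdiff_subset)
    have key : ∀ x ∈ S, x ∈ ({p, q} : Finset α) → sdg d s' (P \ {p, q}) (Dpq p q g) := by
      intro x hxS hx
      refine ih _ _ (S.erase x) _ (by rw [card_erase_of_mem hxS]; omega) ?_
      intro A hA B hB hAB
      have hxA : x ∉ A := fun h => (mem_sdiff.1 (hA h)).2 hx
      have hxB : x ∉ B := fun h => (mem_sdiff.1 (hB h)).2 hx
      have hAS : A ∩ S = B ∩ S := by
        ext y
        by_cases hy : y = x
        · subst hy; simp [hxA, hxB]
        · have := congrArg (fun T => y ∈ T) hAB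
          simpa [hy] using this
      unfold Dpq
      rw [h (insert p A) (sub A hA p hp) (insert p B) (sub B hB p hp),
        h (insert q A) (sub A hA q hq) (insert q B) (sub B hB q hq)]
      all_goals
        ext y
        have := congrArg (fun T => y ∈ T) hAS
        simp only [mem_inter, eq_iff_iff] at this
        simp only [mem_inter, mem_insert]
        tauto
    by_cases hpS : p ∈ S
    · exact key p hpS (by simp)
    by_cases hqS : q ∈ S
    · exact key q hqS (by simp)
    refine ih _ _ ∅ _ (by simp) ?_
    have h0 : ∀ A ⊆ P \ {p, q}, Dpq p q g A = 0 := by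
      intro A hA
      unfold Dpq
      rw [h (insert p A) (sub A hA p hp) (insert q A) (sub A hA q hq), sub_self]
      rw [insert_inter_of_notMem hpS, insert_inter_of_notMem hqS]
    intro A hA B hB _
    rw [h0 A hA, h0 B hB]

lemma sdg_sum {α : Type*} [DecidableEq α] (d s : ℕ) (P : Finset α) {ι : Type*} (I : Finset ι)
    (g : ι → Finset α → ℤ) (h : ∀ a ∈ I, sdg d s P (g a)) : sdg d s P (fun A => ∑ a ∈ I, g a A) := by
  induction I using Finset.induction_on with
  | empty => exact sdg_of_dep d s P ∅ _ (by simp) (by simp)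
  | insert a I ha ih =>
    simp only [sum_insert ha]
    exact sdg_add d _ _ _ _ (h a (by simp)) (ih fun b hb => h b (by simp [hb]))

lemma slice_lb {α : Type*} [DecidableEq α] (d : ℕ) : ∀ (s : ℕ) (P : Finset α) (g : Finset α → ℤ),
    sdg d s P g → P.card = 2 * s → (∃ R ⊆ P, R.card = s ∧ g R ≠ 0) →
    (2 * s).choose s ≤ 4 ^ d * ((P.powersetCard s).filter (fun R => g R ≠ 0)).card := by
  have const : ∀ (s : ℕ) (P : Finset α) (g : Finset α → ℤ),
      (∀ A ⊆ P, ∀ B ⊆ P, A.card = s → B.card = s → g A = g B) →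
      P.card = 2 * s → (∃ R ⊆ P, R.card = s ∧ g R ≠ 0) →
      (2 * s).choose s = ((P.powersetCard s).filter (fun R => g R ≠ 0)).card := by
    rintro s P g h hP ⟨R, hR, hRc, hg⟩
    rw [filter_true_of_mem, card_powersetCard, hP]
    intro A hA
    rw [mem_powersetCard] at hA
    rw [h A hA.1 R hR hA.2 hRc]; exact hg
  induction d with
  | zero =>
    intro s P g h hP hR
    rw [const s P g h hP hR]; simp
  | succ d ih =>
    intro s P g h hP hR
    by_cases hc : ∀ A ⊆ P, ∀ B ⊆ P, A.card = s → B.card = s → g A = g B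
    · rw [const s P g hc hP hR]
      exact Nat.le_mul_of_pos_left _ (by positivity)
    rcases s with _ | s
    · exfalso
      apply hc
      intro A _ B _ hA hB
      rw [card_eq_zero.1 hA, card_eq_zero.1 hB]
    have : ∃ p ∈ P, ∃ q ∈ P, p ≠ q ∧ ∃ Z ⊆ P \ {p, q}, Z.card = s ∧ g (insert p Z) ≠ g (insert q Z) := by
      by_contra hcon
      push Not at hcon
      exact hc (swap_const g P s hcon)
    obtain ⟨p, hp, q, hq, hpq, Z, hZ, hZc, hne⟩ := this
    have hcard : (P \ {p, q}).card = 2 * s := by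
      rw [card_sdiff_of_subset (by intro x; simp; rintro (rfl | rfl) <;> assumption), card_pair hpq]; omega
    have h1 := ih s (P \ {p, q}) (Dpq p q g) (h p hp q hq hpq s rfl) hcard
      ⟨Z, hZ, hZc, sub_ne_zero.2 hne⟩
    have h2 : (((P \ {p, q}).powersetCard s).filter (fun R => Dpq p q g R ≠ 0)).card ≤
        ((P.powersetCard (s+1)).filter (fun R => g R ≠ 0)).card := by
      have hins : ∀ A ⊆ P \ {p, q}, ∀ x ∈ ({p, q} : Finset α), insert x A \ {p, q} = A := by
        intro A hA x hx
        ext y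
        have := @hA y
        simp only [mem_sdiff, mem_insert, mem_singleton] at *
        constructor
        · rintro ⟨rfl | h, h'⟩
          · exact absurd hx h'
          · exact h
        · intro h
          exact ⟨Or.inr h, (this h).2⟩
      apply card_le_card_of_injOn (fun A => if g (insert p A) ≠ 0 then insert p A else insert q A)
      · intro A hA
        simp only [coe_filter, mem_powersetCard, Set.mem_setOf_eq] at hA ⊢
        obtain ⟨⟨hA, hAc⟩, hD⟩ := hA
        have hpA : p ∉ A := fun h => (mem_sdiff.1 (hA h)).2 (by simp)
        have hqA : q ∉ A := fun h => (mem_sdiff.1 (hA h)).2 (by simp)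
        have hAP := hA.trans sdiff_subset
        split_ifs with hh
        · exact ⟨⟨insert_subset hp hAP, by rw [card_insert_of_notMem hpA, hAc]⟩, hh⟩
        · refine ⟨⟨insert_subset hq hAP, by rw [card_insert_of_notMem hqA, hAc]⟩, ?_⟩
          intro h0
          apply hD
          unfold Dpq
          push Not at hh
          rw [hh, h0]; rfl
      · intro A hA B hB hAB
        simp only [coe_filter, mem_powersetCard, Set.mem_setOf_eq] at hA hB
        have e : ∀ A ⊆ P \ {p, q}, (if g (insert p A) ≠ 0 then insert p A else insert q A) \ {p, q} = A := by
          intro A hA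
          split_ifs
          · exact hins A hA p (by simp)
          · exact hins A hA q (by simp)
        rw [← e A hA.1.1, ← e B hB.1.1]
        simp only at hAB
        rw [hAB]
    have h3 : (2 * (s+1)).choose (s+1) ≤ 4 * (2 * s).choose s := by
      have := Nat.succ_mul_centralBinom_succ s
      rw [Nat.centralBinom_eq_two_mul_choose, Nat.centralBinom_eq_two_mul_choose] at this
      by_contra hlt
      push Not at hlt
      nlinarith
    calc _ ≤ 4 * (2 * s).choose s := h3
      _ ≤ 4 * (4 ^ d * _) := Nat.mul_le_mul_left _ (h1.trans (Nat.mul_le_mul_left _ h2))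
      _ = _ := by ring

/-- the action of permutations on weight functions -/
def act {α : Type} (σ : Equiv.Perm α) (φ : Finset α → ℤ) : Finset α → ℤ :=
  fun W => φ (W.map σ.toEmbedding)

lemma act_mul {α : Type} (σ τ : Equiv.Perm α) (φ : Finset α → ℤ) :
    act (σ * τ) φ = act τ (act σ φ) := by
  funext W
  simp only [act, map_map]
  rfl

/-- total weight of the `r`-subsets of `X` -/
def wF {α : Type} (r : ℕ) (ψ : Finset α → ℤ) (X : Finset α) : ℤ := ∑ W ∈ X.powersetCard r, ψ W

lemma wF_act {α : Type} (r : ℕ) (ψ : Finset α → ℤ) (τ : Equiv.Perm α) (X : Finset α) :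
    wF r (act τ ψ) X = wF r ψ (X.map τ.toEmbedding) := by
  unfold wF
  rw [powersetCard_map, sum_map]
  rfl

/-- number of elements of `I` satisfying `Q` -/
noncomputable def cnt {ι : Type*} (I : Finset ι) (Q : ι → Prop) : ℕ := (I.filter Q).card

lemma cnt_eq {ι : Type*} (I : Finset ι) (Q : ι → Prop) [DecidablePred Q] :
    cnt I Q = (I.filter Q).card := by
  unfold cnt
  congr

lemma cnt_congr {ι : Type*} (I : Finset ι) (Q Q' : ι → Prop) (h : ∀ i ∈ I, Q i ↔ Q' i) :
    cnt I Q = cnt I Q' := by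
  unfold cnt
  rw [filter_congr h]

lemma cnt_mono {ι : Type*} (I : Finset ι) (Q Q' : ι → Prop) (h : ∀ i ∈ I, Q i → Q' i) :
    cnt I Q ≤ cnt I Q' := by
  unfold cnt
  apply card_le_card
  intro i hi
  rw [mem_filter] at hi ⊢
  exact ⟨hi.1, h i hi.1 hi.2⟩

lemma cnt_false {ι : Type*} (I : Finset ι) (Q : ι → Prop) (h : ∀ i ∈ I, ¬ Q i) :
    cnt I Q = 0 := by
  unfold cnt
  rw [filter_false_of_mem h, card_empty]

lemma cnt_add_not {ι : Type*} (I : Finset ι) (Q : ι → Prop) :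
    cnt I Q + cnt I (fun i => ¬ Q i) = I.card := by
  rw [cnt_eq, cnt_eq]
  exact card_filter_add_card_filter_not Q

lemma cnt_le_card {ι : Type*} (I : Finset ι) (Q : ι → Prop) : cnt I Q ≤ I.card := by
  unfold cnt
  exact card_filter_le _ _

lemma cnt_prod {ι κ : Type*} (I : Finset ι) (J : Finset κ) (Q : ι → Prop) (Q' : κ → Prop) :
    cnt (I ×ˢ J) (fun z => Q z.1 ∧ Q' z.2) = cnt I Q * cnt J Q' := by
  unfold cnt
  rw [← card_product, ← filter_product]
  congr

lemma cnt_eq_sum {ι : Type*} (I : Finset ι) (Q : ι → Prop) :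
    cnt I Q = ∑ i ∈ I, if Q i then 1 else 0 := by
  unfold cnt
  rw [card_filter]

noncomputable def PrE {α : Type} [Fintype α] [DecidableEq α] (φ : Finset α → ℤ) (Q : (Finset α → ℤ) → Prop) : ℝ :=
  ((univ : Finset (Equiv.Perm α)).filter (fun σ => Q (act σ φ))).card / (Fintype.card (Equiv.Perm α) : ℝ)

section
variable {α : Type} [Fintype α] [DecidableEq α]

lemma PrE_nonneg (φ : Finset α → ℤ) (Q) : 0 ≤ PrE φ Q := by unfold PrE; positivity

lemma PrE_mono (φ : Finset α → ℤ) (Q Q' : (Finset α → ℤ) → Prop)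
    (h : ∀ σ, Q (act σ φ) → Q' (act σ φ)) : PrE φ Q ≤ PrE φ Q' := by
  unfold PrE
  gcongr with σ
  exact h σ

lemma PrE_eq_zero (φ : Finset α → ℤ) (Q : (Finset α → ℤ) → Prop)
    (h : ∀ σ, ¬ Q (act σ φ)) : PrE φ Q = 0 := by
  unfold PrE
  rw [filter_false_of_mem (fun σ _ => h σ)]
  simp

lemma PrE_le_one (φ : Finset α → ℤ) (Q) : PrE φ Q ≤ 1 := by
  unfold PrE
  rw [div_le_one (by exact_mod_cast Fintype.card_pos)]
  exact_mod_cast card_le_univ _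

lemma PrE_or (φ : Finset α → ℤ) (Q Q' : (Finset α → ℤ) → Prop) :
    PrE φ (fun ψ => Q ψ ∨ Q' ψ) ≤ PrE φ Q + PrE φ Q' := by
  unfold PrE
  rw [← add_div]
  gcongr
  simp only [filter_or]
  exact_mod_cast card_union_le _ _

lemma PrE_le_add (φ : Finset α → ℤ) (Q Q1 Q2 : (Finset α → ℤ) → Prop)
    (h : ∀ σ, Q (act σ φ) → Q1 (act σ φ) ∨ Q2 (act σ φ)) : PrE φ Q ≤ PrE φ Q1 + PrE φ Q2 :=
  (PrE_mono φ Q (fun ψ => Q1 ψ ∨ Q2 ψ) h).trans (PrE_or φ Q1 Q2)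

lemma PrE_act (φ : Finset α → ℤ) (Q : (Finset α → ℤ) → Prop) (τ : Equiv.Perm α) :
    PrE φ (fun ψ => Q (act τ ψ)) = PrE φ Q := by
  unfold PrE
  congr 2
  apply card_bij (fun σ _ => σ * τ)
  · intro σ hσ
    simpa [act_mul] using hσ
  · intro a _ b _ h
    exact mul_right_cancel h
  · intro b hb
    refine ⟨b * τ⁻¹, ?_, by simp⟩
    rw [mem_filter]
    refine ⟨mem_univ _, ?_⟩
    show Q (act τ (act (b * τ⁻¹) φ))
    rw [← act_mul]
    simpa using hb

lemma PrE_congr (φ : Finset α → ℤ) (Q Q' : (Finset α → ℤ) → Prop) (τ : Equiv.Perm α)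
    (h : ∀ ψ, Q ψ ↔ Q' (act τ ψ)) : PrE φ Q = PrE φ Q' := by
  rw [← PrE_act φ Q' τ]
  congr 1
  funext ψ
  exact propext (h ψ)

lemma PrE_sum (φ : Finset α → ℤ) {ι : Type*} (I : Finset ι) (Q : ι → (Finset α → ℤ) → Prop) :
    ∑ i ∈ I, PrE φ (Q i) =
      (∑ σ : Equiv.Perm α, (cnt I (fun i => Q i (act σ φ)) : ℝ)) / (Fintype.card (Equiv.Perm α) : ℝ) := by
  unfold PrE
  rw [← sum_div]
  congr 1
  unfold cnt
  simp only [card_filter, Nat.cast_sum]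
  rw [sum_comm]

lemma PrE_count (φ : Finset α → ℤ) {ι κ : Type*} (I : Finset ι) (J : Finset κ)
    (Q : ι → (Finset α → ℤ) → Prop) (Q' : κ → (Finset α → ℤ) → Prop) (c : ℝ)
    (h : ∀ σ, c * (cnt I (fun i => Q i (act σ φ)) : ℝ) ≤ (cnt J (fun i => Q' i (act σ φ)) : ℝ)) :
    c * ∑ i ∈ I, PrE φ (Q i) ≤ ∑ j ∈ J, PrE φ (Q' j) := by
  rw [PrE_sum, PrE_sum, ← mul_div_assoc, mul_sum]
  gcongr
  exact h _

lemma PrE_bound (φ : Finset α → ℤ) {ι : Type*} (I : Finset ι)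
    (Q : ι → (Finset α → ℤ) → Prop) (c : ℝ)
    (h : ∀ σ, (cnt I (fun i => Q i (act σ φ)) : ℝ) ≤ c) :
    ∑ i ∈ I, PrE φ (Q i) ≤ c := by
  rw [PrE_sum, div_le_iff₀ (by exact_mod_cast Fintype.card_pos)]
  calc _ ≤ ∑ σ : Equiv.Perm α, c := sum_le_sum fun σ _ => h σ
    _ = _ := by rw [sum_const, card_univ, nsmul_eq_mul, mul_comm]

/-- Markov -/
lemma PrE_markov (φ : Finset α → ℤ) {ι : Type*} (I : Finset ι) (hI : I.Nonempty)
    (A : (Finset α → ℤ) → Prop) (B : ι → (Finset α → ℤ) → Prop) (ε η : ℝ)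
    (h : ∀ i ∈ I, PrE φ (fun ψ => A ψ ∧ B i ψ) ≤ ε) :
    η * PrE φ (fun ψ => A ψ ∧ η * (I.card : ℝ) ≤ (cnt I (fun i => B i ψ) : ℝ)) ≤ ε := by
  have h1 := PrE_count φ ({()} : Finset Unit) I
    (fun _ ψ => A ψ ∧ η * (I.card : ℝ) ≤ (cnt I (fun i => B i ψ) : ℝ))
    (fun i ψ => A ψ ∧ B i ψ) (η * I.card) (by
      intro σ
      rw [cnt_eq_sum, sum_singleton]
      split_ifs with hA
      · simp only [Nat.cast_one, mul_one, hA.1, true_and]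
        exact hA.2
      · simp)
  have h2 : ∑ i ∈ I, PrE φ (fun ψ => A ψ ∧ B i ψ) ≤ I.card * ε := by
    have := sum_le_sum h
    simpa using this
  rw [sum_singleton] at h1
  have hc : (0:ℝ) < I.card := by exact_mod_cast hI.card_pos
  have := h1.trans h2
  have : (I.card : ℝ) * (η * PrE φ (fun ψ => A ψ ∧ η * (I.card : ℝ) ≤ (cnt I (fun i => B i ψ) : ℝ))) ≤ I.card * ε := by
    linarith
  exact le_of_mul_le_mul_left this hc

lemma exists_perm_label {γ : Type} [DecidableEq γ] (f g : α → γ)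
    (h : ∀ c, (univ.filter (fun a => f a = c)).card = (univ.filter (fun a => g a = c)).card) :
    ∃ τ : Equiv.Perm α, ∀ a, g (τ a) = f a := by
  have : ∀ c, Nonempty ({a // f a = c} ≃ {a // g a = c}) := by
    intro c
    apply Fintype.card_eq.1
    rw [Fintype.card_subtype, Fintype.card_subtype, h]
  have e := fun c => (this c).some
  exact ⟨Equiv.ofFiberEquiv e, fun a => Equiv.ofFiberEquiv_map e a⟩

lemma exists_perm3 (A B C A' B' C' : Finset α) (h1 : Disjoint A B) (h2 : Disjoint A C)
    (h3 : Disjoint B C) (h1' : Disjoint A' B') (h2' : Disjoint A' C') (h3' : Disjoint B' C')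
    (hA : A.card = A'.card) (hB : B.card = B'.card) (hC : C.card = C'.card) :
    ∃ τ : Equiv.Perm α, A.map τ.toEmbedding = A' ∧ B.map τ.toEmbedding = B' ∧ C.map τ.toEmbedding = C' := by
  let lab : Finset α → Finset α → Finset α → α → Fin 4 := fun A B C x =>
    if x ∈ A then 0 else if x ∈ B then 1 else if x ∈ C then 2 else 3
  have labspec : ∀ A B C : Finset α, Disjoint A B → Disjoint A C → Disjoint B C →
      ∀ x, (lab A B C x = 0 ↔ x ∈ A) ∧ (lab A B C x = 1 ↔ x ∈ B) ∧ (lab A B C x = 2 ↔ x ∈ C)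
       ∧ (lab A B C x = 3 ↔ x ∉ A ∪ B ∪ C):= by
    intro A B C h1 h2 h3 x
    have a1 := fun hx : x ∈ _ => Finset.disjoint_left.1 h1 hx
    have a2 := fun hx : x ∈ _ => Finset.disjoint_left.1 h2 hx
    have a3 := fun hx : x ∈ _ => Finset.disjoint_left.1 h3 hx
    simp only [lab, mem_union]
    by_cases hA : x ∈ A <;> by_cases hB : x ∈ B <;> by_cases hC : x ∈ C <;> simp_all
  have s := labspec A B C h1 h2 h3
  have s' := labspec A' B' C' h1' h2' h3'
  have hU : (A ∪ B ∪ C).card = (A' ∪ B' ∪ C').card := by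
    rw [card_union_of_disjoint (disjoint_union_left.2 ⟨h2, h3⟩), card_union_of_disjoint h1,
      card_union_of_disjoint (disjoint_union_left.2 ⟨h2', h3'⟩), card_union_of_disjoint h1']
    omega
  obtain ⟨τ, hτ⟩ := exists_perm_label (lab A B C) (lab A' B' C') (by
    intro c
    fin_cases c
    · simp only [Fin.zero_eta, fun x => (s x).1, fun x => (s' x).1, filter_univ_mem, hA]
    · simp only [Fin.mk_one, fun x => (s x).2.1, fun x => (s' x).2.1, filter_univ_mem, hB]
    · simp only [Fin.reduceFinMk, fun x => (s x).2.2.1, fun x => (s' x).2.2.1, filter_univ_mem, hC]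
    · simp only [Fin.reduceFinMk, fun x => (s x).2.2.2, fun x => (s' x).2.2.2]
      have e : ∀ T : Finset α, univ.filter (fun x => x ∉ T) = Tᶜ := by intro T; ext; simp
      rw [e, e, card_compl, card_compl, hU])
  refine ⟨τ, ?_, ?_, ?_⟩
  · ext x
    obtain ⟨y, rfl⟩ := τ.surjective x
    simp only [mem_map_equiv, Equiv.symm_apply_apply]
    rw [← (s y).1, ← (s' (τ y)).1, hτ]
  · ext x
    obtain ⟨y, rfl⟩ := τ.surjective x
    simp only [mem_map_equiv, Equiv.symm_apply_apply]
    rw [← (s y).2.1, ← (s' (τ y)).2.1, hτ]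
  · ext x
    obtain ⟨y, rfl⟩ := τ.surjective x
    simp only [mem_map_equiv, Equiv.symm_apply_apply]
    rw [← (s y).2.2.1, ← (s' (τ y)).2.2.1, hτ]

lemma exists_perm_pair (X Y X' Y' : Finset α) (hX : X.card = X'.card) (hY : Y.card = Y'.card)
    (h : (X \ Y).card = (X' \ Y').card) :
    ∃ τ : Equiv.Perm α, X.map τ.toEmbedding = X' ∧ Y.map τ.toEmbedding = Y' := by
  have e1 := card_sdiff_add_card_inter X Y
  have e2 := card_sdiff_add_card_inter X' Y'
  have e3 := card_sdiff_add_card_inter Y X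
  have e4 := card_sdiff_add_card_inter Y' X'
  rw [inter_comm] at e3 e4
  have d : ∀ X Y : Finset α, Disjoint (X \ Y) (Y \ X) := by
    intro X Y
    rw [disjoint_left]; intro x; simp; tauto
  obtain ⟨τ, t1, t2, t3⟩ := exists_perm3 (X ∩ Y) (X \ Y) (Y \ X) (X' ∩ Y') (X' \ Y') (Y' \ X')
    (disjoint_sdiff_inter X Y).symm (by rw [inter_comm]; exact (disjoint_sdiff_inter Y X).symm) (d X Y)
    (disjoint_sdiff_inter X' Y').symm (by rw [inter_comm]; exact (disjoint_sdiff_inter Y' X').symm) (d X' Y')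
    (by omega) h (by omega)
  refine ⟨τ, ?_, ?_⟩
  · rw [← sdiff_union_inter X Y, map_union, t1, t2, sdiff_union_inter]
  · rw [← sdiff_union_inter Y X, map_union, t3, inter_comm, t1, inter_comm, sdiff_union_inter]

end

lemma exists_blocks (n m t k : ℕ) (hm : 1 ≤ m) (hmt : m * t ≤ k) (hn : 2 * k ≤ n) :
    ∃ U : (Fin m → Bool) → Finset (Fin n), (∀ x, (U x).card = k) ∧
      (∀ x i, (U (Function.update x i true) \ U (Function.update x i false)).card = t) ∧
      ∀ W : Finset (Fin n), ∃ S : Finset (Fin m), S.card ≤ W.card ∧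
        ∀ x y : Fin m → Bool, (∀ i ∈ S, x i = y i) → W ⊆ U x → W ⊆ U y := by
  have hne : Nonempty (((Fin m × Fin t × Bool) ⊕ Fin (k - m * t)) ↪ Fin n) := by
    apply Function.Embedding.nonempty_of_card_le
    simp
    have : m * (t * 2) = 2 * (m * t) := by ring
    omega
  obtain ⟨e⟩ := hne
  let c : (Fin m → Bool) → (Fin m × Fin t) ⊕ Fin (k - m * t) ↪ ((Fin m × Fin t × Bool) ⊕ Fin (k - m * t)) :=
    fun x => ⟨Sum.map (fun z => (z.1, z.2, x z.1)) id, by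
      apply Function.Injective.sumMap _ Function.injective_id
      rintro ⟨a, b⟩ ⟨a', b'⟩ h
      simp only [Prod.mk.injEq] at h
      simp [h.1, h.2.1]⟩
  let U : (Fin m → Bool) → Finset (Fin n) := fun x => univ.map ((c x).trans e)
  have memU : ∀ x z, e z ∈ U x ↔ (∀ i j b, z = Sum.inl (i, j, b) → x i = b) := by
    intro x z
    simp only [U, mem_map, mem_univ, true_and, Function.Embedding.trans_apply, e.injective.eq_iff]
    constructor
    · rintro ⟨w, rfl⟩ i j b h
      rcases w with ⟨i', j'⟩ | w
      · simp only [c, Function.Embedding.coeFn_mk, Sum.map_inl, Sum.inl.injEq, Prod.mk.injEq] at h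
        rw [← h.1]; exact h.2.2
      · simp [c] at h
    · intro h
      rcases z with ⟨i, j, b⟩ | w
      · exact ⟨Sum.inl (i, j), by simp [c, h i j b rfl]⟩
      · exact ⟨Sum.inr w, by simp [c]⟩
  have subU : ∀ x w, w ∈ U x → ∃ z, e z = w := by
    intro x w hw
    simp only [U, mem_map, mem_univ, true_and] at hw
    obtain ⟨a, ha⟩ := hw
    exact ⟨_, ha⟩
  refine ⟨U, ?_, ?_, ?_⟩
  · intro x
    simp only [U, card_map, card_univ, Fintype.card_sum, Fintype.card_prod, Fintype.card_fin]
    omega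
  · intro x i
    have : U (Function.update x i true) \ U (Function.update x i false) =
        (univ : Finset (Fin t)).map ⟨fun j => e (Sum.inl (i, j, true)), by
          intro a b h
          have := e.injective h
          simpa using this⟩ := by
      ext w
      simp only [mem_sdiff, mem_map, mem_univ, true_and, Function.Embedding.coeFn_mk]
      constructor
      · rintro ⟨h1, h2⟩
        obtain ⟨z, rfl⟩ := subU _ _ h1
        rw [memU] at h1 h2
        push Not at h2
        obtain ⟨i', j', b, rfl, hb⟩ := h2
        have h1' := h1 i' j' b rfl
        by_cases hi : i' = i
        · subst hi
          simp at h1'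
          exact ⟨j', by rw [h1']; rfl⟩
        · simp [hi] at h1' hb
          exact absurd h1' hb
      · rintro ⟨j, rfl⟩
        change e (Sum.inl (i, j, true)) ∈ _ ∧ e (Sum.inl (i, j, true)) ∉ _
        rw [memU, memU]
        constructor
        · intro i' j' b h
          simp only [Sum.inl.injEq, Prod.mk.injEq] at h
          rw [← h.1, ← h.2.2]; simp
        · intro h
          have := h i j true rfl
          simp at this
    rw [this]; simp
  · intro W
    have : Nonempty (Fin m) := ⟨⟨0, hm⟩⟩
    let i0 : Fin m := ⟨0, hm⟩
    let idx : Fin n → Fin m := Function.extend e (Sum.elim (fun z => z.1) (fun _ => i0)) (fun _ => i0)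
    refine ⟨W.image idx, card_image_le, ?_⟩
    intro x y hxy hW w hw
    have hwx := hW hw
    obtain ⟨z, rfl⟩ := subU _ _ hwx
    rw [memU] at hwx ⊢
    intro i j b hz
    rw [← hwx i j b hz]
    symm
    apply hxy
    rw [mem_image]
    refine ⟨e z, hw, ?_⟩
    simp only [idx, e.injective.extend_apply]
    rw [hz]; rfl

lemma wF_eq_univ {n : ℕ} (r : ℕ) (ψ : Finset (Fin n) → ℤ) (X : Finset (Fin n)) :
    wF r ψ X = ∑ W ∈ (univ : Finset (Fin n)).powersetCard r, if W ⊆ X then ψ W else 0 := by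
  unfold wF
  rw [← sum_filter]
  apply sum_congr _ (fun _ _ => rfl)
  ext W
  simp [mem_powersetCard, and_comm]

lemma flip_le (u v l : ℤ) : (if u = l ∧ v ≠ l then (2:ℤ) else 0) ≤
    (1 - sg (u - l) * sg (v - l)) + (1 - sg (u - (l+1)) * sg (v - (l+1))) := by
  simp only [sg]
  split_ifs <;> first | omega | (norm_num; done) | simp_all

lemma NS (r : ℕ) (ε : ℝ) (hε : 0 < ε) : ∃ θ : ℝ, 0 < θ ∧ ∀ (n k : ℕ), 2 * k ≤ n →
    ∀ (φ : Finset (Fin n) → ℤ) (l : ℤ) (X Y : Finset (Fin n)), X.card = k → Y.card = k →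
    ((X \ Y).card : ℝ) ≤ θ * k → PrE φ (fun ψ => wF r ψ X = l ∧ wF r ψ Y ≠ l) ≤ ε := by
  obtain ⟨m0, hm0⟩ := cJ_bound r ε hε
  refine ⟨1 / (m0 + 1), by positivity, ?_⟩
  intro n k hn φ l X Y hX hY hXY
  obtain ⟨t, ht⟩ : ∃ t, (X \ Y).card = t := ⟨_, rfl⟩
  rcases Nat.eq_zero_or_pos t with h0 | h0
  · have : X = Y := by
      apply eq_of_subset_of_card_le
      · rw [← sdiff_eq_empty_iff_subset, ← card_eq_zero]; omega
      · omega
    subst this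
    refine le_trans (le_of_eq ?_) hε.le
    apply PrE_eq_zero
    intro σ; tauto
  have hmk : m0 + 1 ≤ k / t := by
    rw [Nat.le_div_iff_mul_le h0]
    rw [ht, one_div_mul_eq_div, le_div_iff₀ (by positivity)] at hXY
    have : t * (m0 + 1) ≤ k := by exact_mod_cast hXY
    linarith
  set m := k / t with hm
  obtain ⟨U, hU1, hU2, hU3⟩ := exists_blocks n m t k (by omega) (Nat.div_mul_le_self k t) hn
  set π := PrE φ (fun ψ => wF r ψ X = l ∧ wF r ψ Y ≠ l) with hπ
  let Q : (Fin m → Bool) × Fin m → (Finset (Fin n) → ℤ) → Prop := fun z ψ =>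
    wF r ψ (U (Function.update z.1 z.2 true)) = l ∧ wF r ψ (U (Function.update z.1 z.2 false)) ≠ l
  have hall : ∀ z, PrE φ (Q z) = π := by
    intro z
    obtain ⟨τ, h1, h2⟩ := exists_perm_pair X Y (U (Function.update z.1 z.2 true)) (U (Function.update z.1 z.2 false))
      (by rw [hX, hU1]) (by rw [hY, hU1]) (by rw [ht, hU2])
    rw [hπ]
    apply PrE_congr φ _ _ τ
    intro ψ
    rw [wF_act, wF_act, h1, h2]
  have hdeg : ∀ ψ : Finset (Fin n) → ℤ, ∀ a : ℤ, cdg r (fun x => wF r ψ (U x) - a) := by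
    intro ψ a
    have : (fun x => wF r ψ (U x) - a) = fun x => (∑ W ∈ (univ : Finset (Fin n)).powersetCard r,
        if W ⊆ U x then ψ W else 0) + (-a) := by
      funext x; rw [wF_eq_univ, sub_eq_add_neg]
    rw [this]
    apply cdg_add
    · apply cdg_sum
      intro W hW
      obtain ⟨S, hS, hdep⟩ := hU3 W
      rw [mem_powersetCard] at hW
      apply cdg_of_dep r S _ (by omega)
      intro x y hxy
      have : W ⊆ U x ↔ W ⊆ U y := ⟨hdep x y hxy, hdep y x (fun i hi => (hxy i hi).symm)⟩
      simp only [this]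
    · exact cdg_of_dep r ∅ _ (by simp) (by simp)
  have hcount : ∀ ψ : Finset (Fin n) → ℤ, (cnt univ (fun z => Q z ψ) : ℝ) ≤ ε * m * 2 ^ m := by
    intro ψ
    have b1 := hm0 m (by omega) _ (hdeg ψ l)
    have b2 := hm0 m (by omega) _ (hdeg ψ (l+1))
    have : 2 * (cnt univ (fun z => Q z ψ) : ℤ) ≤
        ∑ i, cJ i (fun x => wF r ψ (U x) - l) + ∑ i, cJ i (fun x => wF r ψ (U x) - (l+1)) := by
      rw [cnt_eq_sum]
      push_cast
      rw [mul_sum, ← univ_product_univ, sum_product, sum_comm, ← sum_add_distrib]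
      apply sum_le_sum
      intro i _
      unfold cJ
      rw [← sum_add_distrib]
      apply sum_le_sum
      intro x _
      have := flip_le (wF r ψ (U (Function.update x i true))) (wF r ψ (U (Function.update x i false))) l
      refine le_trans ?_ this
      simp only [Q]
      split_ifs <;> norm_num
    have h' : 2 * (cnt univ (fun z => Q z ψ) : ℝ) ≤
        ((∑ i, cJ i (fun x => wF r ψ (U x) - l) : ℤ) : ℝ) + ((∑ i, cJ i (fun x => wF r ψ (U x) - (l+1)) : ℤ) : ℝ) := by
      exact_mod_cast this
    linarith
  have := PrE_bound φ univ Q (ε * m * 2 ^ m) (fun σ => hcount _)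
  simp only [hall, sum_const, card_univ, Fintype.card_prod, Fintype.card_fin, nsmul_eq_mul,
    Fintype.card_pi, Fintype.card_bool, prod_const] at this
  push_cast at this
  have hpos : (0:ℝ) < 2 ^ m * m := by
    have : (0:ℝ) < m := by exact_mod_cast (by omega : 0 < m)
    positivity
  have h2 : (2 ^ m * m : ℝ) * π ≤ (2 ^ m * m) * ε := by linarith
  exact le_of_mul_le_mul_left h2 hpos

lemma sdg_wF {n : ℕ} (r s : ℕ) (ψ : Finset (Fin n) → ℤ) (l : ℤ) (b P : Finset (Fin n)) :
    sdg r s P (fun R => wF r ψ (b ∪ R) - l) := by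
  have : (fun R => wF r ψ (b ∪ R) - l) = fun R => (∑ W ∈ (univ : Finset (Fin n)).powersetCard r,
      if W ⊆ b ∪ R then ψ W else 0) + (-l) := by
    funext x; rw [wF_eq_univ, sub_eq_add_neg]
  rw [this]
  apply sdg_add
  · apply sdg_sum
    intro W hW
    rw [mem_powersetCard] at hW
    apply sdg_of_dep r s P W _ (by omega)
    intro A hA B hB hAB
    have : W ⊆ b ∪ A ↔ W ⊆ b ∪ B := by
      have h : ∀ w ∈ W, (w ∈ A ↔ w ∈ B) := by
        intro w hw
        have := congrArg (fun T => w ∈ T) hAB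
        simpa [hw] using this
      simp only [subset_iff, mem_union]
      constructor
      · intro hh w hw
        rw [← h w hw]; exact hh hw
      · intro hh w hw
        rw [h w hw]; exact hh hw
    simp only [this]
  · exact sdg_of_dep r s P ∅ _ (by simp) (by simp)

/-- nonconstancy event -/
def NC {n : ℕ} (r : ℕ) (b P : Finset (Fin n)) (s : ℕ) (l : ℤ) (ψ : Finset (Fin n) → ℤ) : Prop :=
  ∃ R' ⊆ P, R'.card = s ∧ wF r ψ (b ∪ R') ≠ l

lemma NC_act {n : ℕ} (r : ℕ) (b P : Finset (Fin n)) (s : ℕ) (l : ℤ) (ψ : Finset (Fin n) → ℤ)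
    (τ : Equiv.Perm (Fin n)) :
    NC r b P s l (act τ ψ) ↔ NC r (b.map τ.toEmbedding) (P.map τ.toEmbedding) s l ψ := by
  unfold NC
  constructor
  · rintro ⟨R', h1, h2, h3⟩
    refine ⟨R'.map τ.toEmbedding, map_subset_map.2 h1, by simpa using h2, ?_⟩
    rw [wF_act, map_union] at h3
    exact h3
  · rintro ⟨R', h1, h2, h3⟩
    obtain ⟨R'', h4, rfl⟩ := subset_map_iff.1 h1
    refine ⟨R'', h4, by simpa using h2, ?_⟩
    rw [wF_act, map_union]
    exact h3

lemma const_lemma (r : ℕ) (ε : ℝ) (hε : 0 < ε) : ∃ θ : ℝ, 0 < θ ∧ ∀ (n k s : ℕ), 2 * k ≤ n →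
    ∀ (φ : Finset (Fin n) → ℤ) (l : ℤ) (b R N : Finset (Fin n)), Disjoint b R → Disjoint b N →
    Disjoint R N → R.card = s → N.card = s → b.card + s = k → (s : ℝ) ≤ θ * k →
    PrE φ (fun ψ => wF r ψ (b ∪ R) = l ∧ NC r b (R ∪ N) s l ψ) ≤ ε := by
  obtain ⟨θ, hθ, hNS⟩ := NS r (ε / 4 ^ r) (by positivity)
  refine ⟨θ, hθ, ?_⟩
  intro n k s hn φ l b R N hbR hbN hRN hR hN hb hs
  set I := (R ∪ N).powersetCard s with hI
  have hP : (R ∪ N).card = 2 * s := by rw [card_union_of_disjoint hRN]; omega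
  have hbP : Disjoint b (R ∪ N) := disjoint_union_right.2 ⟨hbR, hbN⟩
  have hbc : ∀ A ∈ I, (b ∪ A).card = k := by
    intro A hA
    rw [mem_powersetCard] at hA
    rw [card_union_of_disjoint (disjoint_of_subset_right hA.1 hbP)]; omega
  have hIc : I.card = (2 * s).choose s := by rw [card_powersetCard, hP]
  have hIpos : (0:ℝ) < I.card := by
    rw [hIc]; exact_mod_cast Nat.choose_pos (by omega)
  set π := PrE φ (fun ψ => wF r ψ (b ∪ R) = l ∧ NC r b (R ∪ N) s l ψ) with hπ
  have h1 : ∀ A ∈ I, PrE φ (fun ψ => wF r ψ (b ∪ A) = l ∧ NC r b (R ∪ N) s l ψ) = π := by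
    intro A hA
    rw [mem_powersetCard] at hA
    obtain ⟨τ, t1, t2, t3⟩ := exists_perm3 b R N b A ((R ∪ N) \ A) hbR hbN hRN
      (disjoint_of_subset_right hA.1 hbP) (disjoint_of_subset_right sdiff_subset hbP) disjoint_sdiff
      rfl (by omega) (by rw [card_sdiff_of_subset hA.1]; omega)
    apply PrE_congr φ _ _ τ
    intro ψ
    rw [wF_act, NC_act, map_union, map_union, t1, t2, t3, union_sdiff_of_subset hA.1]
  have h2 : ∀ z ∈ I ×ˢ I, PrE φ (fun ψ => wF r ψ (b ∪ z.1) = l ∧ wF r ψ (b ∪ z.2) ≠ l) ≤ ε / 4 ^ r := by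
    rintro ⟨A, B⟩ hz
    rw [mem_product] at hz
    apply hNS n k hn φ l _ _ (hbc A hz.1) (hbc B hz.2)
    refine le_trans ?_ hs
    have : ((b ∪ A) \ (b ∪ B)) ⊆ A := by
      intro x; simp; tauto
    have := card_le_card this
    rw [(mem_powersetCard.1 hz.1).2] at this
    exact_mod_cast this
  have h3 := PrE_count φ I (I ×ˢ I) (fun A ψ => wF r ψ (b ∪ A) = l ∧ NC r b (R ∪ N) s l ψ)
    (fun z ψ => wF r ψ (b ∪ z.1) = l ∧ wF r ψ (b ∪ z.2) ≠ l) (I.card / 4 ^ r) (by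
      intro σ
      generalize act σ φ = ψ
      by_cases hnc : NC r b (R ∪ N) s l ψ
      · rw [cnt_prod I I (fun A => wF r ψ (b ∪ A) = l) (fun A => wF r ψ (b ∪ A) ≠ l)]
        rw [cnt_congr I _ (fun A => wF r ψ (b ∪ A) = l) (fun i _ => and_iff_left hnc)]
        have lb := slice_lb r s (R ∪ N) _ (sdg_wF r s ψ l b (R ∪ N)) hP (by
          obtain ⟨R', a1, a2, a3⟩ := hnc
          exact ⟨R', a1, a2, sub_ne_zero.2 a3⟩)
        simp only [sub_ne_zero] at lb
        rw [← hIc, ← cnt_eq] at lb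
        have lb' : (I.card : ℝ) ≤ 4 ^ r * (cnt I (fun A => wF r ψ (b ∪ A) ≠ l) : ℝ) := by
          exact_mod_cast lb
        push_cast
        rw [mul_comm]
        gcongr
        rw [div_le_iff₀ (by positivity)]; linarith
      · rw [cnt_false _ _ (fun i _ h => hnc h.2)]
        simp)
  rw [sum_congr rfl h1] at h3
  have h4 := sum_le_sum h2
  simp only [sum_const, card_product, nsmul_eq_mul] at h3 h4
  push_cast at h4
  have h5 : (I.card : ℝ) * I.card / 4 ^ r * π ≤ (I.card : ℝ) * I.card / 4 ^ r * ε := by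
    calc _ = I.card / 4 ^ r * (I.card * π) := by ring
      _ ≤ _ := h3
      _ ≤ _ := h4
      _ = _ := by ring
  exact le_of_mul_le_mul_left h5 (by positivity)

def Van {α : Type} [DecidableEq α] : ℕ → ℕ → Finset α → (Finset α → ℤ) → Prop
  | 0, w, P, φ => ∀ W ⊆ P, W.card = w → φ W = 0
  | j+1, w, P, φ => ∀ p ∈ P, ∀ q ∈ P, p ≠ q → Van j w (P \ {p, q}) (Dpq p q φ)

lemma Van_mono {α : Type} [DecidableEq α] (j w : ℕ) : ∀ (P P' : Finset α) (φ : Finset α → ℤ), P' ⊆ P →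
    Van j w P φ → Van j w P' φ := by
  induction j with
  | zero => intro P P' φ h hv W hW; exact hv W (hW.trans h)
  | succ j ih =>
    intro P P' φ h hv p hp q hq hpq
    exact ih _ _ _ (sdiff_subset_sdiff h (le_refl _)) (hv p (h hp) q (h hq) hpq)

lemma wF_insert {α : Type} [DecidableEq α] (w : ℕ) (φ : Finset α → ℤ) (p : α) (X : Finset α) (hp : p ∉ X) :
    wF (w+1) φ (insert p X) = wF (w+1) φ X + ∑ W ∈ X.powersetCard w, φ (insert p W) := by
  unfold wF
  rw [powersetCard_succ_insert hp, sum_union, sum_image]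
  · intro A hA B hB h
    have hA' : p ∉ A := fun h => hp ((mem_powersetCard.1 hA).1 h)
    have hB' : p ∉ B := fun h => hp ((mem_powersetCard.1 hB).1 h)
    rw [← erase_insert hA', ← erase_insert hB', h]
  · rw [disjoint_left]
    intro A hA hA'
    rw [mem_image] at hA'
    obtain ⟨B, _, rfl⟩ := hA'
    exact hp ((mem_powersetCard.1 hA).1 (mem_insert_self _ _))

lemma wF_Dpq {α : Type} [DecidableEq α] (w : ℕ) (φ : Finset α → ℤ) (p q : α) (X : Finset α) (hp : p ∉ X) (hq : q ∉ X) :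
    wF w (Dpq p q φ) X = wF (w+1) φ (insert p X) - wF (w+1) φ (insert q X) := by
  rw [wF_insert w φ p X hp, wF_insert w φ q X hq]
  simp only [wF, Dpq, sum_sub_distrib]
  ring

/-- peeling preserves constant sums (turning them to zero sums) -/
lemma peel_sum {α : Type} [DecidableEq α] (w t : ℕ) (l : ℤ) (φ : Finset α → ℤ) (b P : Finset α) (hbP : Disjoint b P)
    (h : ∀ Z ⊆ P, Z.card = t + 1 → wF (w+1) φ (b ∪ Z) = l) (p q : α) (hp : p ∈ P) (hq : q ∈ P) :
    ∀ Z ⊆ P \ {p, q}, Z.card = t → wF w (Dpq p q φ) (b ∪ Z) = 0 := by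
  intro Z hZ hZc
  have hpZ : p ∉ Z := fun h => (mem_sdiff.1 (hZ h)).2 (by simp)
  have hqZ : q ∉ Z := fun h => (mem_sdiff.1 (hZ h)).2 (by simp)
  have hpb : p ∉ b := fun h => disjoint_left.1 hbP h hp
  have hqb : q ∉ b := fun h => disjoint_left.1 hbP h hq
  have hZP := hZ.trans sdiff_subset
  rw [wF_Dpq w φ p q _ (by simp [hpZ, hpb]) (by simp [hqZ, hqb]), ← union_insert, ← union_insert,
    h _ (insert_subset hp hZP) (by rw [card_insert_of_notMem hpZ, hZc]),
    h _ (insert_subset hq hZP) (by rw [card_insert_of_notMem hqZ, hZc]), sub_self]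

lemma card_sdiff_pair {α : Type} [DecidableEq α] (P : Finset α) (p q : α) : P.card ≤ (P \ {p, q}).card + 2 := by
  have h1 := le_card_sdiff {p, q} P
  have h2 : ({p, q} : Finset α).card ≤ 2 := card_le_two
  omega

lemma claimA {α : Type} [DecidableEq α] (c : ℕ) (b : Finset α) (j : ℕ) : ∀ (P : Finset α) (φ : Finset α → ℤ), Disjoint b P →
    c + 2 * j ≤ P.card → (∀ Z ⊆ P, Z.card = c + j → wF j φ (b ∪ Z) = 0) → Van j 0 P φ := by
  induction j with
  | zero =>
    intro P φ hbP hc h W hW hW0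
    rw [card_eq_zero.1 hW0]
    obtain ⟨Z, hZ, hZc⟩ := exists_subset_card_eq (show c ≤ P.card by omega)
    have := h Z hZ hZc
    simpa [wF] using this
  | succ j ih =>
    intro P φ hbP hc h p hp q hq hpq
    have := card_sdiff_pair P p q
    exact ih _ _ (disjoint_of_subset_right sdiff_subset hbP) (by omega)
      (peel_sum j (c + j) 0 φ b P hbP (fun Z hZ hZc => h Z hZ (by omega)) p q hp hq)

lemma choose_add_le (b c w : ℕ) : (b + c).choose (w+1) ≤ b.choose (w+1) + c * (b + c - 1).choose w := by
  induction c with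
  | zero => simp
  | succ c ih =>
    rw [← add_assoc, Nat.choose_succ_succ]
    have : (b + c - 1).choose w ≤ (b + c).choose w := Nat.choose_le_choose _ (by omega)
    have h2 : c * (b + c - 1).choose w ≤ c * (b + c).choose w := Nat.mul_le_mul_left _ this
    simp only [Nat.add_sub_cancel]
    nlinarith

lemma claimB0 {α : Type} [DecidableEq α] (c w s B : ℕ) (η δ : ℝ) (b P : Finset α) (φ : Finset α → ℤ)
    (hB : ∀ W, |φ W| ≤ B) (hbP : Disjoint b P) (hcP : c ≤ P.card) (hws : w + 1 ≤ s) (hsb : s ≤ b.card)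
    (hsum : ∀ Z ⊆ P, Z.card = c → wF (w+1) φ (b ∪ Z) = 0)
    (hbad : (cnt (b.powersetCard s) (fun V => ¬ Van 1 w (P ∪ V) φ) : ℝ) ≤ η * ((b.powersetCard s).card : ℝ))
    (hδ : ((w + 1 : ℕ) : ℝ) * c ≤ δ * (b.card + c : ℝ)) (hηδ : (B + 1) * (η + δ) < 1) (hη : 0 ≤ η) :
    Van 0 (w+1) P φ := by
  intro W0 hW0 hW0c
  by_contra hγ
  obtain ⟨γ, hγ'⟩ : ∃ γ, γ = φ W0 := ⟨_, rfl⟩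
  rw [← hγ'] at hγ
  obtain ⟨Z, hZ, hZc⟩ := exists_subset_card_eq hcP
  have hz := hsum Z hZ hZc
  have hbZ : (b ∪ Z).card = b.card + c := by
    rw [card_union_of_disjoint (disjoint_of_subset_right hZ hbP), hZc]
  have hgood : ∀ V, Van 1 w (P ∪ V) φ → ∀ W ⊆ V, W.card = w + 1 → φ W = γ := by
    intro V hV W hW hWc
    rw [hγ']
    refine swap_const φ (P ∪ V) w ?_ W (hW.trans subset_union_right) W0 (hW0.trans subset_union_left) hWc hW0c
    intro p hp q hq hpq Z hZ hZc
    have := hV p hp q hq hpq Z hZ hZc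
    exact sub_eq_zero.1 this
  set bw := cnt (b.powersetCard (w+1)) (fun W => φ W ≠ γ) with hbw
  set bv := cnt (b.powersetCard s) (fun V => ¬ Van 1 w (P ∪ V) φ) with hbv
  have hdc : bw * (b.card - (w+1)).choose (s - (w+1)) ≤ bv * s.choose (w+1) := by
    rw [hbw, hbv, cnt_eq, cnt_eq]
    apply card_mul_le_card_mul (fun W V : Finset α => W ⊆ V)
    · intro W hW
      rw [mem_filter, mem_powersetCard] at hW
      have e : ((b \ W).powersetCard (s - (w+1))).card = (b.card - (w+1)).choose (s - (w+1)) := by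
        rw [card_powersetCard, card_sdiff_of_subset hW.1.1, hW.1.2]
      rw [← e]
      apply card_le_card_of_injOn (fun T => T ∪ W)
      · intro T hT
        rw [mem_coe, mem_powersetCard] at hT
        have hd : Disjoint T W := disjoint_of_subset_left hT.1 sdiff_disjoint
        rw [mem_coe, bipartiteAbove, mem_filter, mem_filter, mem_powersetCard]
        refine ⟨⟨⟨union_subset (hT.1.trans sdiff_subset) hW.1.1, ?_⟩, ?_⟩, subset_union_right⟩
        · rw [card_union_of_disjoint hd, hT.2, hW.1.2]; omega
        · intro hv
          exact hW.2 (hgood _ hv W subset_union_right hW.1.2)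
      · intro T hT T' hT' h
        rw [mem_coe, mem_powersetCard] at hT hT'
        have hd : Disjoint T W := disjoint_of_subset_left hT.1 sdiff_disjoint
        have hd' : Disjoint T' W := disjoint_of_subset_left hT'.1 sdiff_disjoint
        simp only at h
        rw [← union_sdiff_cancel_right hd, ← union_sdiff_cancel_right hd', h]
    · intro V hV
      rw [mem_filter, mem_powersetCard] at hV
      rw [← hV.1.2, ← card_powersetCard]
      apply card_le_card
      intro W hW
      rw [bipartiteBelow, mem_filter, mem_filter, mem_powersetCard] at hW
      rw [mem_powersetCard]
      exact ⟨hW.2, hW.1.1.2⟩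
  have hch : b.card.choose s * s.choose (w+1) = b.card.choose (w+1) * (b.card - (w+1)).choose (s - (w+1)) :=
    Nat.choose_mul hws
  have hbwle : (bw : ℝ) ≤ η * b.card.choose (w+1) := by
    rw [card_powersetCard] at hbad
    have hpos : (0:ℝ) < (b.card - (w+1)).choose (s - (w+1)) := by
      exact_mod_cast Nat.choose_pos (by omega)
    have h1 : (bw : ℝ) * (b.card - (w+1)).choose (s - (w+1)) ≤ bv * s.choose (w+1) := by exact_mod_cast hdc
    have h2 : (b.card.choose s : ℝ) * s.choose (w+1) = b.card.choose (w+1) * (b.card - (w+1)).choose (s - (w+1)) := by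
      exact_mod_cast hch
    have h3 : (bv : ℝ) * s.choose (w+1) ≤ η * b.card.choose s * s.choose (w+1) := by gcongr
    refine le_of_mul_le_mul_right ?_ hpos
    calc _ ≤ _ := h1
      _ ≤ _ := h3
      _ = _ := by rw [mul_assoc, h2]; ring
  set T := (b.card + c).choose (w+1) with hT
  have hsubs : b.powersetCard (w+1) ⊆ (b ∪ Z).powersetCard (w+1) := powersetCard_mono subset_union_left
  have hne : cnt ((b ∪ Z).powersetCard (w+1)) (fun W => φ W ≠ γ) ≤ bw + c * (b.card + c - 1).choose w := by
    have e : (b ∪ Z).powersetCard (w+1) = b.powersetCard (w+1) ∪ ((b ∪ Z).powersetCard (w+1) \ b.powersetCard (w+1)) :=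
      (union_sdiff_of_subset hsubs).symm
    have h1 : cnt ((b ∪ Z).powersetCard (w+1)) (fun W => φ W ≠ γ) ≤ bw + ((b ∪ Z).powersetCard (w+1) \ b.powersetCard (w+1)).card := by
      rw [e, hbw, cnt_eq, cnt_eq]
      rw [filter_union]
      refine (card_union_le _ _).trans ?_
      rw [← e]
      exact Nat.add_le_add_left (card_filter_le _ _) _
    rw [card_sdiff_of_subset hsubs, card_powersetCard, card_powersetCard, hbZ] at h1
    have := choose_add_le b.card c w
    omega
  have hTc : c * (b.card + c - 1).choose w ≤ δ * T := by
    have hx : (0:ℝ) < b.card + c := by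
      have : (0:ℝ) < b.card := by exact_mod_cast (by omega : 0 < b.card)
      positivity
    have h1 : (b.card + c) * (b.card + c - 1).choose w = T * (w+1) := by
      have := Nat.add_one_mul_choose_eq (b.card + c - 1) w
      rw [show b.card + c - 1 + 1 = b.card + c by omega] at this
      exact this
    have h1' : ((b.card + c : ℝ)) * (b.card + c - 1).choose w = T * (w+1) := by exact_mod_cast h1
    push_cast at hδ
    have h3 : (T : ℝ) * ((w + 1) * c) ≤ T * (δ * (b.card + c)) := by gcongr
    refine le_of_mul_le_mul_left ?_ hx
    calc (b.card + c : ℝ) * (c * (b.card + c - 1).choose w) = c * ((b.card + c : ℝ) * (b.card + c - 1).choose w) := by ring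
      _ = T * ((w + 1) * c) := by rw [h1']; ring
      _ ≤ _ := h3
      _ = _ := by ring
  have hsumle : (cnt ((b ∪ Z).powersetCard (w+1)) (fun W => φ W = γ) : ℤ) ≤ B * cnt ((b ∪ Z).powersetCard (w+1)) (fun W => φ W ≠ γ) := by
    unfold wF at hz
    rw [← sum_filter_add_sum_filter_not _ (fun W => φ W = γ)] at hz
    have h1 : ∑ W ∈ (b ∪ Z).powersetCard (w+1) with φ W = γ, φ W = cnt ((b ∪ Z).powersetCard (w+1)) (fun W => φ W = γ) * γ := by
      rw [cnt_eq, sum_congr rfl (fun W hW => (mem_filter.1 hW).2)]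
      simp
    have h2 : |∑ W ∈ (b ∪ Z).powersetCard (w+1) with ¬ φ W = γ, φ W| ≤ cnt ((b ∪ Z).powersetCard (w+1)) (fun W => φ W ≠ γ) * B := by
      refine (abs_sum_le_sum_abs _ _).trans ?_
      refine (sum_le_sum (fun W _ => hB W)).trans ?_
      rw [cnt_eq]
      simp
    have h3 : |(cnt ((b ∪ Z).powersetCard (w+1)) (fun W => φ W = γ) : ℤ) * γ| ≤ cnt ((b ∪ Z).powersetCard (w+1)) (fun W => φ W ≠ γ) * B := by
      rw [h1] at hz
      rw [eq_neg_of_add_eq_zero_left hz, abs_neg]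
      exact h2
    rw [abs_mul, Nat.abs_cast] at h3
    have hγ1 : 1 ≤ |γ| := Int.one_le_abs hγ
    nlinarith
  have htot := cnt_add_not ((b ∪ Z).powersetCard (w+1)) (fun W => φ W = γ)
  rw [card_powersetCard, hbZ, ← hT] at htot
  have hTpos : (0:ℝ) < T := by exact_mod_cast Nat.choose_pos (by omega)
  have r1 : (cnt ((b ∪ Z).powersetCard (w+1)) (fun W => φ W = γ) : ℝ) ≤ B * cnt ((b ∪ Z).powersetCard (w+1)) (fun W => φ W ≠ γ) := by
    exact_mod_cast hsumle
  have r2 : (cnt ((b ∪ Z).powersetCard (w+1)) (fun W => φ W = γ) : ℝ) + cnt ((b ∪ Z).powersetCard (w+1)) (fun W => φ W ≠ γ) = T := by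
    exact_mod_cast htot
  have r3 : (cnt ((b ∪ Z).powersetCard (w+1)) (fun W => φ W ≠ γ) : ℝ) ≤ bw + c * (b.card + c - 1).choose w := by
    exact_mod_cast hne
  have r4 : (b.card.choose (w+1) : ℝ) ≤ T := by
    exact_mod_cast Nat.choose_le_choose _ (by omega)
  have r5 : (cnt ((b ∪ Z).powersetCard (w+1)) (fun W => φ W ≠ γ) : ℝ) ≤ (η + δ) * T := by
    have : η * b.card.choose (w+1) ≤ η * T := by gcongr
    linarith
  have : (T:ℝ) ≤ (B + 1) * ((η + δ) * T) := by
    have hB0 : (0:ℝ) ≤ B + 1 := by positivity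
    have := mul_le_mul_of_nonneg_left r5 hB0
    linarith
  nlinarith

lemma claimB {α : Type} [DecidableEq α] (c w s : ℕ) (η δ : ℝ) (hη : 0 ≤ η) (b : Finset α)
    (hws : w + 1 ≤ s) (hsb : s ≤ b.card) (hδ : ((w + 1 : ℕ) : ℝ) * c ≤ δ * (b.card + c : ℝ)) (j : ℕ) :
    ∀ (B : ℕ) (P : Finset α) (φ : Finset α → ℤ), ((B * 2 ^ j : ℕ) + 1) * (η + δ) < 1 → 
    (∀ W, |φ W| ≤ B) → Disjoint b P → c + 2 * j ≤ P.card →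
    (∀ Z ⊆ P, Z.card = c + j → wF (w + 1 + j) φ (b ∪ Z) = 0) →
    (cnt (b.powersetCard s) (fun V => ¬ Van (j+1) w (P ∪ V) φ) : ℝ) ≤ η * ((b.powersetCard s).card : ℝ) →
    Van j (w+1) P φ := by
  induction j with
  | zero =>
    intro B P φ hB1 hB hbP hc h hbad
    exact claimB0 c w s B η δ b P φ hB hbP (by omega) hws hsb h hbad hδ (by simpa using hB1) hη
  | succ j ih =>
    intro B P φ hB1 hB hbP hc h hbad p hp q hq hpq
    have hcs := card_sdiff_pair P p q
    refine ih (2 * B) _ _ ?_ ?_ (disjoint_of_subset_right sdiff_subset hbP) (by omega) ?_ ?_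
    · rw [show 2 * B * 2 ^ j = B * 2 ^ (j+1) by ring]; exact hB1
    · intro W
      unfold Dpq
      refine (abs_sub _ _).trans ?_
      have := hB (insert p W)
      have := hB (insert q W)
      push_cast; linarith
    · exact peel_sum (w + 1 + j) (c + j) 0 φ b P hbP (fun Z hZ hZc => h Z hZ (by omega)) p q hp hq
    · refine le_trans ?_ hbad
      have : cnt (b.powersetCard s) (fun V => ¬ Van (j+1) w (P \ {p, q} ∪ V) (Dpq p q φ)) ≤
          cnt (b.powersetCard s) (fun V => ¬ Van (j+1+1) w (P ∪ V) φ) := by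
        apply cnt_mono
        intro V hV hnv hv
        apply hnv
        have := hv p (mem_union_left _ hp) q (mem_union_left _ hq) hpq
        refine Van_mono _ _ _ _ _ ?_ this
        rw [mem_powersetCard] at hV
        intro x hx
        rw [mem_union, mem_sdiff] at hx
        rw [mem_sdiff, mem_union]
        rcases hx with hx | hx
        · exact ⟨Or.inl hx.1, hx.2⟩
        · refine ⟨Or.inr hx, ?_⟩
          simp only [mem_insert, mem_singleton, not_or]
          exact ⟨fun e => disjoint_left.1 hbP (hV.1 hx) (e ▸ hp), fun e => disjoint_left.1 hbP (hV.1 hx) (e ▸ hq)⟩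
      exact_mod_cast this

lemma act_bdd {n : ℕ} (φ : Finset (Fin n) → ℤ) (B : ℕ) (h : ∀ W, |φ W| ≤ B) (σ) : ∀ W, |act σ φ W| ≤ B :=
  fun W => h _

lemma Slem (r w : ℕ) : ∀ (j : ℕ), r = j + 1 + w → ∀ ε : ℝ, 0 < ε → ∃ θ : ℝ, 0 < θ ∧ ∀ (n k s : ℕ), 4 * k ≤ n →
    ∀ (φ : Finset (Fin n) → ℤ), (∀ W, |φ W| ≤ (1:ℕ)) → ∀ (l : ℤ) (b R N : Finset (Fin n)), Disjoint b R → Disjoint b N →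
    Disjoint R N → R.card = s → N.card = s → b.card + s = k → r ≤ s → (s : ℝ) ≤ θ * k →
    PrE φ (fun ψ => wF r ψ (b ∪ R) = l ∧ ¬ Van (j+1) w (R ∪ N) ψ) ≤ ε := by
  induction w with
  | zero =>
    intro j hr ε hε
    obtain ⟨θ, hθ, hc⟩ := const_lemma r ε hε
    refine ⟨θ, hθ, ?_⟩
    intro n k s hn φ hφ l b R N hbR hbN hRN hR hN hb hrs hs
    refine le_trans (PrE_mono φ _ _ ?_) (hc n k s (by omega) φ l b R N hbR hbN hRN hR hN hb hs)
    intro σ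
    generalize act σ φ = ψ
    rintro ⟨h1, h2⟩
    refine ⟨h1, ?_⟩
    by_contra hnc
    apply h2
    unfold NC at hnc
    push Not at hnc
    intro p hp q hq hpq
    have hbP : Disjoint b (R ∪ N) := disjoint_union_right.2 ⟨hbR, hbN⟩
    have hcs := card_sdiff_pair (R ∪ N) p q
    have hP : (R ∪ N).card = 2 * s := by rw [card_union_of_disjoint hRN]; omega
    refine claimA (s - 1 - j) b j _ _ (disjoint_of_subset_right sdiff_subset hbP) (by omega) ?_
    have := peel_sum j (s - 1) l ψ b (R ∪ N) hbP (fun Z hZ hZc => by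
      have := hnc Z hZ (by omega)
      rw [hr] at this
      exact this) p q hp hq
    intro Z hZ hZc
    exact this Z hZ (by omega)
  | succ w ih =>
    intro j hr ε hε
    set η : ℝ := 1 / (4 * ((2 * 2 ^ j : ℕ) + 1)) with hη
    have hηpos : 0 < η := by positivity
    obtain ⟨θ1, hθ1, hS⟩ := ih (j+1) (by omega) (η * (ε / 2)) (by positivity)
    obtain ⟨θ2, hθ2, hc⟩ := const_lemma r (ε / 2) (by positivity)
    have hrpos : (0:ℝ) < r := by exact_mod_cast (by omega : 0 < r)
    refine ⟨min (min (θ1 / 2) θ2) (min (1/4) (η / (2 * r))), by positivity, ?_⟩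
    intro n k s hn φ hφ l b R N hbR hbN hRN hR hN hb hrs hs
    have hk0 : (0:ℝ) ≤ k := by positivity
    have hs1 : (s:ℝ) ≤ θ1 / 2 * k := hs.trans (by gcongr; exact (min_le_left _ _).trans (min_le_left _ _))
    have hs2 : (s:ℝ) ≤ θ2 * k := hs.trans (by gcongr; exact (min_le_left _ _).trans (min_le_right _ _))
    have hs3 : (s:ℝ) ≤ 1/4 * k := hs.trans (by gcongr; exact (min_le_right _ _).trans (min_le_left _ _))
    have hs4 : (s:ℝ) ≤ η / (2 * r) * k := hs.trans (by gcongr; exact (min_le_right _ _).trans (min_le_right _ _))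
    have hs3' : 4 * s ≤ k := by
      have : (4:ℝ) * s ≤ k := by linarith
      exact_mod_cast this
    have hbP : Disjoint b (R ∪ N) := disjoint_union_right.2 ⟨hbR, hbN⟩
    have hP : (R ∪ N).card = 2 * s := by rw [card_union_of_disjoint hRN]; omega
    obtain ⟨N1, hN1, hN1c⟩ : ∃ N1 : Finset (Fin n), N1 ⊆ (b ∪ (R ∪ N))ᶜ ∧ N1.card = s := by
      apply exists_subset_card_eq
      rw [card_compl, Fintype.card_fin, card_union_of_disjoint hbP]
      omega
    have hN1d : Disjoint (b ∪ (R ∪ N)) N1 := by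
      rw [disjoint_right]; intro x hx; exact mem_compl.1 (hN1 hx)
    rw [disjoint_union_left, disjoint_union_left] at hN1d
    obtain ⟨hN1b, hN1R, hN1N⟩ := hN1d
    have hV : ∀ V ∈ b.powersetCard s, PrE φ (fun ψ => wF r ψ (b ∪ R) = l ∧ ¬ Van (j+1+1) w (R ∪ N ∪ V) ψ) ≤ η * (ε/2) := by
      intro V hV
      rw [mem_powersetCard] at hV
      have hVR : Disjoint V R := disjoint_of_subset_left hV.1 hbR
      have hVN : Disjoint V N := disjoint_of_subset_left hV.1 hbN
      have hVN1 : Disjoint V N1 := disjoint_of_subset_left hV.1 hN1b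
      have hsub : b \ V ⊆ b := sdiff_subset
      have := hS n k (2 * s) hn φ hφ l (b \ V) (R ∪ V) (N ∪ N1)
        (disjoint_union_right.2 ⟨disjoint_of_subset_left hsub hbR, sdiff_disjoint⟩)
        (disjoint_union_right.2 ⟨disjoint_of_subset_left hsub hbN, disjoint_of_subset_left hsub hN1b⟩)
        (disjoint_union_left.2 ⟨disjoint_union_right.2 ⟨hRN, hN1R⟩, disjoint_union_right.2 ⟨hVN, hVN1⟩⟩)
        (by rw [card_union_of_disjoint hVR.symm]; omega)
        (by rw [card_union_of_disjoint hN1N]; omega)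
        (by rw [card_sdiff_of_subset hV.1]; omega) (by omega) (by push_cast; linarith)
      refine le_trans (PrE_mono φ _ _ ?_) this
      intro σ
      generalize act σ φ = ψ
      rintro ⟨h1, h2⟩
      have e : b \ V ∪ (R ∪ V) = b ∪ R := by
        rw [union_comm R V, ← union_assoc, sdiff_union_of_subset hV.1]
      rw [e]
      refine ⟨h1, fun hv => h2 (Van_mono _ _ _ _ _ ?_ hv)⟩
      intro x; simp only [mem_union]; tauto
    have hmk := PrE_markov φ (b.powersetCard s) (powersetCard_nonempty.2 (by omega))
      (fun ψ => wF r ψ (b ∪ R) = l) (fun V ψ => ¬ Van (j+1+1) w (R ∪ N ∪ V) ψ) (η * (ε/2)) η hV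
    have hmk' := le_of_mul_le_mul_left hmk hηpos
    have hcc := hc n k s (by omega) φ l b R N hbR hbN hRN hR hN hb hs2
    refine le_trans (PrE_le_add φ _ _ _ ?_) (le_trans (add_le_add hmk' hcc) (by linarith))
    intro σ
    have hbd := act_bdd φ 1 hφ σ
    generalize act σ φ = ψ at hbd ⊢
    rintro ⟨h1, h2⟩
    by_contra hcon
    push Not at hcon
    obtain ⟨hbad, hnc⟩ := hcon
    have hbad := hbad h1
    have hnc := hnc h1
    unfold NC at hnc
    push Not at hnc
    apply h2
    intro p hp q hq hpq
    have hcs := card_sdiff_pair (R ∪ N) p q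
    refine claimB (s - 1 - j) w s η η hηpos.le b (by omega) (by omega) ?_ j 2 _ _ ?_ ?_
      (disjoint_of_subset_right sdiff_subset hbP) (by omega) ?_ ?_
    · have e1 : ((w + 1 : ℕ) : ℝ) ≤ r := by exact_mod_cast (by omega : w + 1 ≤ r)
      have e2 : ((s - 1 - j : ℕ) : ℝ) ≤ s := by exact_mod_cast (by omega : s - 1 - j ≤ s)
      have e3 : (k : ℝ) / 2 ≤ b.card + ((s - 1 - j : ℕ) : ℝ) := by
        have : k ≤ 2 * (b.card + (s - 1 - j)) := by omega
        have : (k:ℝ) ≤ 2 * (b.card + ((s - 1 - j : ℕ) : ℝ)) := by exact_mod_cast this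
        linarith
      calc ((w + 1 : ℕ) : ℝ) * ((s - 1 - j : ℕ) : ℝ) ≤ r * s := by gcongr
        _ ≤ r * (η / (2 * r) * k) := by gcongr
        _ = η * (k / 2) := by field_simp
        _ ≤ _ := by gcongr
    · rw [hη]
      rw [← two_mul]
      have : (0:ℝ) < (2 * 2 ^ j : ℕ) + 1 := by positivity
      field_simp
      norm_num
    · intro W
      unfold Dpq
      refine (abs_sub _ _).trans ?_
      have := hbd (insert p W)
      have := hbd (insert q W)
      push_cast at *; linarith
    · have := peel_sum (w + 1 + j) (s - 1) l ψ b (R ∪ N) hbP (fun Z hZ hZc => by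
        have := hnc Z hZ (by omega)
        rw [hr, show j + 1 + (w + 1) = w + 1 + j + 1 by ring] at this
        exact this) p q hp hq
      intro Z hZ hZc
      exact this Z hZ (by omega)
    · refine le_trans ?_ hbad.le
      have : cnt (b.powersetCard s) (fun V => ¬ Van (j+1) w ((R ∪ N) \ {p, q} ∪ V) (Dpq p q ψ)) ≤
          cnt (b.powersetCard s) (fun V => ¬ Van (j+1+1) w (R ∪ N ∪ V) ψ) := by
        apply cnt_mono
        intro V hV hnv hv
        apply hnv
        have := hv p (mem_union_left _ hp) q (mem_union_left _ hq) hpq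
        refine Van_mono _ _ _ _ _ ?_ this
        rw [mem_powersetCard] at hV
        intro x hx
        rw [mem_union, mem_sdiff] at hx
        rw [mem_sdiff, mem_union]
        rcases hx with hx | hx
        · exact ⟨Or.inl hx.1, hx.2⟩
        · refine ⟨Or.inr hx, ?_⟩
          simp only [mem_insert, mem_singleton, not_or]
          exact ⟨fun e => disjoint_left.1 hbP (hV.1 hx) (e ▸ hp), fun e => disjoint_left.1 hbP (hV.1 hx) (e ▸ hq)⟩
      exact_mod_cast this

/-- homogeneity on R -/
lemma homog (r : ℕ) (hr : 0 < r) (ε : ℝ) (hε : 0 < ε) : ∃ θ : ℝ, 0 < θ ∧ ∀ (n k s : ℕ), 4 * k ≤ n →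
    ∀ (φ : Finset (Fin n) → ℤ), (∀ W, φ W = 0 ∨ φ W = 1) → ∀ (l : ℤ) (U R : Finset (Fin n)), 
    U.card = k → R ⊆ U → R.card = s → r ≤ s → (s : ℝ) ≤ θ * k →
    PrE φ (fun ψ => wF r ψ U = l ∧ (wF r ψ R ≠ 0 ∧ wF r ψ R ≠ s.choose r)) ≤ ε := by
  obtain ⟨w, rfl⟩ : ∃ w, r = 0 + 1 + w := ⟨r - 1, by omega⟩
  obtain ⟨θ, hθ, hS⟩ := Slem (0 + 1 + w) w 0 rfl ε hε
  refine ⟨θ, hθ, ?_⟩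
  intro n k s hn φ hφ l U R hU hRU hR hrs hs
  have hsk : s ≤ k := by rw [← hR, ← hU]; exact card_le_card hRU
  obtain ⟨N, hN, hNc⟩ : ∃ N : Finset (Fin n), N ⊆ Uᶜ ∧ N.card = s := by
    apply exists_subset_card_eq
    rw [card_compl, Fintype.card_fin]
    omega
  have hUN : Disjoint U N := by
    rw [disjoint_right]; intro x hx; exact mem_compl.1 (hN hx)
  have := hS n k s hn φ (by intro W; rcases hφ W with h | h <;> rw [h] <;> simp) l (U \ R) R N
    sdiff_disjoint (disjoint_of_subset_left sdiff_subset hUN) (disjoint_of_subset_left hRU hUN) hR hNc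
    (by rw [card_sdiff_of_subset hRU]; omega) hrs hs
  rw [sdiff_union_of_subset hRU] at this
  refine le_trans (PrE_mono φ _ _ ?_) this
  intro σ
  have h01 : ∀ W, act σ φ W = 0 ∨ act σ φ W = 1 := fun W => hφ _
  generalize act σ φ = ψ at h01 ⊢
  rintro ⟨h1, h2, h3⟩
  refine ⟨h1, fun hv => ?_⟩
  have hconst := swap_const ψ (R ∪ N) w (by
    intro p hp q hq hpq Z hZ hZc
    exact sub_eq_zero.1 (hv p hp q hq hpq Z hZ hZc))
  obtain ⟨W0, hW0, hW0c⟩ := exists_subset_card_eq (show w + 1 ≤ R.card by omega)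
  have hW : ∀ W ∈ R.powersetCard (0 + 1 + w), ψ W = ψ W0 := by
    intro W hW
    rw [mem_powersetCard] at hW
    exact hconst W (hW.1.trans subset_union_left) W0 (hW0.trans subset_union_left) (by omega) hW0c
  have e : wF (0 + 1 + w) ψ R = s.choose (0 + 1 + w) * ψ W0 := by
    unfold wF
    rw [sum_congr rfl hW]
    simp [hR]
  rcases h01 W0 with h | h
  · rw [h, mul_zero] at e; exact h2 e
  · rw [h, mul_one] at e; exact h3 e

lemma card_supersets {α : Type} [DecidableEq α] (U e : Finset α) (s : ℕ) (he : e ⊆ U) (hs : e.card ≤ s) :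
    cnt (U.powersetCard s) (fun R => e ⊆ R) = (U.card - e.card).choose (s - e.card) := by
  rw [cnt_eq, ← card_sdiff_of_subset he, ← card_powersetCard]
  symm
  apply card_bij (fun T _ => T ∪ e)
  · intro T hT
    rw [mem_powersetCard] at hT
    rw [mem_filter, mem_powersetCard]
    refine ⟨⟨union_subset (hT.1.trans sdiff_subset) he, ?_⟩, subset_union_right⟩
    rw [card_union_of_disjoint (disjoint_of_subset_left hT.1 sdiff_disjoint)]; omega
  · intro T hT T' hT' h
    rw [mem_powersetCard] at hT hT'
    have hd : Disjoint T e := disjoint_of_subset_left hT.1 sdiff_disjoint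
    have hd' : Disjoint T' e := disjoint_of_subset_left hT'.1 sdiff_disjoint
    rw [← union_sdiff_cancel_right hd, ← union_sdiff_cancel_right hd', h]
  · intro R hR
    rw [mem_filter, mem_powersetCard] at hR
    refine ⟨R \ e, ?_, sdiff_union_of_subset hR.2⟩
    rw [mem_powersetCard]
    exact ⟨sdiff_subset_sdiff hR.1.1 (le_refl _), by rw [card_sdiff_of_subset hR.2]; omega⟩

lemma choose_logconc (D x y : ℕ) (h : x ≤ y) : x.choose D * (y+1).choose D ≤ (x+1).choose D * y.choose D := by
  rcases lt_or_ge x D with hx | hx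
  · rw [Nat.choose_eq_zero_of_lt hx]; simp
  obtain ⟨a, rfl⟩ := Nat.exists_eq_add_of_le hx
  obtain ⟨c, rfl⟩ := Nat.exists_eq_add_of_le h
  have h1 := Nat.choose_mul_succ_eq (D + a) D
  have h2 := Nat.choose_mul_succ_eq (D + a + c) D
  rw [show D + a + 1 - D = a + 1 by omega] at h1
  rw [show D + a + c + 1 - D = a + c + 1 by omega] at h2
  have hpos : 0 < (a + 1) * (a + c + 1) := by positivity
  refine le_of_mul_le_mul_left ?_ hpos
  calc _ = (a + 1) * (D + a).choose D * ((D + a + c + 1).choose D * (a + c + 1)) := by ring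
    _ = (D + a).choose D * (D + a + c).choose D * ((a + 1) * (D + a + c + 1)) := by rw [← h2]; ring
    _ ≤ (D + a).choose D * (D + a + c).choose D * ((a + c + 1) * (D + a + 1)) := by
        apply Nat.mul_le_mul_left; nlinarith [Nat.zero_le (D * c)]
    _ = (D + a).choose D * (D + a + 1) * ((D + a + c).choose D * (a + c + 1)) := by ring
    _ = _ := by rw [h1]; ring

lemma choose_logconc' (D x y t : ℕ) (h : x ≤ y) : x.choose D * (y+t).choose D ≤ (x+t).choose D * y.choose D := by
  induction t with
  | zero => simp
  | succ t ih =>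
    rcases Nat.eq_zero_or_pos ((y + t).choose D) with h0 | h0
    · have : (x.choose D) = 0 := by
        rw [Nat.choose_eq_zero_iff] at h0 ⊢; omega
      rw [this]; simp
    have h1 := choose_logconc D (x+t) (y+t) (by omega)
    refine le_of_mul_le_mul_left ?_ h0
    calc (y + t).choose D * (x.choose D * (y + (t + 1)).choose D)
         = (x.choose D * (y + t).choose D) * (y + t + 1).choose D := by rw [← add_assoc]; ring
      _ ≤ ((x+t).choose D * y.choose D) * (y + t + 1).choose D := Nat.mul_le_mul_right _ ih
      _ = ((x+t).choose D * (y + t + 1).choose D) * y.choose D := by ring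
      _ ≤ ((x+t+1).choose D * (y + t).choose D) * y.choose D := Nat.mul_le_mul_right _ h1
      _ = _ := by rw [← add_assoc]; ring

lemma choose_C2 (k s r : ℕ) (hrs : 2 * r ≤ s) (hsk : s ≤ k) :
    (k - 2 * r).choose (s - 2 * r) * k.choose s ≤ (k - r).choose (s - r) * (k - r).choose (s - r) := by
  have h := choose_logconc' (k - s) (k - 2 * r) (k - r) r (by omega)
  rw [show k - 2 * r + r = k - r by omega, show k - r + r = k by omega] at h
  rw [← Nat.choose_symm hsk, ← Nat.choose_symm (show s - r ≤ k - r by omega),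
    ← Nat.choose_symm (show s - 2 * r ≤ k - 2 * r by omega),
    show k - 2 * r - (s - 2 * r) = k - s by omega, show k - r - (s - r) = k - s by omega]
  exact h

lemma second_moment {α : Type} [DecidableEq α] (U : Finset α) (Ed : Finset (Finset α)) (k s r : ℕ) (β : ℝ)
    (hEd : ∀ e ∈ Ed, e ⊆ U ∧ e.card = r) (hU : U.card = k) (hrs : 2 * r ≤ s) (hsk : s ≤ k) (hβ0 : 0 ≤ β)
    (hdeg : ∀ v ∈ U, (cnt Ed (fun e => v ∈ e) : ℝ) ≤ β * Ed.card)
    (hβ : 4 * r * β * k.choose s ≤ (k - r).choose (s - r)) (h0 : 0 < Ed.card) (h2 : 2 * Ed.card ≤ k.choose r) :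
    (k.choose s : ℝ) ≤ 4 * cnt (U.powersetCard s) (fun R => cnt Ed (fun e => e ⊆ R) ≠ 0 ∧ cnt Ed (fun e => e ⊆ R) ≠ s.choose r) := by
  set x : Finset α → ℕ := fun R => cnt Ed (fun e => e ⊆ R) with hx
  set I := U.powersetCard s with hI
  set C1 := (k - r).choose (s - r) with hC1
  set C2 := (k - 2 * r).choose (s - 2 * r) with hC2
  have hIc : I.card = k.choose s := by rw [card_powersetCard, hU]
  have hsup : ∀ e ∈ Ed, cnt I (fun R => e ⊆ R) = C1 := by
    intro e he
    rw [card_supersets U e s (hEd e he).1 (by rw [(hEd e he).2]; omega), hU, (hEd e he).2]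
  have S1 : ∑ R ∈ I, x R = Ed.card * C1 := by
    simp only [hx, cnt_eq_sum]
    rw [sum_comm]
    simp only [← cnt_eq_sum]
    rw [sum_congr rfl hsup]; simp
  have S2a : ∑ R ∈ I, x R * x R = ∑ e ∈ Ed, ∑ e' ∈ Ed, cnt I (fun R => e ∪ e' ⊆ R) := by
    have : ∀ R, x R * x R = ∑ e ∈ Ed, ∑ e' ∈ Ed, if e ∪ e' ⊆ R then 1 else 0 := by
      intro R
      simp only [hx, cnt_eq_sum, sum_mul_sum]
      refine sum_congr rfl fun e _ => sum_congr rfl fun e' _ => ?_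
      simp only [union_subset_iff]
      by_cases h1 : e ⊆ R <;> by_cases h2 : e' ⊆ R <;> simp [h1, h2]
    simp only [this]
    rw [sum_comm]
    refine sum_congr rfl fun e _ => ?_
    rw [sum_comm]
    refine sum_congr rfl fun e' _ => ?_
    rw [cnt_eq, card_filter]
  have S2b : ∀ e ∈ Ed, ∀ e' ∈ Ed, cnt I (fun R => e ∪ e' ⊆ R) ≤ C2 + C1 * ∑ v ∈ e, if v ∈ e' then 1 else 0 := by
    intro e he e' he'
    by_cases hd : Disjoint e e'
    · have hc : (e ∪ e').card = 2 * r := by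
        rw [card_union_of_disjoint hd, (hEd e he).2, (hEd e' he').2]; ring
      rw [card_supersets U (e ∪ e') s (union_subset (hEd e he).1 (hEd e' he').1) (by omega), hc, hU]
      omega
    · rw [not_disjoint_iff] at hd
      obtain ⟨v, hv, hv'⟩ := hd
      have h1 : cnt I (fun R => e ∪ e' ⊆ R) ≤ C1 := by
        rw [← hsup e he]
        exact cnt_mono _ _ _ fun R _ h => subset_union_left.trans h
      have h2 : 1 ≤ ∑ v ∈ e, if v ∈ e' then 1 else 0 := by
        calc 1 = if v ∈ e' then 1 else 0 := by simp [hv']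
          _ ≤ _ := single_le_sum (f := fun v => if v ∈ e' then 1 else 0) (fun _ _ => by positivity) hv
      nlinarith
  have S2 : ((∑ R ∈ I, x R * x R : ℕ) : ℝ) ≤ (Ed.card : ℝ) ^ 2 * C2 + r * β * Ed.card ^ 2 * C1 := by
    have h1 : ∑ R ∈ I, x R * x R ≤ ∑ e ∈ Ed, (Ed.card * C2 + C1 * ∑ v ∈ e, cnt Ed (fun e' => v ∈ e')) := by
      rw [S2a]
      refine sum_le_sum fun e he => ?_
      refine (sum_le_sum fun e' he' => S2b e he e' he').trans (le_of_eq ?_)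
      rw [sum_add_distrib, ← mul_sum, sum_comm]
      rw [sum_const, smul_eq_mul]
      congr 2
      refine sum_congr rfl fun v _ => ?_
      rw [cnt_eq, card_filter]
    have h1' : ((∑ R ∈ I, x R * x R : ℕ) : ℝ) ≤ ∑ e ∈ Ed, ((Ed.card : ℝ) * C2 + C1 * ∑ v ∈ e, (cnt Ed (fun e' => v ∈ e') : ℝ)) := by
      exact_mod_cast h1
    refine h1'.trans ?_
    have h3 : ∀ e ∈ Ed, ((Ed.card : ℝ) * C2 + C1 * ∑ v ∈ e, (cnt Ed (fun e' => v ∈ e') : ℝ)) ≤ Ed.card * C2 + C1 * (r * (β * Ed.card)) := by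
      intro e he
      gcongr
      refine (sum_le_sum fun v hv => hdeg v ((hEd e he).1 hv)).trans (le_of_eq ?_)
      simp [(hEd e he).2]
    refine (sum_le_sum h3).trans (le_of_eq ?_)
    simp; ring
  set p := cnt I (fun R => x R ≠ 0) with hp
  have CS : (∑ R ∈ I, x R) ^ 2 ≤ p * ∑ R ∈ I, x R * x R := by
    have e1 : ∑ R ∈ I, x R = ∑ R ∈ I.filter (fun R => x R ≠ 0), x R := by rw [sum_filter_ne_zero]
    have e2 : ∑ R ∈ I.filter (fun R => x R ≠ 0), x R * x R ≤ ∑ R ∈ I, x R * x R :=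
      sum_le_sum_of_subset (filter_subset _ _)
    have := sq_sum_le_card_mul_sum_sq (s := I.filter (fun R => x R ≠ 0)) (f := x)
    rw [e1, hp, cnt_eq]
    refine this.trans ?_
    apply Nat.mul_le_mul_left
    simpa [pow_two] using e2
  set q := cnt I (fun R => x R = s.choose r) with hq
  have hM : q * s.choose r ≤ Ed.card * C1 := by
    rw [← S1, hq, cnt_eq, ← smul_eq_mul, ← sum_const]
    refine le_trans (le_of_eq ?_) (sum_le_sum_of_subset (filter_subset (fun R => x R = s.choose r) _))
    exact sum_congr rfl fun R hR => (mem_filter.1 hR).2.symm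
  have hch : k.choose s * s.choose r = k.choose r * C1 := Nat.choose_mul (by omega)
  have hC2' := choose_C2 k s r hrs hsk
  rw [← hC2, ← hC1] at hC2'
  have hfin : p ≤ cnt I (fun R => x R ≠ 0 ∧ x R ≠ s.choose r) + q := by
    have : cnt I (fun R => x R ≠ 0) ≤ cnt I (fun R => (x R ≠ 0 ∧ x R ≠ s.choose r) ∨ x R = s.choose r) :=
      cnt_mono _ _ _ fun R _ h => by tauto
    refine this.trans ?_
    rw [cnt_eq, cnt_eq, hq, cnt_eq, filter_or]
    exact card_union_le _ _
  have hC1pos : (0:ℝ) < C1 := by exact_mod_cast Nat.choose_pos (by omega)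
  have hTpos : (0:ℝ) < k.choose s := by exact_mod_cast Nat.choose_pos hsk
  have hspos : (0:ℝ) < s.choose r := by exact_mod_cast Nat.choose_pos (by omega)
  have hEpos : (0:ℝ) < Ed.card := by exact_mod_cast h0
  set T := k.choose s with hT
  have hq2 : (q : ℝ) ≤ T / 2 := by
    have a1 : (q : ℝ) * s.choose r ≤ Ed.card * C1 := by exact_mod_cast hM
    have a2 : (2 : ℝ) * Ed.card ≤ k.choose r := by exact_mod_cast h2
    have a3 : (T : ℝ) * s.choose r = k.choose r * C1 := by exact_mod_cast hch
    refine le_of_mul_le_mul_right ?_ hspos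
    nlinarith
  have hp2 : (4 / 5 : ℝ) * T ≤ p := by
    have a1 : ((Ed.card : ℝ) * C1) ^ 2 ≤ p * ((Ed.card : ℝ) ^ 2 * C2 + r * β * Ed.card ^ 2 * C1) := by
      have : ((∑ R ∈ I, x R : ℕ) : ℝ) ^ 2 ≤ p * ((∑ R ∈ I, x R * x R : ℕ) : ℝ) := by exact_mod_cast CS
      rw [S1] at this
      push_cast at this
      refine this.trans ?_
      have S2' := S2
      push_cast at S2'
      gcongr
    have a2 : (C1 : ℝ) ^ 2 ≤ p * (C2 + r * β * C1) := by
      have : (Ed.card : ℝ) ^ 2 * C1 ^ 2 ≤ Ed.card ^ 2 * (p * (C2 + r * β * C1)) := by linarith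
      exact le_of_mul_le_mul_left this (by positivity)
    have a3 : (C2 : ℝ) * T ≤ C1 * C1 := by exact_mod_cast hC2'
    have a4 : (C1:ℝ) ^ 2 * T ≤ p * (5 / 4 * C1 ^ 2) := by
      calc (C1:ℝ) ^ 2 * T ≤ p * (C2 + r * β * C1) * T := by gcongr
        _ = p * (C2 * T + (r * β * T) * C1) := by ring
        _ ≤ p * (C1 * C1 + (C1 / 4) * C1) := by gcongr; linarith
        _ = _ := by ring
    have a5 : (C1:ℝ)^2 * T ≤ C1^2 * (p * (5/4)) := by linarith
    have := le_of_mul_le_mul_left a5 (by positivity)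
    linarith
  have hfin' : (p : ℝ) ≤ cnt I (fun R => x R ≠ 0 ∧ x R ≠ s.choose r) + q := by exact_mod_cast hfin
  linarith

/-- contribution of `v` to the weight of `X` -/
def ctr {α : Type} [DecidableEq α] (r : ℕ) (ψ : Finset α → ℤ) (v : α) (X : Finset α) : ℤ :=
  wF r ψ X - wF r ψ (X.erase v)

section
variable {α : Type} [DecidableEq α]

lemma ctr_eq (r : ℕ) (ψ : Finset α → ℤ) (v : α) (X : Finset α) :
    ctr r ψ v X = ∑ W ∈ X.powersetCard r, if v ∈ W then ψ W else 0 := by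
  unfold ctr wF
  have : (X.erase v).powersetCard r = (X.powersetCard r).filter (fun W => ¬ v ∈ W) := by
    ext W
    simp only [mem_powersetCard, mem_filter, subset_erase]
    tauto
  rw [this, ← sum_filter_add_sum_filter_not (X.powersetCard r) (fun W => v ∈ W) ψ, sum_filter, sum_filter]
  ring

lemma ctr_sum (r : ℕ) (ψ : Finset α → ℤ) (X : Finset α) :
    ∑ v ∈ X, ctr r ψ v X = r * wF r ψ X := by
  simp only [ctr_eq]
  rw [sum_comm]
  unfold wF
  rw [mul_sum]
  refine sum_congr rfl fun W hW => ?_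
  rw [mem_powersetCard] at hW
  rw [← sum_filter, sum_const, filter_mem_eq_inter, inter_eq_right.2 hW.1, hW.2]
  simp

lemma wF_nonneg (r : ℕ) (ψ : Finset α → ℤ) (hψ : ∀ W, 0 ≤ ψ W) (X : Finset α) : 0 ≤ wF r ψ X :=
  sum_nonneg fun W _ => hψ W

lemma wF_mono (r : ℕ) (ψ : Finset α → ℤ) (hψ : ∀ W, 0 ≤ ψ W) (X Y : Finset α) (h : X ⊆ Y) :
    wF r ψ X ≤ wF r ψ Y :=
  sum_le_sum_of_subset_of_nonneg (powersetCard_mono h) fun W _ _ => hψ W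

lemma ctr_nonneg (r : ℕ) (ψ : Finset α → ℤ) (hψ : ∀ W, 0 ≤ ψ W) (v : α) (X : Finset α) : 0 ≤ ctr r ψ v X := by
  have := wF_mono r ψ hψ _ _ (erase_subset v X)
  unfold ctr; omega

lemma ctr_mono (r : ℕ) (ψ : Finset α → ℤ) (hψ : ∀ W, 0 ≤ ψ W) (v : α) (X Y : Finset α) (h : X ⊆ Y) :
    ctr r ψ v X ≤ ctr r ψ v Y := by
  rw [ctr_eq, ctr_eq]
  refine sum_le_sum_of_subset_of_nonneg (powersetCard_mono h) fun W _ _ => ?_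
  split_ifs
  · exact hψ W
  · rfl

lemma wF_sdiff (r : ℕ) (ψ : Finset α → ℤ) (hψ : ∀ W, 0 ≤ ψ W) (X D : Finset α) :
    wF r ψ X - ∑ v ∈ D, ctr r ψ v X ≤ wF r ψ (X \ D) := by
  induction D using Finset.induction_on with
  | empty => simp
  | insert a D ha ih =>
    rw [sum_insert ha]
    have h1 : X \ insert a D = (X \ D).erase a := by
      ext x; simp only [mem_sdiff, mem_insert, mem_erase]; tauto
    have h2 := ctr_mono r ψ hψ a (X \ D) X sdiff_subset
    have h3 : ctr r ψ a (X \ D) = wF r ψ (X \ D) - wF r ψ ((X \ D).erase a) := rfl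
    rw [h1]; omega

lemma ctr_act (r : ℕ) (ψ : Finset α → ℤ) (τ : Equiv.Perm α) (v : α) (X : Finset α) :
    ctr r (act τ ψ) v X = ctr r ψ (τ v) (X.map τ.toEmbedding) := by
  unfold ctr
  rw [wF_act, wF_act, map_erase]; rfl

lemma act_01 (ψ : Finset α → ℤ) (hψ : ∀ W, ψ W = 0 ∨ ψ W = 1) (τ : Equiv.Perm α) (W : Finset α) :
    act τ ψ W = 0 ∨ act τ ψ W = 1 := hψ _

lemma wF_01 (r : ℕ) (ψ : Finset α → ℤ) (hψ : ∀ W, ψ W = 0 ∨ ψ W = 1) (X R : Finset α) (h : R ⊆ X) :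
    wF r ψ R = cnt ((X.powersetCard r).filter (fun W => ψ W = 1)) (fun e => e ⊆ R) := by
  rw [cnt_eq, filter_filter, card_filter]
  unfold wF
  push_cast
  have : R.powersetCard r = (X.powersetCard r).filter (fun W => W ⊆ R) := by
    ext W; simp only [mem_powersetCard, mem_filter]
    exact ⟨fun hh => ⟨⟨hh.1.trans h, hh.2⟩, hh.1⟩, fun hh => ⟨hh.2, hh.1.2⟩⟩
  rw [this, sum_filter]
  refine sum_congr rfl fun W _ => ?_
  rcases hψ W with h | h <;> simp [h]

lemma ctr_01 (r : ℕ) (ψ : Finset α → ℤ) (hψ : ∀ W, ψ W = 0 ∨ ψ W = 1) (X : Finset α) (v : α) :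
    ctr r ψ v X = cnt ((X.powersetCard r).filter (fun W => ψ W = 1)) (fun e => v ∈ e) := by
  rw [cnt_eq, filter_filter, card_filter, ctr_eq]
  push_cast
  refine sum_congr rfl fun W _ => ?_
  rcases hψ W with h | h <;> simp [h]

end

lemma choose_ratio (k s r : ℕ) (θ : ℝ) (hθ : 0 < θ) (hs : θ * k ≤ s + 1) (hk : 2 * r ≤ θ * k) (hrs : r ≤ s) :
    (θ / 2) ^ r * k.choose r ≤ s.choose r := by
  have h1 : ((s + 1 - r : ℕ) : ℝ) ^ r ≤ s.descFactorial r := by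
    exact_mod_cast Nat.pow_sub_le_descFactorial s r
  have h2 : (k.descFactorial r : ℝ) ≤ (k:ℝ) ^ r := by exact_mod_cast Nat.descFactorial_le_pow k r
  rw [Nat.descFactorial_eq_factorial_mul_choose] at h1 h2
  push_cast at h1 h2
  have h3 : θ / 2 * k ≤ ((s + 1 - r : ℕ) : ℝ) := by
    rw [Nat.cast_sub (by omega)]; push_cast; linarith
  have hf : (0:ℝ) < r.factorial := by exact_mod_cast Nat.factorial_pos r
  refine le_of_mul_le_mul_left ?_ hf
  calc (r.factorial : ℝ) * ((θ / 2) ^ r * k.choose r) = (θ / 2) ^ r * (r.factorial * k.choose r) := by ring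
    _ ≤ (θ / 2) ^ r * k ^ r := by gcongr
    _ = (θ / 2 * k) ^ r := by rw [mul_pow]
    _ ≤ ((s + 1 - r : ℕ) : ℝ) ^ r := by gcongr
    _ ≤ _ := h1

lemma heavy_exists (r : ℕ) (hr : 0 < r) (ε : ℝ) (hε : 0 < ε) : ∃ β : ℝ, 0 < β ∧ ∃ K : ℕ, ∀ k, K ≤ k → ∀ n, 4 * k ≤ n →
    ∀ (φ : Finset (Fin n) → ℤ), (∀ W, φ W = 0 ∨ φ W = 1) → ∀ (l : ℕ) (U : Finset (Fin n)),
    0 < l → 2 * l ≤ k.choose r → U.card = k →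
    PrE φ (fun ψ => wF r ψ U = l ∧ ∀ v ∈ U, (ctr r ψ v U : ℝ) < β * l) ≤ ε := by
  obtain ⟨θ', hθ', H⟩ := homog r hr (ε / 4) (by positivity)
  set θ := min θ' 1 with hθd
  have hθ : 0 < θ := lt_min hθ' one_pos
  have hr' : (0:ℝ) < r := by exact_mod_cast hr
  refine ⟨(θ / 2) ^ r / (4 * r), by positivity, ⌈(2 * r + 1) / θ⌉₊, ?_⟩
  intro k hk n hn φ hφ l U hl h2l hU
  have hk' : 2 * r + 1 ≤ θ * k := by
    have := Nat.ceil_le.1 hk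
    rw [div_le_iff₀ hθ] at this
    linarith
  set s := ⌊θ * k⌋₊ with hs
  have hs1 : (s : ℝ) ≤ θ * k := Nat.floor_le (by positivity)
  have hs2 : θ * k ≤ s + 1 := (Nat.lt_floor_add_one _).le
  have hrs : 2 * r ≤ s := by
    have : (2 * r : ℝ) ≤ s := by linarith
    exact_mod_cast this
  have hsk : s ≤ k := by
    have : (s:ℝ) ≤ k := hs1.trans (by nlinarith [min_le_right θ' 1, (Nat.cast_nonneg k : (0:ℝ) ≤ k)])
    exact_mod_cast this
  have hst' : (s : ℝ) ≤ θ' * k := hs1.trans (by gcongr; exact min_le_left _ _)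
  have hI : (U.powersetCard s).card = k.choose s := by rw [card_powersetCard, hU]
  have hIp : (0:ℝ) < k.choose s := by exact_mod_cast Nat.choose_pos hsk
  have hm := PrE_markov φ (U.powersetCard s) (card_pos.1 (by rw [hI]; exact Nat.choose_pos hsk))
    (fun ψ => wF r ψ U = l) (fun R ψ => wF r ψ R ≠ 0 ∧ wF r ψ R ≠ s.choose r) (ε / 4) (1 / 4) (by
      intro R hR
      rw [mem_powersetCard] at hR
      exact H n k s hn φ hφ l U R hU hR.1 hR.2 (by omega) hst')
  suffices hsuff : PrE φ (fun ψ => wF r ψ U = l ∧ ∀ v ∈ U, (ctr r ψ v U : ℝ) < (θ / 2) ^ r / (4 * r) * l) ≤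
      PrE φ (fun ψ => wF r ψ U = l ∧ (1 / 4 : ℝ) * (U.powersetCard s).card ≤
        cnt (U.powersetCard s) (fun R => wF r ψ R ≠ 0 ∧ wF r ψ R ≠ s.choose r)) by linarith
  apply PrE_mono
  rintro σ ⟨h1, h2⟩
  refine ⟨h1, ?_⟩
  have h01 := act_01 φ hφ σ
  set ψ := act σ φ with hψ
  set Ed := (U.powersetCard r).filter (fun W => ψ W = 1) with hEd
  have hcard : Ed.card = l := by
    have := wF_01 r ψ h01 U U (subset_refl _)
    rw [h1, ← hEd, cnt_eq, filter_true_of_mem] at this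
    · exact_mod_cast this.symm
    · intro e he; rw [hEd, mem_filter, mem_powersetCard] at he; exact he.1.1
  have hEdU : ∀ e ∈ Ed, e ⊆ U ∧ e.card = r := by
    intro e he; rw [hEd, mem_filter, mem_powersetCard] at he; exact he.1
  have hsm := second_moment U Ed k s r ((θ / 2) ^ r / (4 * r)) hEdU hU hrs hsk (by positivity)
    (by
      intro v hv
      have := h2 v hv
      rw [ctr_01 r ψ h01 U v, ← hEd] at this
      rw [hcard]
      exact_mod_cast this.le)
    (by
      have e1 : 4 * (r:ℝ) * ((θ / 2) ^ r / (4 * r)) = (θ / 2) ^ r := by field_simp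
      rw [e1]
      have e2 : (k.choose s : ℝ) * s.choose r = k.choose r * (k - r).choose (s - r) := by
        exact_mod_cast Nat.choose_mul (by omega)
      have e3 := choose_ratio k s r θ hθ hs2 (by linarith) (by omega)
      have e4 : (0:ℝ) < k.choose r := by exact_mod_cast Nat.choose_pos (by omega)
      refine le_of_mul_le_mul_left ?_ e4
      rw [← e2]
      calc _ = (k.choose s : ℝ) * ((θ / 2) ^ r * k.choose r) := by ring
        _ ≤ _ := by gcongr)
    (by omega) (by omega)
  rw [hI]
  have hc : cnt (U.powersetCard s) (fun R => wF r ψ R ≠ 0 ∧ wF r ψ R ≠ s.choose r) =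
      cnt (U.powersetCard s) (fun R => cnt Ed (fun e => e ⊆ R) ≠ 0 ∧ cnt Ed (fun e => e ⊆ R) ≠ s.choose r) := by
    apply cnt_congr
    intro R hR
    rw [mem_powersetCard] at hR
    rw [wF_01 r ψ h01 U R hR.1, ← hEd]
    norm_cast
  rw [hc]
  linarith

lemma PrE_union {α : Type} [Fintype α] [DecidableEq α] (φ : Finset α → ℤ) {ι : Type*} (I : Finset ι)
    (Q : (Finset α → ℤ) → Prop) (Q' : ι → (Finset α → ℤ) → Prop)
    (h : ∀ σ, Q (act σ φ) → ∃ i ∈ I, Q' i (act σ φ)) : PrE φ Q ≤ ∑ i ∈ I, PrE φ (Q' i) := by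
  have h1 := PrE_count φ ({()} : Finset Unit) I (fun _ ψ => Q ψ) Q' 1 (by
    intro σ
    rw [cnt_eq_sum, sum_singleton]
    split_ifs with hA
    · obtain ⟨i, hi, hq⟩ := h σ hA
      have : 0 < cnt I (fun i => Q' i (act σ φ)) := by
        unfold cnt
        exact card_pos.2 ⟨i, mem_filter.2 ⟨hi, hq⟩⟩
      have : (1:ℝ) ≤ cnt I (fun i => Q' i (act σ φ)) := by exact_mod_cast this
      simpa using this
    · simp)
  simpa using h1

lemma choose_decay (k s M : ℕ) (hsk : s ≤ k) (hM : M ≤ k) :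
    (k - M).choose s * k ^ M ≤ k.choose s * (k - s) ^ M := by
  induction M with
  | zero => simp
  | succ M ih =>
    have ih := ih (by omega)
    obtain ⟨q, hq⟩ : ∃ q, k - M = q + 1 := ⟨k - M - 1, by omega⟩
    have e : k - (M + 1) = q := by omega
    rw [e]
    rw [hq] at ih
    have h1 := Nat.choose_mul_succ_eq q s
    rcases lt_or_ge q s with hlt | hge
    · rw [Nat.choose_eq_zero_of_lt hlt]; simp
    have h2 : (q + 1 - s) * k ≤ (q + 1) * (k - s) := by
      zify [show s ≤ q + 1 by omega, hsk]
      have : (q:ℤ) + 1 ≤ k := by omega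
      nlinarith
    refine le_of_mul_le_mul_right ?_ (show 0 < q + 1 by omega)
    calc q.choose s * k ^ (M + 1) * (q + 1) = (q.choose s * (q + 1)) * k ^ (M + 1) := by ring
      _ = ((q + 1).choose s * k ^ M) * ((q + 1 - s) * k) := by rw [h1]; ring
      _ ≤ (k.choose s * (k - s) ^ M) * ((q + 1) * (k - s)) := Nat.mul_le_mul ih h2
      _ = _ := by ring

lemma pair_count {α : Type} [DecidableEq α] (r : ℕ) (ψ : Finset α → ℤ) (hψ : ∀ W, 0 ≤ ψ W) (z : Finset α) (l : ℕ)
    (hl : 0 < l) (a : ℝ) (ha : 0 < a) :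
    (cnt z.offDiag (fun p => wF r ψ (z.erase p.2) = l ∧ wF r ψ (z.erase p.1) = l ∧
      a * l ≤ ctr r ψ p.1 (z.erase p.2)) : ℝ) ≤ (r * (1 + 1 / a)) ^ 2 := by
  set H := z.filter (fun i => wF r ψ (z.erase i) = l ∧ a * l ≤ ctr r ψ i z) with hH
  have h1 : cnt z.offDiag (fun p => wF r ψ (z.erase p.2) = l ∧ wF r ψ (z.erase p.1) = l ∧
      a * l ≤ ctr r ψ p.1 (z.erase p.2)) ≤ (H ×ˢ H).card := by
    unfold cnt
    apply card_le_card
    rintro ⟨i, j⟩ hp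
    simp only [mem_filter, mem_offDiag] at hp
    obtain ⟨⟨hi, hj, hij⟩, h1, h2, h3⟩ := hp
    have h4 : (ctr r ψ i (z.erase j) : ℝ) ≤ ctr r ψ i z := by
      exact_mod_cast ctr_mono r ψ hψ i _ _ (erase_subset j z)
    have h5 : ctr r ψ j z = ctr r ψ i z := by unfold ctr; rw [h1, h2]
    rw [mem_product, hH, mem_filter, mem_filter]
    exact ⟨⟨hi, h2, by linarith⟩, ⟨hj, h1, by rw [h5]; linarith⟩⟩
  have h2 : (H.card : ℝ) ≤ r * (1 + 1 / a) := by
    rcases H.eq_empty_or_nonempty with h0 | ⟨i0, hi0⟩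
    · rw [h0]; simp; positivity
    have hl' : (0:ℝ) < l := by exact_mod_cast hl
    have hg0 := (mem_filter.1 hi0).2
    set g := ctr r ψ i0 z with hg
    have hfz : wF r ψ z = l + g := by rw [hg]; unfold ctr; rw [hg0.1]; ring
    have hs : (H.card : ℤ) * g ≤ r * wF r ψ z := by
      rw [← ctr_sum]
      calc (H.card : ℤ) * g = ∑ i ∈ H, ctr r ψ i z := by
            rw [← nsmul_eq_mul, ← sum_const]
            refine sum_congr rfl fun i hi => ?_
            have := (mem_filter.1 hi).2.1
            unfold ctr; rw [this]; omega
        _ ≤ _ := sum_le_sum_of_subset_of_nonneg (filter_subset _ _) fun i _ _ => ctr_nonneg r ψ hψ i z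
    rw [hfz] at hs
    have hs' : (H.card : ℝ) * g ≤ r * (l + g) := by exact_mod_cast hs
    have hgp : (0:ℝ) < g := lt_of_lt_of_le (by positivity) hg0.2
    refine le_of_mul_le_mul_right (hs'.trans ?_) hgp
    have : (l:ℝ) ≤ 1 / a * g := by
      rw [one_div, ← div_eq_inv_mul, le_div_iff₀ ha]; linarith [hg0.2]
    calc (r:ℝ) * (l + g) ≤ r * (1 / a * g + g) := by gcongr
      _ = _ := by ring
  calc _ ≤ ((H ×ˢ H).card : ℝ) := by exact_mod_cast h1
    _ = (H.card : ℝ) ^ 2 := by rw [card_product]; push_cast; ring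
    _ ≤ _ := by gcongr

lemma swap_bound (r : ℕ) (n k : ℕ) (φ : Finset (Fin n) → ℤ) (hφ : ∀ W, φ W = 0 ∨ φ W = 1) (l : ℕ) (hl : 0 < l)
    (a : ℝ) (ha : 0 < a) (U : Finset (Fin n)) (hU : U.card = k) (hk : 0 < k) (y : Fin n) (hy : y ∉ U) :
    PrE φ (fun ψ => wF r ψ U = l ∧ ∃ i ∈ U, a * l ≤ ctr r ψ i U ∧ wF r ψ (insert y (U.erase i)) = l) ≤
      (r * (1 + 1 / a)) ^ 2 / (k + 1) := by
  set z := insert y U with hz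
  have hzc : z.card = k + 1 := by rw [hz, card_insert_of_notMem hy, hU]
  set Q : Fin n × Fin n → (Finset (Fin n) → ℤ) → Prop := fun p ψ =>
    wF r ψ (z.erase p.2) = l ∧ wF r ψ (z.erase p.1) = l ∧ a * l ≤ ctr r ψ p.1 (z.erase p.2) with hQ
  have hφ0 : ∀ σ, ∀ W, 0 ≤ act σ φ W := fun σ W => by rcases act_01 φ hφ σ W with h | h <;> omega
  have hb : ∑ p ∈ z.offDiag, PrE φ (Q p) ≤ (r * (1 + 1 / a)) ^ 2 :=
    PrE_bound φ _ _ _ fun σ => pair_count r _ (hφ0 σ) z l hl a ha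
  have htr : ∀ p ∈ z.offDiag, ∀ p' ∈ z.offDiag, PrE φ (Q p) = PrE φ (Q p') := by
    rintro ⟨i, j⟩ hp ⟨i', j'⟩ hp'
    rw [mem_offDiag] at hp hp'
    obtain ⟨hi, hj, hij⟩ := hp
    obtain ⟨hi', hj', hij'⟩ := hp'
    simp only at hi hj hij hi' hj' hij'
    have hc : ∀ i j, i ∈ z → j ∈ z → i ≠ j → (z \ {i, j}).card = k - 1 := by
      intro i j hi hj hij
      rw [card_sdiff_of_subset (by simp [insert_subset_iff, hi, hj]), card_pair hij, hzc]; omega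
    obtain ⟨τ, h1, h2, h3⟩ := exists_perm3 {i'} {j'} (z \ {i', j'}) {i} {j} (z \ {i, j})
      (by simpa using hij') (by simp) (by simp) (by simpa using hij) (by simp) (by simp) (by simp) (by simp)
      (by rw [hc _ _ hi hj hij, hc _ _ hi' hj' hij'])
    rw [map_singleton, singleton_inj] at h1 h2
    have h1' : τ i' = i := h1
    have h2' : τ j' = j := h2
    have hzz : z.map τ.toEmbedding = z := by
      have e : ∀ i j, i ∈ z → j ∈ z → z = {i} ∪ {j} ∪ (z \ {i, j}) := by
        intro i j hi hj
        ext x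
        simp only [mem_union, mem_singleton, mem_sdiff, mem_insert]
        constructor
        · intro hx; tauto
        · rintro ((rfl | rfl) | h) <;> tauto
      have e1 := congrArg (fun t => t.map τ.toEmbedding) (e i' j' hi' hj')
      simp only [map_union, h3, map_singleton, h1, h2] at e1
      exact e1.trans (e i j hi hj).symm
    apply PrE_congr φ _ _ τ
    intro ψ
    simp only [hQ, wF_act, ctr_act, map_erase, hzz, h1', h2']
    have h1'' : τ.toEmbedding i' = i := h1
    have h2'' : τ.toEmbedding j' = j := h2
    rw [h1'', h2'']
  have hyz : y ∈ z := mem_insert_self _ _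
  have hiz : ∀ i ∈ U, (i, y) ∈ z.offDiag := by
    intro i hi
    rw [mem_offDiag]
    exact ⟨mem_insert_of_mem hi, hyz, fun h : i = y => hy (h ▸ hi)⟩
  obtain ⟨i0, hi0⟩ : U.Nonempty := card_pos.1 (by omega)
  have hsum : ((k + 1) * k : ℝ) * PrE φ (Q (i0, y)) ≤ (r * (1 + 1 / a)) ^ 2 := by
    refine le_trans (le_of_eq ?_) hb
    rw [sum_congr rfl fun p hp => htr p hp (i0, y) (hiz i0 hi0), sum_const, offDiag_card, hzc, nsmul_eq_mul]
    rw [Nat.cast_sub (by nlinarith)]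
    push_cast; ring
  have hun := PrE_union φ U (fun ψ => wF r ψ U = l ∧ ∃ i ∈ U, a * l ≤ ctr r ψ i U ∧ wF r ψ (insert y (U.erase i)) = l)
    (fun i => Q (i, y)) (by
      rintro σ ⟨h1, i, hi, h2, h3⟩
      refine ⟨i, hi, ?_⟩
      have e1 : z.erase y = U := erase_insert hy
      have e2 : z.erase i = insert y (U.erase i) := erase_insert_of_ne (fun h => hy (h ▸ hi))
      simp only [hQ, e1, e2]
      exact ⟨h1, h3, h2⟩)
  refine hun.trans ?_
  rw [sum_congr rfl fun i hi => htr (i, y) (hiz i hi) (i0, y) (hiz i0 hi0), sum_const, hU, nsmul_eq_mul,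
    le_div_iff₀ (by positivity)]
  linarith

lemma half_aux (x : ℝ) (M : ℕ) (hx0 : 0 ≤ x) (hx1 : x ≤ 1) (hxM : 1 ≤ M * x) : 2 * (1 - x) ^ M ≤ 1 := by
  have hb := one_add_mul_le_pow (show (-2:ℝ) ≤ x by linarith) M
  have hb2 : (1 - x) ^ M * (1 + x) ^ M ≤ 1 := by
    rw [← mul_pow]
    exact pow_le_one₀ (by nlinarith) (by nlinarith)
  have hb3 : 0 ≤ (1 - x) ^ M := pow_nonneg (by linarith) M
  nlinarith

set_option maxHeartbeats 1000000 in
lemma heavy_few (r : ℕ) (ε : ℝ) (hε : 0 < ε) : ∃ M : ℕ, ∀ a : ℝ, 0 < a → ∃ K : ℕ, ∀ k, K ≤ k → ∀ n, 4 * k ≤ n →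
    ∀ (φ : Finset (Fin n) → ℤ), (∀ W, φ W = 0 ∨ φ W = 1) → ∀ (l : ℕ) (U : Finset (Fin n)),
    0 < l → U.card = k →
    PrE φ (fun ψ => wF r ψ U = l ∧ M ≤ cnt U (fun v => a * l ≤ ctr r ψ v U)) ≤ ε := by
  obtain ⟨θ', hθ', H⟩ := const_lemma r (ε / 4) (by positivity)
  set θ := min θ' 1 with hθd
  have hθ : 0 < θ := lt_min hθ' one_pos
  have hθ1 : θ ≤ 1 := min_le_right _ _
  refine ⟨⌈2 / θ⌉₊, ?_⟩
  set M := ⌈2 / θ⌉₊ with hM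
  have hM' : 2 ≤ θ * M := by
    have := Nat.le_ceil (2 / θ)
    rw [div_le_iff₀ hθ] at this
    linarith
  intro a ha
  set C := (r * (1 + 1 / a)) ^ 2 with hC
  refine ⟨max ⌈2 / θ⌉₊ ⌈2 * C / ε⌉₊, ?_⟩
  intro k hk n hn φ hφ l U hl hU
  have hk1 : 2 ≤ θ * k := by
    have := Nat.ceil_le.1 ((le_max_left _ _).trans hk)
    rw [div_le_iff₀ hθ] at this
    linarith
  have hk2 : 2 * C ≤ ε * k := by
    have := Nat.ceil_le.1 ((le_max_right _ _).trans hk)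
    rw [div_le_iff₀ hε] at this
    linarith
  have hkp : 0 < k := by
    rcases Nat.eq_zero_or_pos k with h | h
    · rw [h] at hk1; norm_num at hk1
    · exact h
  have hkp' : (0:ℝ) < k := by exact_mod_cast hkp
  set s := ⌊θ * k⌋₊ with hs
  have hs1 : (s : ℝ) ≤ θ * k := Nat.floor_le (by positivity)
  have hs2 : θ * k < s + 1 := Nat.lt_floor_add_one _
  have hsk : s ≤ k := by
    have : (s:ℝ) ≤ k := hs1.trans (by nlinarith)
    exact_mod_cast this
  have hst' : (s : ℝ) ≤ θ' * k := hs1.trans (by gcongr; exact min_le_left _ _)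
  have hs3 : θ * k / 2 ≤ s := by linarith
  have hsp : 0 < s := by
    have : (0:ℝ) < s := by linarith
    exact_mod_cast this
  have hI : (U.powersetCard s).card = k.choose s := by rw [card_powersetCard, hU]
  have hIp : (0:ℝ) < k.choose s := by exact_mod_cast Nat.choose_pos hsk
  obtain ⟨N, hNU, hN⟩ : ∃ N ⊆ univ \ U, N.card = s := by
    apply exists_subset_card_eq
    rw [card_sdiff_of_subset (subset_univ _), card_univ, Fintype.card_fin, hU]; omega
  have hdN : Disjoint U N := by
    rw [disjoint_left]; intro x hx hxN; exact (mem_sdiff.1 (hNU hxN)).2 hx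
  obtain ⟨y, hyN⟩ : N.Nonempty := card_pos.1 (by omega)
  have hyU : y ∉ U := fun h => (disjoint_left.1 hdN h) hyN
  have hm := PrE_markov φ (U.powersetCard s) (card_pos.1 (by rw [hI]; exact Nat.choose_pos hsk))
    (fun ψ => wF r ψ U = l) (fun R ψ => NC r (U \ R) (R ∪ N) s l ψ) (ε / 4) (1 / 2) (by
      intro R hR
      rw [mem_powersetCard] at hR
      have := H n k s (by omega) φ l (U \ R) R N sdiff_disjoint (hdN.mono_left sdiff_subset)
        (hdN.mono_left hR.1) hR.2 hN (by rw [card_sdiff_of_subset hR.1, hR.2, hU]; omega) hst'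
      rwa [sdiff_union_of_subset hR.1] at this)
  have hsw := swap_bound r n k φ hφ l hl a ha U hU hkp y hyU
  have hadd := PrE_le_add φ (fun ψ => wF r ψ U = l ∧ M ≤ cnt U (fun v => a * l ≤ ctr r ψ v U))
    (fun ψ => wF r ψ U = l ∧ ∃ i ∈ U, a * l ≤ ctr r ψ i U ∧ wF r ψ (insert y (U.erase i)) = l)
    (fun ψ => wF r ψ U = l ∧ (1 / 2 : ℝ) * (U.powersetCard s).card ≤
        cnt (U.powersetCard s) (fun R => NC r (U \ R) (R ∪ N) s l ψ)) (by
      rintro σ ⟨h1, h2⟩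
      by_cases hsw' : ∃ i ∈ U, a * l ≤ ctr r (act σ φ) i U ∧ wF r (act σ φ) (insert y (U.erase i)) = l
      · exact Or.inl ⟨h1, hsw'⟩
      refine Or.inr ⟨h1, ?_⟩
      set ψ := act σ φ with hψ
      set Hv := U.filter (fun v => a * l ≤ ctr r ψ v U) with hHv
      rw [cnt_eq, ← hHv] at h2
      have hHU : Hv ⊆ U := filter_subset _ _
      have hMk : M ≤ k := h2.trans (by rw [← hU]; exact card_le_card hHU)
      set B := cnt (U.powersetCard s) (fun R => NC r (U \ R) (R ∪ N) s l ψ) with hB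
      have hnot : cnt (U.powersetCard s) (fun R => ¬ NC r (U \ R) (R ∪ N) s l ψ) ≤ (k - M).choose s := by
        have : (k - Hv.card).choose s ≤ (k - M).choose s := Nat.choose_le_choose _ (by omega)
        refine le_trans ?_ this
        rw [← hU, ← card_sdiff_of_subset hHU, ← card_powersetCard, cnt_eq]
        apply card_le_card
        intro R hR
        rw [mem_filter, mem_powersetCard] at hR
        rw [mem_powersetCard]
        refine ⟨?_, hR.1.2⟩
        intro i hi
        rw [mem_sdiff]
        refine ⟨hR.1.1 hi, fun hiH => hR.2 ?_⟩
        refine ⟨insert y (R.erase i), ?_, ?_, ?_⟩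
        · exact insert_subset (mem_union_right _ hyN) ((erase_subset _ _).trans subset_union_left)
        · rw [card_insert_of_notMem (fun h => hyU (hR.1.1 (mem_of_mem_erase h))), card_erase_of_mem hi, hR.1.2]; omega
        · intro hw
          refine hsw' ⟨i, hR.1.1 hi, (mem_filter.1 hiH).2, ?_⟩
          rw [← hw]
          congr 1
          ext x
          simp only [mem_insert, mem_erase, mem_union, mem_sdiff]
          constructor
          · rintro (rfl | ⟨h1, h2⟩)
            · tauto
            · tauto
          · rintro (⟨h1, h2⟩ | rfl | ⟨h1, h2⟩)
            · exact Or.inr ⟨fun h => h2 (h ▸ hi), h1⟩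
            · tauto
            · exact Or.inr ⟨h1, hR.1.1 h2⟩
      have hdec : ((k - M).choose s : ℝ) * (k:ℝ) ^ M ≤ k.choose s * (k - s : ℝ) ^ M := by
        have := choose_decay k s M hsk hMk
        have h' : (((k - M).choose s * k ^ M : ℕ) : ℝ) ≤ ((k.choose s * (k - s) ^ M : ℕ) : ℝ) := by exact_mod_cast this
        push_cast [Nat.cast_sub hsk] at h'
        exact h'
      have hhalf : 2 * (k - s : ℝ) ^ M ≤ (k:ℝ) ^ M := by
        have hsk' : (s:ℝ) ≤ k := by exact_mod_cast hsk
        set x := (s:ℝ) / k with hx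
        have hx0 : 0 ≤ x := by positivity
        have hx1 : x ≤ 1 := (div_le_one hkp').2 hsk'
        have hxM : 1 ≤ M * x := by
          rw [hx, mul_div_assoc', le_div_iff₀ hkp']
          have t1 := mul_le_mul_of_nonneg_left hs3 (Nat.cast_nonneg M : (0:ℝ) ≤ M)
          have t2 := mul_le_mul_of_nonneg_right hM' hkp'.le
          linarith
        have e : (k - s : ℝ) = k * (1 - x) := by rw [hx]; field_simp
        rw [e, mul_pow]
        have : 2 * (1 - x) ^ M ≤ 1 := half_aux x M hx0 hx1 hxM
        calc 2 * ((k:ℝ) ^ M * (1 - x) ^ M) = k ^ M * (2 * (1 - x) ^ M) := by ring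
          _ ≤ k ^ M * 1 := by gcongr
          _ = _ := by ring
      have hck : ((k - M).choose s : ℝ) ≤ 1 / 2 * k.choose s := by
        refine le_of_mul_le_mul_right ?_ (show (0:ℝ) < (k:ℝ) ^ M by positivity)
        have t1 := mul_le_mul_of_nonneg_left hhalf hIp.le
        linarith
      have htot : (B : ℝ) + cnt (U.powersetCard s) (fun R => ¬ NC r (U \ R) (R ∪ N) s l ψ) = k.choose s := by
        rw [← hI]; exact_mod_cast cnt_add_not _ _
      have hnot' : (cnt (U.powersetCard s) (fun R => ¬ NC r (U \ R) (R ∪ N) s l ψ) : ℝ) ≤ (k - M).choose s := by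
        exact_mod_cast hnot
      rw [hI]
      linarith)
  have hsw2 : C / (k + 1) ≤ ε / 2 := by
    rw [div_le_iff₀ (by positivity)]; nlinarith
  linarith

section
variable {n : ℕ}

/-- `k`-sets with a gap in the contributions -/
noncomputable def gapA (r k l : ℕ) (a β : ℝ) (φ : Finset (Fin n) → ℤ) : Finset (Finset (Fin n)) :=
  ((univ : Finset (Fin n)).powersetCard k).filter (fun U => wF r φ U = l ∧ (∃ v ∈ U, β * l ≤ ctr r φ v U) ∧
    ∀ v ∈ U, (ctr r φ v U : ℝ) < a * l ∨ β * l ≤ ctr r φ v U)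

/-- fibres of the map removing the largest heavy element -/
noncomputable def fibS (r k l : ℕ) (a β : ℝ) (φ : Finset (Fin n) → ℤ) (x : Finset (Fin n)) : Finset (Fin n) :=
  univ.filter (fun s => s ∉ x ∧ insert s x ∈ gapA r k l a β φ ∧ β * l ≤ ctr r φ s (insert s x) ∧
    ∀ v ∈ insert s x, β * l ≤ ctr r φ v (insert s x) → v ≤ s)

lemma gapA_card (r k l : ℕ) (a β : ℝ) (φ : Finset (Fin n) → ℤ) :
    (gapA r k l a β φ).card ≤ ∑ x ∈ ((univ : Finset (Fin n)).powersetCard (k - 1)).filter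
      (fun x => (fibS r k l a β φ x).Nonempty), (fibS r k l a β φ x).card := by
  rw [← card_sigma]
  have hex : ∀ U ∈ gapA r k l a β φ, ∃ s ∈ U, β * l ≤ ctr r φ s U ∧ ∀ v ∈ U, β * l ≤ ctr r φ v U → v ≤ s := by
    intro U hU
    obtain ⟨_, _, ⟨v, hv, hv'⟩, _⟩ := mem_filter.1 hU
    obtain ⟨s, hs, hmax⟩ := (U.filter (fun v => β * l ≤ ctr r φ v U)).exists_max_image id ⟨v, mem_filter.2 ⟨hv, hv'⟩⟩
    rw [mem_filter] at hs
    exact ⟨s, hs.1, hs.2, fun w hw hw' => hmax w (mem_filter.2 ⟨hw, hw'⟩)⟩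
  rcases (gapA r k l a β φ).eq_empty_or_nonempty with h0 | ⟨U0, hU0⟩
  · rw [h0, card_empty]; exact Nat.zero_le _
  haveI : Nonempty (Fin n) := ⟨(hex U0 hU0).choose⟩
  choose! g hg1 hg2 hg3 using hex
  have hmem : ∀ U ∈ gapA r k l a β φ, g U ∈ fibS r k l a β φ (U.erase (g U)) := by
    intro U hU
    unfold fibS
    rw [mem_filter, insert_erase (hg1 U hU)]
    exact ⟨mem_univ _, notMem_erase _ _, hU, hg2 U hU, hg3 U hU⟩
  apply card_le_card_of_injOn (fun U => (⟨U.erase (g U), g U⟩ : Σ _ : Finset (Fin n), Fin n))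
  · intro U hU
    have hU : U ∈ gapA r k l a β φ := hU
    have hk := (mem_powersetCard.1 (mem_filter.1 hU).1).2
    simp only [coe_sigma, Set.mem_sigma_iff, mem_coe, mem_filter, mem_powersetCard]
    refine ⟨⟨⟨subset_univ _, ?_⟩, ⟨_, hmem U hU⟩⟩, hmem U hU⟩
    rw [card_erase_of_mem (hg1 U hU), hk]
  · intro U hU V hV h
    have hU : U ∈ gapA r k l a β φ := hU
    have hV : V ∈ gapA r k l a β φ := hV
    simp only [Sigma.mk.injEq, heq_eq_eq] at h
    rw [← insert_erase (hg1 U hU), ← insert_erase (hg1 V hV), h.1, h.2]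

lemma fib_small (r k l : ℕ) (a β : ℝ) (φ : Finset (Fin n) → ℤ) (x : Finset (Fin n)) 
    (h : (fibS r k l a β φ x).Nonempty) : (wF r φ x : ℝ) ≤ (1 - β) * l := by
  obtain ⟨t, ht⟩ := h
  obtain ⟨_, h1, h2, h3, _⟩ := mem_filter.1 ht
  have h4 := (mem_filter.1 h2).2.1
  unfold ctr at h3
  rw [erase_insert h1, h4] at h3
  push_cast at h3
  linarith

lemma unique_aux (r k l m0 : ℕ) (a β : ℝ) (φ : Finset (Fin n) → ℤ) (hφ : ∀ W, 0 ≤ φ W) (hl : 0 < l) (hβ : 0 < β)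
    (ha0 : 0 ≤ a) (ha : m0 * a ≤ β / 4)
    (x S W x2 S2 W2 : Finset (Fin n)) (hS : S ⊆ fibS r k l a β φ x)
    (hW : ∀ s ∈ S, (1 - β / 4) * l ≤ wF r φ ((insert s x) \ W)) (h2 : (fibS r k l a β φ x2).Nonempty)
    (hS2c : S2.card ≤ m0)
    (hy : (x ∪ S) \ W = (x2 ∪ S2) \ W2) (s : Fin n) (hs : s ∈ S) (hs2 : s ∉ S2)
    (hmin : ∀ t ∈ S2, t ∉ S → s < t) : False := by
  have hsS := (mem_filter.1 (hS hs)).2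
  obtain ⟨hsx, hsA, -, hsmax⟩ := hsS
  have hgap := (mem_filter.1 hsA).2.2.2
  set y1 := (insert s x) \ W with hy1
  have hsd := wF_sdiff r φ hφ y1 (S2 ∩ y1)
  have hl' : (0:ℝ) < l := by exact_mod_cast hl
  have hsub : y1 \ (S2 ∩ y1) ⊆ x2 := by
    intro t ht
    simp only [mem_sdiff, mem_inter, not_and] at ht
    have hty : t ∈ (x ∪ S) \ W := by
      rw [hy1, mem_sdiff, mem_insert] at ht
      rw [mem_sdiff, mem_union]
      refine ⟨?_, ht.1.2⟩
      rcases ht.1.1 with rfl | h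
      · exact Or.inr hs
      · exact Or.inl h
    rw [hy, mem_sdiff, mem_union] at hty
    rcases hty.1 with h | h
    · exact h
    · exact absurd ht.1 (ht.2 h)
  have hct : ∀ t ∈ S2 ∩ y1, (ctr r φ t y1 : ℝ) ≤ a * l := by
    intro t ht
    rw [mem_inter] at ht
    have h1 := ht.2
    rw [hy1, mem_sdiff, mem_insert] at h1
    have htx : t ∈ x := by
      rcases h1.1 with rfl | h
      · exact absurd ht.1 hs2
      · exact h
    have htS : t ∉ S := fun h => (mem_filter.1 (hS h)).2.1 htx
    have hlt := hmin t ht.1 htS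
    have hmono : (ctr r φ t y1 : ℝ) ≤ ctr r φ t (insert s x) := by
      exact_mod_cast ctr_mono r φ hφ t _ _ sdiff_subset
    have htin : t ∈ insert s x := mem_insert_of_mem htx
    rcases hgap t htin with h | h
    · linarith
    · exact absurd (hsmax t htin h) (not_le.2 hlt)
  have hsum : (∑ t ∈ S2 ∩ y1, (ctr r φ t y1 : ℝ)) ≤ β / 4 * l := by
    calc _ ≤ ∑ t ∈ S2 ∩ y1, a * (l:ℝ) := sum_le_sum hct
      _ = ((S2 ∩ y1).card : ℝ) * (a * l) := by rw [sum_const, nsmul_eq_mul]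
      _ ≤ m0 * (a * l) := by
          gcongr
          exact (card_le_card inter_subset_left).trans hS2c
      _ = (m0 * a) * l := by ring
      _ ≤ _ := by gcongr
  have hsd' : (wF r φ y1 : ℝ) - ∑ t ∈ S2 ∩ y1, (ctr r φ t y1 : ℝ) ≤ wF r φ (y1 \ (S2 ∩ y1)) := by exact_mod_cast hsd
  have hm : (wF r φ (y1 \ (S2 ∩ y1)) : ℝ) ≤ wF r φ x2 := by exact_mod_cast wF_mono r φ hφ _ _ hsub
  have h3 := fib_small r k l a β φ x2 h2
  have h4 := hW s hs
  nlinarith [mul_pos hβ hl']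

lemma unique_S (r k l m0 : ℕ) (a β : ℝ) (φ : Finset (Fin n) → ℤ) (hφ : ∀ W, 0 ≤ φ W) (hl : 0 < l) (hβ : 0 < β)
    (ha0 : 0 ≤ a) (ha : m0 * a ≤ β / 4)
    (x S W x2 S2 W2 : Finset (Fin n)) (hS : S ⊆ fibS r k l a β φ x) (hS2 : S2 ⊆ fibS r k l a β φ x2)
    (hW : ∀ s ∈ S, (1 - β / 4) * l ≤ wF r φ ((insert s x) \ W))
    (hW2 : ∀ s ∈ S2, (1 - β / 4) * l ≤ wF r φ ((insert s x2) \ W2))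
    (h1 : (fibS r k l a β φ x).Nonempty) (h2 : (fibS r k l a β φ x2).Nonempty)
    (hSc : S.card ≤ m0) (hS2c : S2.card ≤ m0)
    (hy : (x ∪ S) \ W = (x2 ∪ S2) \ W2) : S = S2 := by
  by_contra hne
  have hne' : ((S \ S2) ∪ (S2 \ S)).Nonempty := by
    rw [nonempty_iff_ne_empty]
    intro h0
    rw [union_eq_empty, sdiff_eq_empty_iff_subset, sdiff_eq_empty_iff_subset] at h0
    exact hne (subset_antisymm h0.1 h0.2)
  obtain ⟨s, hs, hmin⟩ := exists_min_image _ id hne'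
  simp only [id] at hmin
  have hlt : ∀ t, t ∈ (S \ S2) ∪ (S2 \ S) → t ≠ s → s < t := fun t ht hts => lt_of_le_of_ne (hmin t ht) (Ne.symm hts)
  simp only [mem_union, mem_sdiff] at hs hlt
  rcases hs with hs | hs
  · exact unique_aux r k l m0 a β φ hφ hl hβ ha0 ha x S W x2 S2 W2 hS hW h2 hS2c hy s hs.1 hs.2
      fun t ht htS => hlt t (Or.inr ⟨ht, htS⟩) (fun h => htS (h ▸ hs.1))
  · exact unique_aux r k l m0 a β φ hφ hl hβ ha0 ha x2 S2 W2 x S W hS2 hW2 h1 hSc hy.symm s hs.1 hs.2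
      fun t ht htS => hlt t (Or.inl ⟨ht, htS⟩) (fun h => htS (h ▸ hs.1))

lemma bad_W_one (r k l m q : ℕ) (β : ℝ) (φ : Finset (Fin n) → ℤ) (hφ : ∀ W, 0 ≤ φ W) (hl : 0 < l) (hβ : 0 < β)
    (x : Finset (Fin n)) (hx : x.card = q) (s : Fin n) (hs : wF r φ (insert s x) = l) (hm : 0 < m) :
    (cnt (x.powersetCard m) (fun W => ¬ (1 - β / 4) * l ≤ wF r φ ((insert s x) \ W)) : ℝ) * (β / 4) * q ≤
      r * (m * q.choose m) := by
  have hl' : (0:ℝ) < l := by exact_mod_cast hl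
  set z := insert s x with hz
  have hdc : ∑ W ∈ x.powersetCard m, ∑ v ∈ W, ctr r φ v z = ∑ v ∈ x, (q - 1).choose (m - 1) * ctr r φ v z := by
    have e1 : ∀ W ∈ x.powersetCard m, ∑ v ∈ W, ctr r φ v z = ∑ v ∈ x, if v ∈ W then ctr r φ v z else 0 := by
      intro W hW
      rw [← sum_filter, filter_mem_eq_inter, inter_eq_right.2 (mem_powersetCard.1 hW).1]
    rw [sum_congr rfl e1, sum_comm]
    refine sum_congr rfl fun v hv => ?_
    have := card_supersets x {v} m (by simpa using hv) (by rw [card_singleton]; exact hm)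
    rw [card_singleton, hx, cnt_eq] at this
    simp only [singleton_subset_iff] at this
    rw [← sum_filter, sum_const, this, nsmul_eq_mul]
  have hle : ∑ v ∈ x, ctr r φ v z ≤ r * l := by
    rw [← hs, ← ctr_sum]
    exact sum_le_sum_of_subset_of_nonneg (subset_insert _ _) fun i _ _ => ctr_nonneg r φ hφ i _
  have hle2 : ((∑ W ∈ x.powersetCard m, ∑ v ∈ W, ctr r φ v z : ℤ) : ℝ) ≤ (q - 1).choose (m - 1) * (r * l) := by
    rw [hdc, ← mul_sum]
    push_cast
    gcongr
    exact_mod_cast hle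
  have hlow : (cnt (x.powersetCard m) (fun W => ¬ (1 - β / 4) * l ≤ wF r φ (z \ W)) : ℝ) * (β / 4 * l) ≤
      ((∑ W ∈ x.powersetCard m, ∑ v ∈ W, ctr r φ v z : ℤ) : ℝ) := by
    rw [cnt_eq, ← nsmul_eq_mul, ← sum_const]
    push_cast
    refine le_trans (sum_le_sum ?_) (sum_le_sum_of_subset_of_nonneg (filter_subset _ _) ?_)
    · intro W hW
      have h1 := (mem_filter.1 hW).2
      have h2 : (wF r φ z : ℝ) - ∑ v ∈ W, (ctr r φ v z : ℝ) ≤ wF r φ (z \ W) := by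
        exact_mod_cast wF_sdiff r φ hφ z W
      rw [hs] at h2
      push_cast at h2
      linarith
    · intro W _ _
      exact sum_nonneg fun v _ => by exact_mod_cast ctr_nonneg r φ hφ v z
  have hc : q * (q - 1).choose (m - 1) = m * q.choose m := by
    rcases Nat.eq_zero_or_pos q with h | h
    · subst h
      rw [Nat.choose_eq_zero_of_lt hm]; simp
    obtain ⟨q', rfl⟩ : ∃ q', q = q' + 1 := ⟨q - 1, by omega⟩
    obtain ⟨m', rfl⟩ : ∃ m', m = m' + 1 := ⟨m - 1, by omega⟩
    have := Nat.add_one_mul_choose_eq q' m'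
    simp only [Nat.add_sub_cancel]
    linarith
  have hc' : (q:ℝ) * (q - 1).choose (m - 1) = m * q.choose m := by exact_mod_cast hc
  refine le_of_mul_le_mul_right ?_ hl'
  calc _ = ((cnt (x.powersetCard m) (fun W => ¬ (1 - β / 4) * l ≤ wF r φ (z \ W)) : ℝ) * (β / 4 * l)) * q := by ring
    _ ≤ ((q - 1).choose (m - 1) * (r * l)) * q := mul_le_mul_of_nonneg_right (hlow.trans hle2) (Nat.cast_nonneg q)
    _ = r * (q * (q - 1).choose (m - 1)) * l := by ring
    _ = _ := by rw [hc']

lemma good_W (r k l m m0 q : ℕ) (β ε : ℝ) (φ : Finset (Fin n) → ℤ) (hφ : ∀ W, 0 ≤ φ W) (hl : 0 < l) (hβ : 0 < β)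
    (x : Finset (Fin n)) (hx : x.card = q) (S : Finset (Fin n)) (hS : ∀ s ∈ S, wF r φ (insert s x) = l) (hSm : S.card = m)
    (hm : m ≤ m0) (hq : 4 * r * (m0:ℝ) ^ 2 ≤ ε * β * q) (hε : 0 ≤ ε) (hq0 : 0 < q) :
    (1 - ε) * q.choose m ≤ ((x.powersetCard m).filter (fun W => ∀ s ∈ S, (1 - β / 4) * l ≤ wF r φ ((insert s x) \ W))).card := by
  rw [← cnt_eq]
  have htot := cnt_add_not (x.powersetCard m) (fun W => ∀ s ∈ S, (1 - β / 4) * (l:ℝ) ≤ wF r φ ((insert s x) \ W))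
  rw [card_powersetCard, hx] at htot
  have htot' : (cnt (x.powersetCard m) (fun W => ∀ s ∈ S, (1 - β / 4) * (l:ℝ) ≤ wF r φ ((insert s x) \ W)) : ℝ) +
    cnt (x.powersetCard m) (fun W => ¬ ∀ s ∈ S, (1 - β / 4) * (l:ℝ) ≤ wF r φ ((insert s x) \ W)) = q.choose m := by exact_mod_cast htot
  have hun : cnt (x.powersetCard m) (fun W => ¬ ∀ s ∈ S, (1 - β / 4) * (l:ℝ) ≤ wF r φ ((insert s x) \ W)) ≤
      ∑ s ∈ S, cnt (x.powersetCard m) (fun W => ¬ (1 - β / 4) * (l:ℝ) ≤ wF r φ ((insert s x) \ W)) := by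
    simp only [cnt_eq]
    refine le_trans (card_le_card ?_) card_biUnion_le
    intro W hW
    rw [mem_filter] at hW
    obtain ⟨h1, h2⟩ := hW
    push Not at h2
    obtain ⟨s, hs, hs'⟩ := h2
    rw [mem_biUnion]
    exact ⟨s, hs, mem_filter.2 ⟨h1, not_le.2 hs'⟩⟩
  have hun' : (cnt (x.powersetCard m) (fun W => ¬ ∀ s ∈ S, (1 - β / 4) * (l:ℝ) ≤ wF r φ ((insert s x) \ W)) : ℝ) ≤
      ∑ s ∈ S, (cnt (x.powersetCard m) (fun W => ¬ (1 - β / 4) * (l:ℝ) ≤ wF r φ ((insert s x) \ W)) : ℝ) := by exact_mod_cast hun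
  suffices hs : (∑ s ∈ S, (cnt (x.powersetCard m) (fun W => ¬ (1 - β / 4) * (l:ℝ) ≤ wF r φ ((insert s x) \ W)) : ℝ)) ≤ ε * q.choose m by
    linarith
  rcases Nat.eq_zero_or_pos m with h0 | h0
  · rw [card_eq_zero.1 (hSm.trans h0)]; simp; positivity
  have hq0' : (0:ℝ) < q := by exact_mod_cast hq0
  have hbd : ∀ s ∈ S, (cnt (x.powersetCard m) (fun W => ¬ (1 - β / 4) * (l:ℝ) ≤ wF r φ ((insert s x) \ W)) : ℝ) ≤
      (r * (m * q.choose m)) / (β / 4 * q) := by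
    intro s hs
    rw [le_div_iff₀ (by positivity)]
    have := bad_W_one r k l m q β φ hφ hl hβ x hx s (hS s hs) h0
    linarith
  refine (sum_le_sum hbd).trans ?_
  rw [sum_const, hSm, nsmul_eq_mul, mul_div_assoc', div_le_iff₀ (by positivity)]
  have hmm : (m:ℝ) ≤ m0 := by exact_mod_cast hm
  have h4 : 4 * r * (m:ℝ) ^ 2 ≤ ε * β * q := le_trans (by gcongr) hq
  have hcp : (0:ℝ) ≤ q.choose m := by positivity
  nlinarith [mul_le_mul_of_nonneg_right h4 hcp]

end

lemma packing {n : ℕ} (r k l m0 : ℕ) (a β ε : ℝ) (φ : Finset (Fin n) → ℤ) (hφ : ∀ W, 0 ≤ φ W) (hl : 0 < l) (hβ : 0 < β)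
    (ha0 : 0 ≤ a) (ha : m0 * a ≤ β / 4) (hε : 0 ≤ ε) (hk : 2 ≤ k)
    (hq : 4 * r * (m0:ℝ) ^ 2 ≤ ε * β * (k - 1 : ℕ)) :
    (1 - ε) * ∑ x ∈ ((univ : Finset (Fin n)).powersetCard (k - 1)).filter
      (fun x => (fibS r k l a β φ x).Nonempty), ∑ m ∈ range (m0 + 1),
        ((fibS r k l a β φ x).card.choose m : ℝ) * (((k - 1).choose m : ℝ) / ((n - (k - 1)).choose m : ℝ)) ≤
      n.choose (k - 1) := by
  set q := k - 1 with hqd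
  set X := (univ : Finset (Fin n)).powersetCard q with hX
  set X' := X.filter (fun x => (fibS r k l a β φ x).Nonempty) with hX'
  set Wg : Finset (Fin n) → ℕ → Finset (Fin n) → Finset (Finset (Fin n)) := fun x m S =>
    (x.powersetCard m).filter (fun W => ∀ s ∈ S, (1 - β / 4) * l ≤ wF r φ ((insert s x) \ W)) with hWg
  set T : Finset (Σ _ : Finset (Fin n), Σ _ : ℕ, Σ _ : Finset (Fin n), Finset (Fin n)) :=
    X'.sigma fun x => (range (m0 + 1)).sigma fun m => ((fibS r k l a β φ x).powersetCard m).sigma fun S => Wg x m S with hT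
  set yy : (Σ _ : Finset (Fin n), Σ _ : ℕ, Σ _ : Finset (Fin n), Finset (Fin n)) → Finset (Fin n) :=
    fun t => (t.1 ∪ t.2.2.1) \ t.2.2.2 with hyy
  have hmemT : ∀ t ∈ T, t.1.card = q ∧ (fibS r k l a β φ t.1).Nonempty ∧ t.2.1 ≤ m0 ∧
      t.2.2.1 ⊆ fibS r k l a β φ t.1 ∧ t.2.2.1.card = t.2.1 ∧ t.2.2.2 ⊆ t.1 ∧ t.2.2.2.card = t.2.1 ∧
      ∀ s ∈ t.2.2.1, (1 - β / 4) * l ≤ wF r φ ((insert s t.1) \ t.2.2.2) := by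
    rintro ⟨x, m, S, W⟩ ht
    simp only [hT, hX', hX, hWg, mem_sigma, mem_filter, mem_powersetCard, mem_range] at ht
    obtain ⟨⟨⟨_, h1⟩, h2⟩, h3, ⟨h4, h5⟩, ⟨h6, h7⟩, h8⟩ := ht
    exact ⟨h1, h2, Nat.lt_succ_iff.1 h3, h4, h5, h6, h7, h8⟩
  have hdisj : ∀ x S, S ⊆ fibS r k l a β φ x → Disjoint x S := by
    intro x S hS
    rw [disjoint_right]
    intro s hs
    exact (mem_filter.1 (hS hs)).2.1
  have hyX : ∀ t ∈ T, yy t ∈ X := by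
    intro t ht
    obtain ⟨h1, h2, h3, h4, h5, h6, h7, h8⟩ := hmemT t ht
    rw [hX, mem_powersetCard]
    refine ⟨subset_univ _, ?_⟩
    simp only [hyy]
    rw [card_sdiff_of_subset (h6.trans subset_union_left), card_union_of_disjoint (hdisj _ _ h4)]
    omega
  have hup : ∑ t ∈ T, (1 / ((n - q).choose t.2.1 : ℝ)) ≤ n.choose q := by
    rw [← sum_fiberwise_of_maps_to hyX]
    have hXc : (n.choose q : ℝ) = ∑ y ∈ X, (1:ℝ) := by
      rw [sum_const, hX, card_powersetCard, card_univ, Fintype.card_fin]; simp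
    rw [hXc]
    refine sum_le_sum fun y hy => ?_
    rcases (T.filter (fun t => yy t = y)).eq_empty_or_nonempty with h0 | ⟨t0, ht0⟩
    · rw [h0]; simp
    rw [mem_filter] at ht0
    obtain ⟨g1, g2, g3, g4, g5, g6, g7, g8⟩ := hmemT t0 ht0.1
    have hS : ∀ t ∈ T.filter (fun t => yy t = y), t.2.2.1 = t0.2.2.1 := by
      intro t ht
      rw [mem_filter] at ht
      obtain ⟨h1, h2, h3, h4, h5, h6, h7, h8⟩ := hmemT t ht.1
      exact unique_S r k l m0 a β φ hφ hl hβ ha0 ha t.1 t.2.2.1 t.2.2.2 t0.1 t0.2.2.1 t0.2.2.2 h4 g4 h8 g8 h2 g2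
        (by omega) (by omega) (ht.2.trans ht0.2.symm)
    have hm : ∀ t ∈ T.filter (fun t => yy t = y), t.2.1 = t0.2.1 := by
      intro t ht
      have e := hS t ht
      rw [mem_filter] at ht
      rw [← g5, ← (hmemT t ht.1).2.2.2.2.1, e]
    rw [sum_congr rfl fun t ht => by rw [hm t ht], sum_const, nsmul_eq_mul, mul_one_div]
    apply div_le_one_of_le₀ _ (by positivity)
    rw [hX, mem_powersetCard] at hy
    have hcard : (univ \ y).card = n - q := by
      rw [card_sdiff_of_subset (subset_univ _), card_univ, Fintype.card_fin, hy.2]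
    rw [← hcard, ← card_powersetCard]
    norm_cast
    apply card_le_card_of_injOn (fun t => t.2.2.2)
    · intro t ht
      have ht : t ∈ T.filter (fun t => yy t = y) := ht
      have e := hm t ht
      rw [mem_filter] at ht
      obtain ⟨h1, h2, h3, h4, h5, h6, h7, h8⟩ := hmemT t ht.1
      rw [mem_coe, mem_powersetCard]
      refine ⟨?_, by rw [h7, e]⟩
      intro w hw
      rw [mem_sdiff]
      refine ⟨mem_univ _, ?_⟩
      rw [← ht.2]
      simp only [hyy, mem_sdiff, not_and, not_not]
      intro _; exact hw
    · intro t ht t' ht' hWW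
      have ht : t ∈ T.filter (fun t => yy t = y) := ht
      have ht' : t' ∈ T.filter (fun t => yy t = y) := ht'
      have e1 : t.2.2.1 = t'.2.2.1 := (hS t ht).trans (hS t' ht').symm
      have e2 : t.2.1 = t'.2.1 := (hm t ht).trans (hm t' ht').symm
      have e3 : t.2.2.2 = t'.2.2.2 := hWW
      rw [mem_filter] at ht ht'
      have hxe : ∀ t ∈ T, t.1 = ((yy t) \ t.2.2.1) ∪ t.2.2.2 := by
        intro t ht
        obtain ⟨h1, h2, h3, h4, h5, h6, h7, h8⟩ := hmemT t ht
        have hd := hdisj _ _ h4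
        ext v
        simp only [hyy, mem_union, mem_sdiff]
        constructor
        · intro hv
          have := disjoint_left.1 hd hv
          tauto
        · rintro (⟨⟨h | h, _⟩, h'⟩ | h)
          · exact h
          · exact absurd h h'
          · exact h6 h
      have e4 : t.1 = t'.1 := by
        rw [hxe t ht.1, hxe t' ht'.1, ht.2, ht'.2, e1, e3]
      obtain ⟨x, m, S, W⟩ := t
      obtain ⟨x', m', S', W'⟩ := t'
      simp only at e1 e2 e3 e4
      subst e1 e2 e3 e4
      rfl
  refine le_trans ?_ hup
  rw [hT, sum_sigma, mul_sum]
  refine sum_le_sum fun x hx => ?_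
  rw [sum_sigma, mul_sum]
  refine sum_le_sum fun m hm => ?_
  rw [sum_sigma]
  have hx' := mem_filter.1 hx
  have hxc := (mem_powersetCard.1 hx'.1).2
  rw [mem_range] at hm
  have hin : ∀ S ∈ (fibS r k l a β φ x).powersetCard m, (1 - ε) * ((q.choose m : ℝ) / ((n - q).choose m : ℝ)) ≤
      ∑ W ∈ Wg x m S, (1 / ((n - q).choose m : ℝ)) := by
    intro S hS
    rw [mem_powersetCard] at hS
    rw [sum_const, nsmul_eq_mul, mul_one_div, mul_div_assoc']
    gcongr
    exact good_W r k l m m0 q β ε φ hφ hl hβ x hxc S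
      (fun s hs => (mem_filter.1 (mem_filter.1 (hS.1 hs)).2.2.1).2.1) hS.2 (by omega) hq hε (by omega)
  refine le_trans (le_of_eq ?_) (sum_le_sum hin)
  rw [sum_const, card_powersetCard, nsmul_eq_mul]
  ring

lemma taylor (δ : ℝ) (hδ : 0 < δ) : ∃ m0 : ℕ, 2 ≤ m0 ∧ ∀ u : ℝ, 0 ≤ u →
    u ≤ ((Real.exp 1)⁻¹ + δ) * ∑ m ∈ range (m0 + 1), u ^ m / (m.factorial : ℝ) := by
  have hU := tendstoUniformlyOn_tsum_nat (f := fun m (u:ℝ) => u ^ m / (m.factorial : ℝ))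
    (u := fun m => (6:ℝ) ^ m / (m.factorial : ℝ)) (s := Set.Icc (0:ℝ) 6) (Real.summable_pow_div_factorial 6)
    (by
      intro m u hu
      rw [Real.norm_of_nonneg (by have := hu.1; positivity)]
      have := hu.1
      have := hu.2
      gcongr)
  rw [Metric.tendstoUniformlyOn_iff] at hU
  obtain ⟨N, hN⟩ := Filter.eventually_atTop.1 (hU δ hδ)
  refine ⟨max N 2, le_max_right _ _, ?_⟩
  set m0 := max N 2 with hm0
  intro u hu
  have he1 : 1 ≤ Real.exp 1 := by have := Real.add_one_le_exp (1:ℝ); linarith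
  have he3 : Real.exp 1 < 3 := Real.exp_one_lt_d9.trans (by norm_num)
  have heinv : 0 < (Real.exp 1)⁻¹ := by positivity
  set P := ∑ m ∈ range (m0 + 1), u ^ m / (m.factorial : ℝ) with hP
  have hP1 : 1 ≤ P := by
    have := single_le_sum (f := fun m => u ^ m / (m.factorial : ℝ)) (s := range (m0 + 1)) (fun m _ => by positivity)
      (mem_range.2 (show 0 < m0 + 1 by omega))
    simpa using this
  rcases le_or_gt u 6 with h6 | h6
  · have h1 := hN (m0 + 1) (by omega) u ⟨hu, h6⟩
    have h2 : ∑' m : ℕ, u ^ m / (m.factorial : ℝ) = Real.exp u := by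
      rw [Real.exp_eq_exp_ℝ, NormedSpace.exp_eq_tsum_div]
    rw [h2, Real.dist_eq] at h1
    have h3 : Real.exp u ≤ P + δ := by have := (abs_lt.1 h1).2; linarith
    have h4 : u * Real.exp 1 ≤ Real.exp u := by
      have := Real.add_one_le_exp (u - 1)
      have e : Real.exp u = Real.exp (u - 1) * Real.exp 1 := by rw [← Real.exp_add]; ring_nf
      rw [e]; gcongr; linarith
    have h5 : u ≤ (Real.exp 1)⁻¹ * (P + δ) := by
      rw [← div_eq_inv_mul, le_div_iff₀ (by positivity)]; linarith
    have h7 : (Real.exp 1)⁻¹ ≤ 1 := inv_le_one_of_one_le₀ he1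
    nlinarith
  · have h1 : u ^ 2 / 2 ≤ P := by
      have := single_le_sum (f := fun m => u ^ m / (m.factorial : ℝ)) (s := range (m0 + 1)) (fun m _ => by positivity)
        (mem_range.2 (show 2 < m0 + 1 by omega))
      simpa using this
    have h2 : u ≤ (Real.exp 1)⁻¹ * P := by
      rw [← div_eq_inv_mul, le_div_iff₀ (by positivity)]; nlinarith
    nlinarith

lemma analytic (δ : ℝ) (hδ : 0 < δ) : ∃ m0 : ℕ, 2 ≤ m0 ∧ ∃ K : ℕ, ∀ k : ℕ, K ≤ k → ∃ N : ℕ, ∀ p : ℕ, N ≤ p → ∀ S : ℕ, S ≤ p →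
    (S * k : ℝ) / p ≤ ((Real.exp 1)⁻¹ + δ) * ∑ m ∈ range (m0 + 1), (S.choose m : ℝ) * (((k - 1).choose m : ℝ) / (p.choose m : ℝ)) := by
  set d := min (δ / 4) 1 with hd
  have hd0 : 0 < d := lt_min (by positivity) one_pos
  have hd1 : d ≤ 1 := min_le_right _ _
  have hd4 : d ≤ δ / 4 := min_le_left _ _
  obtain ⟨m0, hm2, hT⟩ := taylor d hd0
  refine ⟨m0, hm2, max (m0 + 1) ⌈m0 * (1 + d) / d⌉₊, fun k hk => ⟨⌈m0 * k / d⌉₊ + m0 + 1, fun p hp S hSp => ?_⟩⟩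
  have hk1 : m0 + 1 ≤ k := (le_max_left _ _).trans hk
  have hk2 : m0 * (1 + d) ≤ d * k := by
    have := Nat.ceil_le.1 ((le_max_right _ _).trans hk)
    rw [div_le_iff₀ hd0] at this; linarith
  have hp0 : (0:ℝ) < p := by exact_mod_cast (show 0 < p by omega)
  have hp1 : (m0 * k : ℝ) ≤ d * p := by
    have : ⌈m0 * k / d⌉₊ ≤ p := by omega
    have := Nat.ceil_le.1 this
    rw [div_le_iff₀ hd0] at this; linarith
  have hmp : m0 ≤ p := by omega
  have heinv : 0 < (Real.exp 1)⁻¹ := by positivity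
  have he1 : (Real.exp 1)⁻¹ ≤ 1 := inv_le_one_of_one_le₀ (by have := Real.add_one_le_exp (1:ℝ); linarith)
  set P := ∑ m ∈ range (m0 + 1), (S.choose m : ℝ) * (((k - 1).choose m : ℝ) / (p.choose m : ℝ)) with hP
  have hP1 : 1 ≤ P := by
    have := single_le_sum (f := fun m => (S.choose m : ℝ) * (((k - 1).choose m : ℝ) / (p.choose m : ℝ)))
      (s := range (m0 + 1)) (fun m _ => by positivity) (mem_range.2 (show 0 < m0 + 1 by omega))
    simpa using this
  have hkR : (m0:ℝ) + 1 ≤ k := by exact_mod_cast hk1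
  rcases lt_or_ge S m0 with hS | hS
  · have : (S * k : ℝ) / p ≤ d := by
      rw [div_le_iff₀ hp0]
      have : (S:ℝ) ≤ m0 := by exact_mod_cast hS.le
      nlinarith
    nlinarith
  · have hSR : (m0:ℝ) ≤ S := by exact_mod_cast hS
    set u : ℝ := (S - m0) * (k - m0) / p with hu
    have hu0 : 0 ≤ u := by
      apply div_nonneg (mul_nonneg (by linarith) (by linarith)) hp0.le
    have hterm : ∀ m ∈ range (m0 + 1), u ^ m / (m.factorial : ℝ) ≤ (S.choose m : ℝ) * (((k - 1).choose m : ℝ) / (p.choose m : ℝ)) := by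
      intro m hm
      rw [mem_range] at hm
      have hf : (0:ℝ) < m.factorial := by exact_mod_cast m.factorial_pos
      have a1 : (S - m0 : ℝ) ^ m ≤ m.factorial * S.choose m := by
        have h := Nat.pow_sub_le_descFactorial S m
        rw [Nat.descFactorial_eq_factorial_mul_choose] at h
        have h' : ((S + 1 - m : ℕ) : ℝ) ^ m ≤ m.factorial * S.choose m := by exact_mod_cast h
        refine le_trans ?_ h'
        refine pow_le_pow_left₀ (by linarith) ?_ m
        · have : (S - m0 : ℕ) ≤ S + 1 - m := by omega
          rw [← Nat.cast_sub hS]; exact_mod_cast this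
      have a2 : (k - m0 : ℝ) ^ m ≤ m.factorial * (k - 1).choose m := by
        have h := Nat.pow_sub_le_descFactorial (k - 1) m
        rw [Nat.descFactorial_eq_factorial_mul_choose] at h
        have h' : ((k - 1 + 1 - m : ℕ) : ℝ) ^ m ≤ m.factorial * (k - 1).choose m := by exact_mod_cast h
        refine le_trans ?_ h'
        refine pow_le_pow_left₀ (by linarith) ?_ m
        · have : (k - m0 : ℕ) ≤ k - 1 + 1 - m := by omega
          rw [← Nat.cast_sub (by omega : m0 ≤ k)]; exact_mod_cast this
      have a3 : (m.factorial : ℝ) * p.choose m ≤ (p:ℝ) ^ m := by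
        have h := Nat.descFactorial_le_pow p m
        rw [Nat.descFactorial_eq_factorial_mul_choose] at h
        exact_mod_cast h
      have hcp : (0:ℝ) < p.choose m := by exact_mod_cast Nat.choose_pos (by omega)
      rw [hu, div_pow, mul_pow, div_div, mul_div_assoc', div_le_div_iff₀ (by positivity) hcp]
      have b1 : 0 ≤ (S - m0 : ℝ) ^ m := pow_nonneg (by linarith) _
      have b2 : 0 ≤ (k - m0 : ℝ) ^ m := pow_nonneg (by linarith) _
      refine le_of_mul_le_mul_left ?_ hf
      calc (m.factorial : ℝ) * ((S - m0 : ℝ) ^ m * (k - m0 : ℝ) ^ m * p.choose m)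
          = ((S - m0 : ℝ) ^ m * (k - m0 : ℝ) ^ m) * (m.factorial * p.choose m) := by ring
        _ ≤ ((m.factorial * S.choose m) * (m.factorial * (k - 1).choose m)) * (p:ℝ) ^ m := by gcongr
        _ = _ := by ring
    have hPu := (hT u hu0).trans (mul_le_mul_of_nonneg_left (sum_le_sum hterm) (by positivity))
    rw [← hP] at hPu
    have ht : (S * k : ℝ) / p ≤ (1 + d) * u + d := by
      rw [hu, mul_div_assoc', div_add' _ _ _ hp0.ne', div_le_div_iff_of_pos_right hp0]
      have : (S:ℝ) * k = (S - m0) * k + m0 * k := by ring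
      have h2 : (k:ℝ) ≤ (1 + d) * (k - m0) := by nlinarith
      have h3 : (S - m0 : ℝ) * k ≤ (S - m0) * ((1 + d) * (k - m0)) := by
        apply mul_le_mul_of_nonneg_left h2; linarith
      linarith
    calc (S * k : ℝ) / p ≤ (1 + d) * u + d := ht
      _ ≤ (1 + d) * (((Real.exp 1)⁻¹ + d) * P) + d * P := by
          gcongr
          nlinarith
      _ = ((Real.exp 1)⁻¹ + (d * (Real.exp 1)⁻¹ + d + d * d + d)) * P := by ring
      _ ≤ _ := by
          gcongr
          nlinarith

lemma gap_count (r : ℕ) (δ : ℝ) (hδ : 0 < δ) : ∃ m0 : ℕ, 2 ≤ m0 ∧ ∀ β0 : ℝ, 0 < β0 → ∃ K : ℕ, ∀ k : ℕ, K ≤ k →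
    ∃ N : ℕ, ∀ n : ℕ, N ≤ n → ∀ (φ : Finset (Fin n) → ℤ), (∀ W, 0 ≤ φ W) → ∀ (l : ℕ) (a β : ℝ), 0 < l → β0 ≤ β → 0 ≤ a →
    m0 * a ≤ β / 4 → ((gapA r k l a β φ).card : ℝ) ≤ ((Real.exp 1)⁻¹ + δ) * n.choose k := by
  obtain ⟨m0, hm0, K0, hA⟩ := analytic (δ / 2) (by positivity)
  refine ⟨m0, hm0, fun β0 hβ0 => ?_⟩
  set e := δ / (4 * (1 + δ)) with he
  have he0 : 0 < e := by positivity
  have he1 : e < 1 := by rw [he, div_lt_one (by positivity)]; linarith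
  have hinv0 : 0 < (Real.exp 1)⁻¹ := by positivity
  have hinv : (Real.exp 1)⁻¹ ≤ 1 := inv_le_one_of_one_le₀ (by have := Real.add_one_le_exp (1:ℝ); linarith)
  refine ⟨max (max K0 2) (⌈4 * r * (m0:ℝ) ^ 2 / (e * β0)⌉₊ + 1), fun k hk => ?_⟩
  have hk0 : K0 ≤ k := (le_max_left _ _).trans ((le_max_left _ _).trans hk)
  have hk2 : 2 ≤ k := (le_max_right _ _).trans ((le_max_left _ _).trans hk)
  have hk3 : 4 * r * (m0:ℝ) ^ 2 ≤ e * β0 * (k - 1 : ℕ) := by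
    have h1 : ⌈4 * r * (m0:ℝ) ^ 2 / (e * β0)⌉₊ + 1 ≤ k := (le_max_right _ _).trans hk
    have h2 : ⌈4 * r * (m0:ℝ) ^ 2 / (e * β0)⌉₊ ≤ k - 1 := by omega
    have := Nat.ceil_le.1 h2
    rw [div_le_iff₀ (by positivity)] at this
    linarith
  obtain ⟨N, hN⟩ := hA k hk0
  refine ⟨N + k, fun n hn φ hφ l a β hl hβ ha0 ha => ?_⟩
  have hβp : 0 < β := lt_of_lt_of_le hβ0 hβ
  set p := n - (k - 1) with hp
  have hp0 : (0:ℝ) < p := by exact_mod_cast (show 0 < p by omega)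
  have hkp : (0:ℝ) < k := by exact_mod_cast (show 0 < k by omega)
  have hpack := packing r k l m0 a β e φ hφ hl hβp ha0 ha he0.le hk2 (hk3.trans (by gcongr))
  have hg := gapA_card r k l a β φ
  set X' := ((univ : Finset (Fin n)).powersetCard (k - 1)).filter (fun x => (fibS r k l a β φ x).Nonempty) with hX'
  have hg' : ((gapA r k l a β φ).card : ℝ) ≤ ∑ x ∈ X', ((fibS r k l a β φ x).card : ℝ) := by exact_mod_cast hg
  have hx : ∀ x ∈ X', (((fibS r k l a β φ x).card : ℝ) * k) / p ≤ ((Real.exp 1)⁻¹ + δ / 2) * ∑ m ∈ range (m0 + 1),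
      ((fibS r k l a β φ x).card.choose m : ℝ) * (((k - 1).choose m : ℝ) / (p.choose m : ℝ)) := by
    intro x hx
    apply hN p (by omega)
    have hxc := (mem_powersetCard.1 (mem_filter.1 hx).1).2
    have : (univ \ x).card = p := by
      rw [card_sdiff_of_subset (subset_univ _), card_univ, Fintype.card_fin, hxc]
    rw [← this]
    apply card_le_card
    intro s hs
    exact mem_sdiff.2 ⟨mem_univ _, (mem_filter.1 hs).2.1⟩
  have hs := sum_le_sum hx
  rw [← mul_sum, ← sum_div, ← sum_mul] at hs
  set T1 := ∑ x ∈ X', ((fibS r k l a β φ x).card : ℝ) with hS1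
  set T2 := ∑ x ∈ X', ∑ m ∈ range (m0 + 1),
      ((fibS r k l a β φ x).card.choose m : ℝ) * (((k - 1).choose m : ℝ) / (p.choose m : ℝ)) with hS2
  rw [div_le_iff₀ hp0] at hs
  have hch : (n.choose k : ℝ) * k = n.choose (k - 1) * p := by
    have := Nat.choose_succ_right_eq n (k - 1)
    rw [Nat.sub_add_cancel (by omega)] at this
    exact_mod_cast this
  have h1 : (1 - e) * (T1 * k) ≤ ((Real.exp 1)⁻¹ + δ / 2) * (n.choose k * k) := by
    calc (1 - e) * (T1 * k) ≤ (1 - e) * (((Real.exp 1)⁻¹ + δ / 2) * T2 * p) := by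
          apply mul_le_mul_of_nonneg_left hs; linarith
      _ = ((Real.exp 1)⁻¹ + δ / 2) * p * ((1 - e) * T2) := by ring
      _ ≤ ((Real.exp 1)⁻¹ + δ / 2) * p * n.choose (k - 1) := by gcongr
      _ = _ := by rw [hch]; ring
  have h2 : (1 - e) * T1 ≤ ((Real.exp 1)⁻¹ + δ / 2) * n.choose k := by
    refine le_of_mul_le_mul_right ?_ hkp; linarith
  have h3 : (Real.exp 1)⁻¹ + δ / 2 ≤ (1 - e) * ((Real.exp 1)⁻¹ + δ) := by
    have : e * ((Real.exp 1)⁻¹ + δ) ≤ δ / 4 := by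
      calc e * ((Real.exp 1)⁻¹ + δ) ≤ e * (1 + δ) := by gcongr
        _ = δ / 4 := by rw [he]; field_simp
    nlinarith
  refine hg'.trans ?_
  refine le_of_mul_le_mul_left ?_ (show 0 < 1 - e by linarith)
  calc (1 - e) * T1 ≤ _ := h2
    _ ≤ ((1 - e) * ((Real.exp 1)⁻¹ + δ)) * n.choose k := by gcongr
    _ = _ := by ring

lemma cnt_of_PrE {n k : ℕ} (φ : Finset (Fin n) → ℤ) (Q : Finset (Fin n) → (Finset (Fin n) → ℤ) → Prop) (ε : ℝ)
    (heq : ∀ U τ ψ, Q U (act τ ψ) ↔ Q (U.map τ.toEmbedding) ψ)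
    (h : ∀ U : Finset (Fin n), U.card = k → PrE φ (Q U) ≤ ε) :
    (cnt ((univ : Finset (Fin n)).powersetCard k) (fun U => Q U φ) : ℝ) ≤ ε * n.choose k := by
  set I := (univ : Finset (Fin n)).powersetCard k with hI
  have h1 := PrE_sum φ I Q
  have h2 : ∀ σ : Equiv.Perm (Fin n), cnt I (fun U => Q U (act σ φ)) = cnt I (fun U => Q U φ) := by
    intro σ
    simp only [heq]
    rw [cnt_eq, cnt_eq]
    apply card_bij (fun U _ => U.map σ.toEmbedding)
    · intro U hU
      rw [mem_filter] at hU ⊢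
      refine ⟨?_, hU.2⟩
      rw [hI, mem_powersetCard] at hU ⊢
      exact ⟨subset_univ _, by rw [card_map]; exact hU.1.2⟩
    · intro U _ V _ h
      exact map_injective _ h
    · intro V hV
      rw [mem_filter] at hV
      have e : (V.map σ.symm.toEmbedding).map σ.toEmbedding = V := by
        rw [map_map]; ext x; simp
      refine ⟨V.map σ.symm.toEmbedding, ?_, e⟩
      rw [mem_filter, e]
      refine ⟨?_, hV.2⟩
      rw [hI, mem_powersetCard] at hV ⊢
      exact ⟨subset_univ _, by rw [card_map]; exact hV.1.2⟩
  have h3 : ∑ U ∈ I, PrE φ (Q U) = cnt I (fun U => Q U φ) := by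
    rw [h1, sum_congr rfl fun σ _ => by rw [h2 σ], sum_const, card_univ, nsmul_eq_mul, mul_comm]
    exact mul_div_cancel_right₀ _ (by exact_mod_cast Fintype.card_ne_zero)
  rw [← h3]
  have h4 : ∑ U ∈ I, PrE φ (Q U) ≤ ∑ U ∈ I, ε := sum_le_sum fun U hU => h U (mem_powersetCard.1 hU).2
  rw [sum_const, nsmul_eq_mul, hI, card_powersetCard, card_univ, Fintype.card_fin] at h4
  linarith

lemma cnt_or {ι : Type*} (I : Finset ι) (Q Q1 Q2 : ι → Prop) (h : ∀ i ∈ I, Q i → Q1 i ∨ Q2 i) :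
    cnt I Q ≤ cnt I Q1 + cnt I Q2 := by
  unfold cnt
  refine le_trans (card_le_card ?_) (card_union_le _ _)
  intro i hi
  rw [mem_filter] at hi
  rw [mem_union, mem_filter, mem_filter]
  rcases h i hi.1 hi.2 with h' | h'
  · exact Or.inl ⟨hi.1, h'⟩
  · exact Or.inr ⟨hi.1, h'⟩

lemma heavy_eq {n : ℕ} (r : ℕ) (a : ℝ) (l : ℕ) (U : Finset (Fin n)) (τ : Equiv.Perm (Fin n)) (ψ : Finset (Fin n) → ℤ) :
    cnt U (fun v => a * l ≤ ctr r (act τ ψ) v U) =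
      cnt (U.map τ.toEmbedding) (fun v => a * l ≤ ctr r ψ v (U.map τ.toEmbedding)) := by
  simp only [ctr_act]
  rw [cnt_eq, cnt_eq, filter_map, card_map]
  rfl

lemma cnt_le_of_rel {ι κ : Type*} (I : Finset ι) (J : Finset κ) (Q : ι → Prop) (Q' : κ → Prop) (R : ι → κ → Prop)
    (h : ∀ i ∈ I, Q i → ∃ v ∈ J, Q' v ∧ R i v)
    (hR : ∀ i ∈ I, ∀ j ∈ I, ∀ v, R i v → R j v → i = j) : cnt I Q ≤ cnt J Q' := by
  unfold cnt
  refine card_le_card_of_forall_subsingleton R ?_ ?_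
  · intro i hi
    rw [mem_filter] at hi
    obtain ⟨v, hv, hq, hr⟩ := h i hi.1 hi.2
    exact ⟨v, mem_filter.2 ⟨hv, hq⟩, hr⟩
  · intro v _ i hi j hj
    exact hR i (mem_filter.1 hi.1).1 j (mem_filter.1 hj.1).1 v hi.2 hj.2

/-- one of many scales is rarely hit -/
lemma gap_scale {n : ℕ} (r k l M L : ℕ) (al : ℕ → ℝ) (hal : ∀ i j, i ≤ j → al j ≤ al i) (φ : Finset (Fin n) → ℤ)
    (ε : ℝ) (hL : (M:ℝ) ≤ ε * L) (hL0 : 0 < L) :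
    ∃ j < L, (cnt ((univ : Finset (Fin n)).powersetCard k) (fun U => cnt U (fun v => al L * l ≤ ctr r φ v U) < M ∧
      ∃ v ∈ U, al (j + 1) * l ≤ ctr r φ v U ∧ (ctr r φ v U : ℝ) < al j * l) : ℝ) ≤ ε * n.choose k := by
  by_contra hcon
  push Not at hcon
  set I := (univ : Finset (Fin n)).powersetCard k with hI
  have hIc : I.card = n.choose k := by rw [hI, card_powersetCard, card_univ, Fintype.card_fin]
  set Q : ℕ → Finset (Fin n) → Prop := fun j U => cnt U (fun v => al L * l ≤ ctr r φ v U) < M ∧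
      ∃ v ∈ U, al (j + 1) * l ≤ ctr r φ v U ∧ (ctr r φ v U : ℝ) < al j * l with hQ
  have hbound : ∀ U ∈ I, cnt (range L) (fun j => Q j U) ≤ M := by
    intro U _
    by_cases hM : cnt U (fun v => al L * l ≤ ctr r φ v U) < M
    swap
    · rw [cnt_false _ _ fun j _ h => hM h.1]; exact Nat.zero_le _
    refine le_trans ?_ hM.le
    refine cnt_le_of_rel _ _ _ _ (fun j v => al (j + 1) * l ≤ ctr r φ v U ∧ (ctr r φ v U : ℝ) < al j * l) ?_ ?_
    · intro j hj hq
      obtain ⟨_, v, hv, h1, h2⟩ := hq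
      refine ⟨v, hv, le_trans ?_ h1, h1, h2⟩
      exact mul_le_mul_of_nonneg_right (hal _ _ (mem_range.1 hj)) (Nat.cast_nonneg l)
    · have key : ∀ i j v, i < j → al (i + 1) * l ≤ ctr r φ v U → (ctr r φ v U : ℝ) < al j * l → False := by
        intro i j v hij h1 h2
        have := mul_le_mul_of_nonneg_right (hal (i + 1) j hij) (Nat.cast_nonneg (α := ℝ) l)
        linarith
      intro i _ j _ v hi hj
      rcases lt_trichotomy i j with h | h | h
      · exact (key i j v h hi.1 hj.2).elim
      · exact h
      · exact (key j i v h hj.1 hi.2).elim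
  have hdouble : ∑ j ∈ range L, cnt I (Q j) ≤ I.card * M := by
    simp only [cnt_eq_sum]
    rw [sum_comm]
    simp only [← cnt_eq_sum]
    exact (sum_le_sum hbound).trans (by rw [sum_const, smul_eq_mul])
  have hdouble' : ∑ j ∈ range L, (cnt I (Q j) : ℝ) ≤ I.card * M := by exact_mod_cast hdouble
  have hlow : ∑ j ∈ range L, ε * (n.choose k : ℝ) < ∑ j ∈ range L, (cnt I (Q j) : ℝ) :=
    sum_lt_sum_of_nonempty ⟨0, mem_range.2 hL0⟩ fun j hj => hcon j (mem_range.1 hj)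
  rw [sum_const, card_range, nsmul_eq_mul] at hlow
  rw [hIc] at hdouble'
  have : (n.choose k : ℝ) * M ≤ n.choose k * (ε * L) := by gcongr
  linarith

lemma cnt_main (r : ℕ) (hr : 0 < r) (ε : ℝ) (hε : 0 < ε) : ∃ K : ℕ, ∀ k : ℕ, K ≤ k → ∃ N : ℕ, ∀ n : ℕ, N ≤ n →
    ∀ φ : Finset (Fin n) → ℤ, (∀ W, φ W = 0 ∨ φ W = 1) → ∀ l : ℕ, 0 < l → 2 * l ≤ k.choose r →
    (cnt ((univ : Finset (Fin n)).powersetCard k) (fun U => wF r φ U = l) : ℝ) ≤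
      ((Real.exp 1)⁻¹ + ε) * n.choose k := by
  have hε4 : 0 < ε / 4 := by positivity
  obtain ⟨m0, hm0, hG⟩ := gap_count r (ε / 4) hε4
  obtain ⟨β0, hβ0, K1, hH⟩ := heavy_exists r hr (ε / 4) hε4
  obtain ⟨M, hF⟩ := heavy_few r (ε / 4) hε4
  obtain ⟨L, hL0, hL⟩ : ∃ L : ℕ, 0 < L ∧ (M:ℝ) ≤ ε / 4 * L := by
    refine ⟨⌈(M:ℝ) / (ε / 4)⌉₊ + 1, Nat.succ_pos _, ?_⟩
    have := Nat.le_ceil ((M:ℝ) / (ε / 4))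
    rw [div_le_iff₀ hε4] at this
    push_cast
    nlinarith
  have hm0' : (2:ℝ) ≤ m0 := by exact_mod_cast hm0
  set q : ℝ := 1 / (4 * m0) with hq
  have hq0 : 0 < q := by positivity
  have hq1 : q ≤ 1 := by rw [hq, div_le_one (by positivity)]; linarith
  obtain ⟨al, hal⟩ : ∃ al : ℕ → ℝ, ∀ j, al j = β0 * q ^ j := ⟨_, fun _ => rfl⟩
  have halp : ∀ j, 0 < al j := fun j => by rw [hal]; positivity
  have hanti : ∀ i j, i ≤ j → al j ≤ al i := fun i j h => by
    rw [hal, hal]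
    exact mul_le_mul_of_nonneg_left (pow_le_pow_of_le_one hq0.le hq1 h) hβ0.le
  obtain ⟨K2, hF⟩ := hF (al L) (halp L)
  obtain ⟨K3, hG⟩ := hG (al L) (halp L)
  refine ⟨max K1 (max K2 K3), fun k hk => ?_⟩
  have hk1 : K1 ≤ k := (le_max_left _ _).trans hk
  have hk2 : K2 ≤ k := (le_max_left _ _).trans ((le_max_right _ _).trans hk)
  have hk3 : K3 ≤ k := (le_max_right _ _).trans ((le_max_right _ _).trans hk)
  obtain ⟨N, hG⟩ := hG k hk3
  refine ⟨max N (4 * k), fun n hn φ hφ l hl hlk => ?_⟩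
  have hnN : N ≤ n := (le_max_left _ _).trans hn
  have hnk : 4 * k ≤ n := (le_max_right _ _).trans hn
  set I := (univ : Finset (Fin n)).powersetCard k with hI
  have b1 := cnt_of_PrE (k := k) φ (fun U ψ => wF r ψ U = l ∧ ∀ v ∈ U, (ctr r ψ v U : ℝ) < β0 * l) (ε / 4)
    (by
      intro U τ ψ
      simp only [wF_act, ctr_act, forall_mem_map]
      rfl)
    (fun U hU => hH k hk1 n hnk φ hφ l U hl hlk hU)
  have b2 := cnt_of_PrE (k := k) φ (fun U ψ => wF r ψ U = l ∧ M ≤ cnt U (fun v => al L * l ≤ ctr r ψ v U)) (ε / 4)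
    (by
      intro U τ ψ
      simp only [wF_act, heavy_eq])
    (fun U hU => hF k hk2 n hnk φ hφ l U hl hU)
  obtain ⟨j, hj, b3⟩ := gap_scale r k l M L al hanti φ (ε / 4) hL hL0
  have b4 := hG n hnN φ (fun W => by rcases hφ W with h | h <;> rw [h] <;> norm_num) l (al (j + 1)) (al j) hl
    (hanti _ _ hj.le) (halp _).le (by
      rw [hal, hal, pow_succ, hq]
      apply le_of_eq
      field_simp)
  have hb4 : (gapA r k l (al (j + 1)) (al j) φ).card = cnt I (fun U => wF r φ U = l ∧ (∃ v ∈ U, al j * l ≤ ctr r φ v U) ∧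
      ∀ v ∈ U, (ctr r φ v U : ℝ) < al (j + 1) * l ∨ al j * l ≤ ctr r φ v U) := by
    rw [cnt_eq]; rfl
  rw [hb4] at b4
  rw [← hI] at b1 b2 b3
  have hc1 := cnt_or I (fun U => wF r φ U = l) (fun U => wF r φ U = l ∧ ∀ v ∈ U, (ctr r φ v U : ℝ) < β0 * l)
    (fun U => wF r φ U = l ∧ ¬ ∀ v ∈ U, (ctr r φ v U : ℝ) < β0 * l) (fun U _ h => by tauto)
  have hc2 := cnt_or I (fun U => wF r φ U = l ∧ ¬ ∀ v ∈ U, (ctr r φ v U : ℝ) < β0 * l)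
    (fun U => wF r φ U = l ∧ M ≤ cnt U (fun v => al L * l ≤ ctr r φ v U))
    (fun U => (wF r φ U = l ∧ ¬ ∀ v ∈ U, (ctr r φ v U : ℝ) < β0 * l) ∧ cnt U (fun v => al L * l ≤ ctr r φ v U) < M)
    (fun U _ h => by
      rcases le_or_gt M (cnt U (fun v => al L * l ≤ ctr r φ v U)) with h' | h'
      · exact Or.inl ⟨h.1, h'⟩
      · exact Or.inr ⟨h, h'⟩)
  have hc3 := cnt_or I
    (fun U => (wF r φ U = l ∧ ¬ ∀ v ∈ U, (ctr r φ v U : ℝ) < β0 * l) ∧ cnt U (fun v => al L * l ≤ ctr r φ v U) < M)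
    (fun U => cnt U (fun v => al L * l ≤ ctr r φ v U) < M ∧
      ∃ v ∈ U, al (j + 1) * l ≤ ctr r φ v U ∧ (ctr r φ v U : ℝ) < al j * l)
    (fun U => wF r φ U = l ∧ (∃ v ∈ U, al j * l ≤ ctr r φ v U) ∧
      ∀ v ∈ U, (ctr r φ v U : ℝ) < al (j + 1) * l ∨ al j * l ≤ ctr r φ v U)
    (fun U _ h => by
      obtain ⟨⟨h1, h2⟩, h3⟩ := h
      by_cases h4 : ∃ v ∈ U, al (j + 1) * l ≤ ctr r φ v U ∧ (ctr r φ v U : ℝ) < al j * l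
      · exact Or.inl ⟨h3, h4⟩
      · refine Or.inr ⟨h1, ?_, ?_⟩
        · push Not at h2
          obtain ⟨v, hv, h⟩ := h2
          refine ⟨v, hv, le_trans ?_ h⟩
          apply mul_le_mul_of_nonneg_right _ (Nat.cast_nonneg l)
          have := hanti 0 j (Nat.zero_le j)
          rw [hal 0] at this
          simpa using this
        · intro v hv
          by_contra hc
          push Not at hc
          exact h4 ⟨v, hv, hc⟩)
  have hc : cnt I (fun U => wF r φ U = l) ≤ _ :=
    hc1.trans (Nat.add_le_add_left (hc2.trans (Nat.add_le_add_left hc3 _)) _)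
  have hc' := (Nat.cast_le (α := ℝ)).2 hc
  push_cast at hc'
  refine hc'.trans ?_
  refine (add_le_add b1 (add_le_add b2 (add_le_add b3 b4))).trans (le_of_eq ?_)
  ring

lemma wF_ind {n : ℕ} (r : ℕ) (E : Finset (Finset (Fin n))) (hE : ∀ e ∈ E, e.card = r) (U : Finset (Fin n)) :
    wF r (fun W => if W ∈ E then 1 else 0) U = ((E.filter (fun e => e ⊆ U)).card : ℤ) := by
  unfold wF
  rw [sum_ite, sum_const_zero, add_zero, sum_const, nsmul_eq_mul, mul_one]
  congr 2
  ext W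
  simp only [mem_filter, mem_powersetCard]
  constructor
  · rintro ⟨⟨h1, _⟩, h2⟩
    exact ⟨h2, h1⟩
  · rintro ⟨h1, h2⟩
    exact ⟨⟨h2, hE W h1⟩, h1⟩

lemma wF_compl {n : ℕ} (r k : ℕ) (E : Finset (Finset (Fin n))) (U : Finset (Fin n)) (hU : U.card = k) :
    wF r (fun W => if W ∈ E then 0 else 1) U + wF r (fun W => if W ∈ E then 1 else 0) U = (k.choose r : ℤ) := by
  unfold wF
  rw [← sum_add_distrib, sum_congr rfl (g := fun _ => (1:ℤ)) fun W _ => by split_ifs <;> simp]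
  rw [sum_const, card_powersetCard, hU, nsmul_eq_mul, mul_one]

lemma Nmax_bound (r k ℓ n : ℕ) (c : ℝ) (h : ∀ E : Finset (Finset (Fin n)), (∀ e ∈ E, e.card = r) →
    (cnt ((univ : Finset (Fin n)).powersetCard k) (fun U => (E.filter (fun e => e ⊆ U)).card = ℓ) : ℝ) ≤ c) :
    (Nmax r k ℓ n : ℝ) ≤ c := by
  have hmem := Nat.sSup_mem (s := {c : ℕ | ∃ E : Finset (Finset (Fin n)), (∀ e ∈ E, e.card = r) ∧
    c = (((Finset.univ : Finset (Fin n)).powersetCard k).filter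
        (fun U => (E.filter (fun e => e ⊆ U)).card = ℓ)).card})
    ⟨_, ∅, by simp, rfl⟩
    ⟨((Finset.univ : Finset (Fin n)).powersetCard k).card, by
      rintro _ ⟨E, _, rfl⟩
      exact card_filter_le _ _⟩
  obtain ⟨E, hE, hc⟩ := hmem
  have h' := h E hE
  rw [cnt_eq] at h'
  unfold Nmax
  rw [hc]
  exact h'

theorem stmt_17 (r : ℕ) (hr : 0 < r) (ε : ℝ) (hε : 0 < ε) :
    ∃ K : ℕ, ∀ k : ℕ, K ≤ k → ∀ ℓ : ℕ, 0 < ℓ → ℓ < k.choose r →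
      ∀ L : ℝ, Filter.Tendsto (fun n : ℕ => (Nmax r k ℓ n : ℝ) / (n.choose k : ℝ)) Filter.atTop (nhds L) →
        L ≤ (Real.exp 1)⁻¹ + ε := by
  obtain ⟨K, hK⟩ := cnt_main r hr ε hε
  refine ⟨K, fun k hk ℓ hl hlk L hL => ?_⟩
  obtain ⟨N, hN⟩ := hK k hk
  refine le_of_tendsto hL ?_
  filter_upwards [Filter.eventually_ge_atTop (max N k)] with n hn
  have hnN : N ≤ n := (le_max_left _ _).trans hn
  have hnk : k ≤ n := (le_max_right _ _).trans hn
  rw [div_le_iff₀ (by exact_mod_cast Nat.choose_pos hnk)]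
  apply Nmax_bound
  intro E hE
  by_cases h2 : 2 * ℓ ≤ k.choose r
  · have := hN n hnN (fun W => if W ∈ E then 1 else 0) (fun W => by
      split_ifs
      · exact Or.inr rfl
      · exact Or.inl rfl) ℓ hl h2
    refine le_trans (Nat.cast_le.2 (cnt_mono _ _ _ ?_)) this
    intro U _ h
    rw [wF_ind r E hE, h]
  · have := hN n hnN (fun W => if W ∈ E then 0 else 1) (fun W => by
      split_ifs
      · exact Or.inl rfl
      · exact Or.inr rfl) (k.choose r - ℓ) (by omega) (by omega)
    refine le_trans (Nat.cast_le.2 (cnt_mono _ _ _ ?_)) this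
    intro U hU h
    have hc := wF_compl r k E U (mem_powersetCard.1 hU).2
    rw [wF_ind r E hE, h] at hc
    rw [Nat.cast_sub hlk.le]
    linarith
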